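/- Let $n \geq 1$ and for $r \leq n$ define $U_r^n$ to be the set of triples $(I,J,K)$ of cardinality-$r$ subsets of $\{1,\ldots,n\}$ such that $\sum_{i \in I} i + \sum_{j \in J} j = \sum_{k \in K} k + r(r+1)/2$; set $T_1^n = U_1^n$ and, inductively for $r > 1$, let $T_r^n$ be the set of $(I,J,K) \in U_r^n$ (writing $I = \{i_1 < \cdots < i_r\}$, etc.) such that for all $p < r$ and all $(F,G,H) \in T_p^r$ one has $\sum_{f \in F} i_f + \sum_{g \in G} j_g \leq \sum_{h \in H} k_h + p(p+1)/2$. Then (Horn's conjecture, proved by Klyachko, Knutson and Tao): a triple of nonincreasing real vectors $(\alpha, \beta, \gamma)$ in $\mathbb{R}^n$ arises as the eigenvalue vectors of $n \times n$ Hermitian matrices $X$, $Y$, and $Z = X + Y$ if and only if $\sum_{i=1}^n \gamma_i = \sum_{i=1}^n \alpha_i + \sum_{i=1}^n \beta_i$ and, for every $r < n$ and every $(I,J,K) \in T_r^n$, $\sum_{k \in K} \gamma_k \leq \sum_{i \in I} \alpha_i + \sum_{j \in J} \beta_j$. -/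

import Mathlib

open Matrix Polynomial

/-- `lam` is the vector of eigenvalues of `M` listed with multiplicity:
the characteristic polynomial of `M` is `∏ i (X - lam i)`. -/
def HasSpectrum {m : Type*} [Fintype m] [DecidableEq m] {N : ℕ}
    (M : Matrix m m ℂ) (lam : Fin N → ℝ) : Prop :=
  M.charpoly = ∏ i, (X - C (lam i : ℂ))

/-- Horn's set `U_r^n` of triples `(I, J, K)` of cardinality-`r` subsets of `{1, …, n}`
(encoded as subsets of `Fin n`, the element `i : Fin n` standing for the integer `i + 1`)
satisfying `∑_{i ∈ I} i + ∑_{j ∈ J} j = ∑_{k ∈ K} k + r(r+1)/2`. -/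
def HornU (n r : ℕ) : Set (Finset (Fin n) × Finset (Fin n) × Finset (Fin n)) :=
  {T | T.1.card = r ∧ T.2.1.card = r ∧ T.2.2.card = r ∧
    (∑ i ∈ T.1, ((i : ℕ) + 1)) + (∑ j ∈ T.2.1, ((j : ℕ) + 1)) =
      (∑ k ∈ T.2.2, ((k : ℕ) + 1)) + r * (r + 1) / 2}

/-- Horn's inductively defined set `T_r^n`: the triples `(I, J, K) ∈ U_r^n`, written
`I = {i_1 < ⋯ < i_r}` etc., such that for all `1 ≤ p < r` and all `(F, G, H) ∈ T_p^r`,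
`∑_{f ∈ F} i_f + ∑_{g ∈ G} j_g ≤ ∑_{h ∈ H} k_h + p(p+1)/2`. -/
def HornT (r n : ℕ) : Set (Finset (Fin n) × Finset (Fin n) × Finset (Fin n)) :=
  {T | T ∈ HornU n r ∧
    ∀ (hI : T.1.card = r) (hJ : T.2.1.card = r) (hK : T.2.2.card = r),
    ∀ p, 1 ≤ p → ∀ _hp : p < r, ∀ S ∈ HornT p r,
      (∑ f ∈ S.1, (((T.1.orderEmbOfFin hI) f : ℕ) + 1)) +
          (∑ g ∈ S.2.1, (((T.2.1.orderEmbOfFin hJ) g : ℕ) + 1)) ≤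
        (∑ h ∈ S.2.2, (((T.2.2.orderEmbOfFin hK) h : ℕ) + 1)) + p * (p + 1) / 2}
termination_by r



section AlgGeom
open MvPolynomial

theorem poly_image {ι κ : Type} [Fintype ι] [Fintype κ] (P : κ → MvPolynomial ι ℂ)
    (h : AlgebraicIndependent ℂ P) :
    ∃ a : MvPolynomial κ ℂ, a ≠ 0 ∧ ∀ y, MvPolynomial.eval y a ≠ 0 → ∃ x, ∀ k, MvPolynomial.eval x (P k) = y k := by
  classical
  set f : MvPolynomial κ ℂ →+* MvPolynomial ι ℂ := (aeval P : MvPolynomial κ ℂ →ₐ[ℂ] _).toRingHom with hf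
  have hinj : Function.Injective f := h
  have hfp : f.FinitePresentation := by
    apply RingHom.FinitePresentation.of_finiteType.mp
    apply RingHom.FiniteType.of_comp_finiteType (f := (MvPolynomial.C : ℂ →+* MvPolynomial κ ℂ))
    have : f.comp (MvPolynomial.C : ℂ →+* MvPolynomial κ ℂ) = algebraMap ℂ (MvPolynomial ι ℂ) := by
      ext x; simp [hf]
    rw [this]
    exact RingHom.finiteType_algebraMap.mpr inferInstance
  have hc := PrimeSpectrum.isConstructible_range_comap hfp
  obtain ⟨S, hS⟩ := PrimeSpectrum.exists_constructibleSetData_iff.mpr hc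
  have hbot : (⟨⊥, Ideal.isPrime_bot⟩ : PrimeSpectrum (MvPolynomial κ ℂ)) ∈ S.toSet := by
    rw [hS]
    refine ⟨⟨⊥, Ideal.isPrime_bot⟩, ?_⟩
    ext x
    simp only [PrimeSpectrum.comap_asIdeal, Ideal.mem_comap, Ideal.mem_bot]
    exact map_eq_zero_iff f hinj
  simp only [PrimeSpectrum.ConstructibleSetData.toSet, Set.mem_iUnion,
    PrimeSpectrum.BasicConstructibleSetData.toSet] at hbot
  obtain ⟨B, hB, h1, h2⟩ := hbot
  refine ⟨B.f, ?_, ?_⟩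
  · intro h0
    apply h2
    simp [PrimeSpectrum.mem_zeroLocus, h0]
  intro y hy
  have hg : ∀ i, B.g i = 0 := by
    intro i
    rw [PrimeSpectrum.mem_zeroLocus] at h1
    have := h1 ⟨i, rfl⟩
    simpa using this
  have hmem : (pointToPoint (k := ℂ) y : PrimeSpectrum (MvPolynomial κ ℂ)) ∈ S.toSet := by
    simp only [PrimeSpectrum.ConstructibleSetData.toSet, Set.mem_iUnion,
      PrimeSpectrum.BasicConstructibleSetData.toSet]
    refine ⟨B, hB, ?_, ?_⟩
    · rw [PrimeSpectrum.mem_zeroLocus]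
      rintro _ ⟨i, rfl⟩
      rw [hg i]
      exact Ideal.zero_mem _
    · rw [PrimeSpectrum.mem_zeroLocus]
      intro hh
      have : B.f ∈ vanishingIdeal ℂ {y} := hh (Set.mem_singleton _)
      rw [mem_vanishingIdeal_singleton_iff] at this
      exact hy this
  rw [hS] at hmem
  obtain ⟨q, hq⟩ := hmem
  obtain ⟨M, hM, hqM⟩ := Ideal.exists_le_maximal q.asIdeal q.2.ne_top
  obtain ⟨x, rfl⟩ := eq_vanishingIdeal_singleton_of_isMaximal ℂ hM
  refine ⟨x, fun k => ?_⟩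
  have h3 : (MvPolynomial.X k - MvPolynomial.C (y k) : MvPolynomial κ ℂ) ∈ (PrimeSpectrum.comap f q).asIdeal := by
    rw [hq]
    change _ ∈ vanishingIdeal ℂ {y}
    rw [mem_vanishingIdeal_singleton_iff]
    simp
  have h4 := hqM (show f (MvPolynomial.X k - MvPolynomial.C (y k)) ∈ q.asIdeal from h3)
  rw [mem_vanishingIdeal_singleton_iff] at h4
  simp [hf, sub_eq_zero] at h4
  simpa [MvPolynomial.aeval_eq_eval] using h4

theorem mvpoly_contDiff {ι : Type} [Fintype ι] (p : MvPolynomial ι ℂ) :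
    ContDiff ℂ ⊤ (fun x : ι → ℂ => MvPolynomial.eval x p) := by
  induction p using MvPolynomial.induction_on with
  | C a => simpa using contDiff_const
  | add p q hp hq => simpa using hp.add hq
  | mul_X p i hp =>
    simp only [map_mul, MvPolynomial.eval_X]
    exact hp.mul (contDiff_apply ℂ ℂ i)

theorem mvpoly_dense {ι : Type} [Fintype ι] (p : MvPolynomial ι ℂ) (hp : p ≠ 0) :
    IsOpen {x : ι → ℂ | MvPolynomial.eval x p ≠ 0} ∧ Dense {x : ι → ℂ | MvPolynomial.eval x p ≠ 0} := by
  have ho : IsOpen {x : ι → ℂ | MvPolynomial.eval x p ≠ 0} :=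
    isOpen_ne_fun (mvpoly_contDiff p).continuous continuous_const
  refine ⟨ho, ?_⟩
  have hc : {x : ι → ℂ | MvPolynomial.eval x p ≠ 0} = {x : ι → ℂ | MvPolynomial.eval x p = 0}ᶜ := by
    ext x; simp
  rw [hc, ← interior_eq_empty_iff_dense_compl, Set.eq_empty_iff_forall_notMem]
  intro x hx
  rw [mem_interior_iff_mem_nhds, Metric.mem_nhds_iff] at hx
  obtain ⟨ε, hε, hb⟩ := hx
  apply hp
  apply funext_set (fun i => Metric.ball (x i) ε)
  · intro i
    exact infinite_of_mem_nhds (x i) (Metric.ball_mem_nhds _ hε)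
  · intro y hy
    have : y ∈ Metric.ball x ε := by
      rw [ball_pi _ hε]; exact hy
    have := hb this
    simpa using this

theorem poly_submersion {ι κ : Type} [Fintype ι] [Fintype κ] (P : κ → MvPolynomial ι ℂ)
    (h : AlgebraicIndependent ℂ P) (b : MvPolynomial κ ℂ) (hb : b ≠ 0) :
    ∃ x, MvPolynomial.eval (fun k => MvPolynomial.eval x (P k)) b ≠ 0 ∧
      Function.Surjective (fderiv ℂ (fun (x : ι → ℂ) k => MvPolynomial.eval x (P k)) x) := by
  classical
  by_contra! hcon
  have halg : Algebra.IsAlgebraic (Algebra.adjoin ℂ (Set.range P ∪ Set.range (MvPolynomial.X : ι → MvPolynomial ι ℂ)))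
      (MvPolynomial ι ℂ) := by
    have : Algebra.adjoin ℂ (Set.range P ∪ Set.range (MvPolynomial.X : ι → MvPolynomial ι ℂ)) = ⊤ := by
      rw [eq_top_iff, ← adjoin_range_X]
      exact Algebra.adjoin_mono Set.subset_union_right
    rw [this]
    constructor
    intro x
    exact isAlgebraic_algebraMap (⟨x, trivial⟩ : (⊤ : Subalgebra ℂ (MvPolynomial ι ℂ)))
  obtain ⟨u, hu1, hu2, hu⟩ := exists_isTranscendenceBasis_between (R := ℂ) (Set.range P)
    (Set.range P ∪ Set.range (MvPolynomial.X : ι → MvPolynomial ι ℂ)) Set.subset_union_left h.to_subtype_range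
  have hcard : Cardinal.mk ι = Cardinal.mk u :=
    (IsTranscendenceBasis.mvPolynomial ι ℂ).cardinalMk_eq hu
  obtain ⟨e⟩ := Cardinal.eq.mp hcard
  let Q : ι → MvPolynomial ι ℂ := fun i => (e i : MvPolynomial ι ℂ)
  have hQ : AlgebraicIndependent ℂ Q := hu.1.comp e e.injective
  obtain ⟨a, ha, himg⟩ := poly_image Q hQ
  let j : κ → ι := fun k => e.symm ⟨P k, hu1 ⟨k, rfl⟩⟩
  have hj : ∀ k, Q (j k) = P k := fun k => by simp [Q, j]
  have hjinj : Function.Injective j := by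
    intro k k' hk
    apply h.injective
    rw [← hj, ← hj, hk]
  let s : Set (ι → ℂ) := {x | MvPolynomial.eval (fun k => MvPolynomial.eval x (P k)) b ≠ 0}
  let G : (ι → ℂ) → (ι → ℂ) := fun x i => MvPolynomial.eval x (Q i)
  have hGd : ∀ x, DifferentiableAt ℂ G x := by
    intro x
    rw [differentiableAt_pi]
    intro i
    exact ((mvpoly_contDiff (Q i)).differentiable (by simp)) x
  have hns : ∀ x ∈ s, ¬ Function.Surjective (fderiv ℂ G x) := by
    intro x hx hsurj
    apply hcon x hx
    let R : (ι → ℂ) →L[ℂ] (κ → ℂ) := ContinuousLinearMap.pi fun k => ContinuousLinearMap.proj (j k)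
    have hR : Function.Surjective R := by
      intro z
      refine ⟨Function.extend j z 0, ?_⟩
      ext k
      simp [R, hjinj.extend_apply]
    have : (fun (x : ι → ℂ) k => MvPolynomial.eval x (P k)) = R ∘ G := by
      ext x k
      simp [R, G, hj]
    rw [this, fderiv_comp x R.differentiableAt (hGd x), R.fderiv]
    exact hR.comp hsurj
  have hz := MeasureTheory.addHaar_image_eq_zero_of_det_fderivWithin_eq_zero (E := ι → ℂ) (s := s)
    (μ := MeasureTheory.volume) (f := G) (f' := fun x => (fderiv ℂ G x).restrictScalars ℝ)
    (fun x _ => ((hGd x).hasFDerivAt.restrictScalars ℝ).hasFDerivWithinAt) (by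
      intro x hx
      by_contra hne
      apply hns x hx
      have : LinearMap.det (((fderiv ℂ G x).restrictScalars ℝ : (ι → ℂ) →L[ℝ] (ι → ℂ)) :
        (ι → ℂ) →ₗ[ℝ] (ι → ℂ)) ≠ 0 := hne
      exact (LinearMap.equivOfDetNeZero _ this).surjective)
  let b' : MvPolynomial ι ℂ := rename j b
  have hb' : b' ≠ 0 := by
    intro h0
    exact hb (rename_injective j hjinj (by simpa [b'] using h0))
  obtain ⟨ho, hd⟩ := mvpoly_dense (a * b') (mul_ne_zero ha hb')
  have hsub : {x : ι → ℂ | MvPolynomial.eval x (a * b') ≠ 0} ⊆ G '' s := by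
    intro y hy
    simp only [map_mul, Set.mem_ofPred_eq, mul_ne_zero_iff] at hy
    obtain ⟨x, hx⟩ := himg y hy.1
    refine ⟨x, ?_, funext hx⟩
    have : MvPolynomial.eval (fun k => MvPolynomial.eval x (P k)) b = MvPolynomial.eval y b' := by
      rw [eval_rename]
      congr 2
      ext k
      simp [← hj, hx]
    simp only [s, Set.mem_ofPred_eq, this]
    exact hy.2
  have := MeasureTheory.measure_mono_null hsub hz
  rw [IsOpen.measure_eq_zero_iff MeasureTheory.volume ho] at this
  rw [this] at hd
  simpa using hd.nonempty

theorem algInd_of_submersion {ι κ : Type} [Fintype ι] [Fintype κ] (P : κ → MvPolynomial ι ℂ)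
    (x : ι → ℂ) (hx : Function.Surjective (fderiv ℂ (fun (x : ι → ℂ) k => MvPolynomial.eval x (P k)) x)) :
    AlgebraicIndependent ℂ P := by
  classical
  rw [algebraicIndependent_iff]
  intro p hp
  by_contra hne
  have hcd : ContDiff ℂ ⊤ (fun (x : ι → ℂ) k => MvPolynomial.eval x (P k)) :=
    contDiff_pi.mpr fun k => mvpoly_contDiff (P k)
  have hs : HasStrictFDerivAt (fun (x : ι → ℂ) k => MvPolynomial.eval x (P k)) _ x :=
    hcd.contDiffAt.hasStrictFDerivAt (by simp)
  have hmap := hs.map_nhds_eq_of_surj (LinearMap.range_eq_top.mpr hx)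
  obtain ⟨-, hd⟩ := mvpoly_dense p hne
  have hr : Set.range (fun (x : ι → ℂ) k => MvPolynomial.eval x (P k)) ∈ nhds (fun k => MvPolynomial.eval x (P k)) := by
    rw [← hmap]
    exact Filter.mem_map.mpr (Filter.univ_mem' fun y => ⟨y, rfl⟩)
  obtain ⟨y, hy, ⟨z, rfl⟩⟩ := hd.inter_nhds_nonempty hr
  apply hy
  have := congrArg (MvPolynomial.eval z) hp
  rw [map_zero] at this
  rw [← this]
  rw [MvPolynomial.eval_eq' _ p, MvPolynomial.aeval_def, MvPolynomial.eval₂_eq', map_sum]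
  simp

end AlgGeom


section Echelon

/-- echelon pattern: entries below the pivot row vanish -/
def Pat {p r : ℕ} (F : Fin p → Fin r) (e : Matrix (Fin r) (Fin p) ℂ) : Prop :=
  ∀ a c, F c < a → e a c = 0

theorem ech_top {p r : ℕ} {F : Fin p → Fin r} (hF : StrictMono F) {e : Matrix (Fin r) (Fin p) ℂ}
    (h1 : Pat F e) (x : Fin p → ℂ) (d : Fin p) (hx : ∀ d', d < d' → x d' = 0) :
    (e *ᵥ x) (F d) = e (F d) d * x d := by
  rw [Matrix.mulVec, dotProduct]
  rw [Finset.sum_eq_single d]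
  · intro b _ hb
    rcases lt_or_gt_of_ne hb with h | h
    · rw [h1 _ _ (hF h), zero_mul]
    · rw [hx b h, mul_zero]
  · simp

theorem exists_top {p : ℕ} (x : Fin p → ℂ) (hx : x ≠ 0) :
    ∃ d, x d ≠ 0 ∧ ∀ d', d < d' → x d' = 0 := by
  classical
  obtain ⟨i, hi⟩ := Function.ne_iff.mp hx
  have hne : (Finset.univ.filter fun i => x i ≠ 0).Nonempty := ⟨i, by simpa using hi⟩
  refine ⟨(Finset.univ.filter fun i => x i ≠ 0).max' hne, ?_, ?_⟩
  · have := Finset.max'_mem _ hne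
    simpa using this
  · intro d' hd'
    by_contra hcon
    have := Finset.le_max' (Finset.univ.filter fun i => x i ≠ 0) d' (by simpa using hcon)
    exact absurd hd' (not_lt.mpr this)

theorem ech_inj {p r : ℕ} {F : Fin p → Fin r} (hF : StrictMono F) {e : Matrix (Fin r) (Fin p) ℂ}
    (h1 : Pat F e) (h2 : ∀ c, e (F c) c ≠ 0) (x : Fin p → ℂ) (hx : e *ᵥ x = 0) : x = 0 := by
  by_contra hne
  obtain ⟨d, hd, hd'⟩ := exists_top x hne
  have := ech_top hF h1 x d hd'
  rw [hx] at this
  simp [h2, hd] at this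

theorem exists_ech {p r : ℕ} (m : Matrix (Fin r) (Fin p) ℂ) (hm : ∀ x, m *ᵥ x = 0 → x = 0) :
    ∃ (F : Fin p → Fin r) (e : Matrix (Fin r) (Fin p) ℂ) (u : Matrix (Fin p) (Fin p) ℂ),
      StrictMono F ∧ Pat F e ∧ (∀ c, e (F c) c ≠ 0) ∧ IsUnit u.det ∧ m * u = e := by
  classical
  let S : Submodule ℂ (Fin r → ℂ) := LinearMap.range m.mulVecLin
  let T : Finset (Fin r) := Finset.univ.filter fun a => ∃ x ∈ S, x a ≠ 0 ∧ ∀ b, a < b → x b = 0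
  have hT : ∀ a : T, ∃ x ∈ S, x a ≠ 0 ∧ ∀ b, (a : Fin r) < b → x b = 0 := by
    intro a
    exact (Finset.mem_filter.mp a.2).2
  choose rep hrS hr0 hrb using hT
  have hspan : ∀ N : ℕ, ∀ x ∈ S, (∀ b : Fin r, N ≤ b → x b = 0) → x ∈ Submodule.span ℂ (Set.range rep) := by
    intro N
    induction N with
    | zero =>
      intro x _ hx
      have : x = 0 := by ext b; exact hx b (Nat.zero_le _)
      rw [this]; exact Submodule.zero_mem _
    | succ N ih =>
      intro x hxS hx
      by_cases hN : ∃ h : N < r, x ⟨N, h⟩ ≠ 0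
      · obtain ⟨h, hxN⟩ := hN
        have hmem : (⟨N, h⟩ : Fin r) ∈ T := by
          simp only [T, Finset.mem_filter, Finset.mem_univ, true_and]
          refine ⟨x, hxS, hxN, fun b hb => hx b ?_⟩
          exact Nat.succ_le_of_lt (Fin.lt_def.mp hb)
        set a : T := ⟨⟨N, h⟩, hmem⟩ with ha
        have key : x - (x ⟨N, h⟩ / rep a ⟨N, h⟩) • rep a ∈ Submodule.span ℂ (Set.range rep) := by
          apply ih
          · exact S.sub_mem hxS (S.smul_mem _ (hrS a))
          · intro b hb
            rcases Nat.lt_or_ge N b with hb' | hb'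
            · have h1 := hx b hb'
              have h2 := hrb a b (Fin.lt_def.mpr hb')
              simp [h1, h2]
            · have hbN : b = ⟨N, h⟩ := Fin.ext (le_antisymm hb' hb)
              have h3 : rep a ⟨N, h⟩ ≠ 0 := hr0 a
              rw [hbN]
              simp [h3]
        have h4 : rep a ∈ Submodule.span ℂ (Set.range rep) := Submodule.subset_span ⟨a, rfl⟩
        have := Submodule.add_mem _ key (Submodule.smul_mem _ (x ⟨N, h⟩ / rep a ⟨N, h⟩) h4)
        simpa using this
      · push Not at hN
        apply ih x hxS
        intro b hb
        rcases Nat.lt_or_ge N b with hb' | hb'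
        · exact hx b hb'
        · have hbN : (b : ℕ) = N := le_antisymm hb' hb
          have := hN (hbN ▸ b.2)
          convert this
  -- enumerate
  obtain ⟨q, hqT⟩ : ∃ q, T.card = q := ⟨_, rfl⟩
  let F₀ : Fin q → Fin r := T.orderEmbOfFin hqT
  have hF₀ : StrictMono F₀ := (T.orderEmbOfFin hqT).strictMono
  have hF₀m : ∀ c, F₀ c ∈ T := fun c => T.orderEmbOfFin_mem hqT c
  let e₀ : Matrix (Fin r) (Fin q) ℂ := Matrix.of fun a c => rep ⟨F₀ c, hF₀m c⟩ a
  have hp₀ : Pat F₀ e₀ := fun a c h => hrb ⟨F₀ c, hF₀m c⟩ a h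
  have hv₀ : ∀ c, e₀ (F₀ c) c ≠ 0 := fun c => hr0 ⟨F₀ c, hF₀m c⟩
  have hinj := ech_inj hF₀ hp₀ hv₀
  have hrange : LinearMap.range e₀.mulVecLin = S := by
    apply le_antisymm
    · rw [Matrix.range_mulVecLin, Submodule.span_le]
      rintro _ ⟨c, rfl⟩
      exact hrS ⟨F₀ c, hF₀m c⟩
    · intro x hx
      have hx' := hspan r x hx (fun b hb => absurd b.2 (not_lt.mpr hb))
      rw [Matrix.range_mulVecLin]
      refine (Submodule.span_mono ?_) hx'
      rintro _ ⟨a, rfl⟩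
      have ha : (a : Fin r) ∈ Set.range (T.orderEmbOfFin hqT) := by
        rw [Finset.range_orderEmbOfFin]; exact a.2
      obtain ⟨c, hc⟩ := ha
      refine ⟨c, ?_⟩
      ext b
      have : (⟨F₀ c, hF₀m c⟩ : T) = a := Subtype.ext hc
      simp [e₀, Matrix.col, this]
  have hq : q = p := by
    have h1 : Module.finrank ℂ (LinearMap.range e₀.mulVecLin) = q := by
      rw [LinearMap.finrank_range_of_inj]
      · simp
      · rw [← LinearMap.ker_eq_bot]
        exact (LinearMap.ker_eq_bot').mpr (fun x hx => hinj x hx)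
    have h2 : Module.finrank ℂ (LinearMap.range m.mulVecLin) = p := by
      rw [LinearMap.finrank_range_of_inj]
      · simp
      · rw [← LinearMap.ker_eq_bot]
        exact (LinearMap.ker_eq_bot').mpr (fun x hx => hm x hx)
    rw [← h1, hrange, h2]
  subst hq
  have hu : ∀ c : Fin q, ∃ x, m *ᵥ x = e₀.col c := by
    intro c
    have : e₀.col c ∈ S := hrS ⟨F₀ c, hF₀m c⟩
    exact this
  choose ux hux using hu
  have hmu : m * Matrix.of (fun a c => ux c a) = e₀ := by
    ext a c
    have := congrFun (hux c) a
    simpa [Matrix.mul_apply, Matrix.mulVec, dotProduct, Matrix.col] using this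
  refine ⟨F₀, e₀, Matrix.of fun a c => ux c a, hF₀, hp₀, hv₀, ?_, hmu⟩
  rw [isUnit_iff_ne_zero]
  intro hdet
  obtain ⟨x, hx, hx0⟩ := Matrix.exists_mulVec_eq_zero_iff.mpr hdet
  apply hx
  apply hinj
  rw [← hmu, ← Matrix.mulVec_mulVec, hx0, Matrix.mulVec_zero]

theorem pos_le {p r : ℕ} {F G : Fin p → Fin r} (hF : StrictMono F) (hG : StrictMono G)
    {e e' : Matrix (Fin r) (Fin p) ℂ} (h1 : Pat F e) (h1' : Pat G e') (h2 : ∀ c, e' (G c) c ≠ 0)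
    (t : Matrix (Fin p) (Fin p) ℂ) (ht : IsUnit t.det) (het : e = e' * t) (c : Fin p) : G c ≤ F c := by
  by_contra hlt
  push Not at hlt
  have hz : ∀ j d, j ≤ c → c ≤ d → t d j = 0 := by
    intro j d hj hd
    by_contra hne
    have hne' : (fun i => t i j) ≠ 0 := fun h => hne (congrFun h d)
    obtain ⟨d', hd', hd''⟩ := exists_top _ hne'
    have hdd : d ≤ d' := by
      by_contra h
      exact hne (hd'' d (not_le.mp h))
    have h3 := ech_top hG h1' (fun i => t i j) d' hd''
    have h4 : (e' *ᵥ fun i => t i j) (G d') = e (G d') j := by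
      rw [het]; rfl
    rw [h4, h1 (G d') j] at h3
    · exact mul_ne_zero (h2 d') hd' h3.symm
    · exact lt_of_le_of_lt (hF.monotone hj) (lt_of_lt_of_le hlt (hG.monotone (hd.trans hdd)))
  apply ht.ne_zero
  rw [Matrix.det_apply]
  apply Finset.sum_eq_zero
  intro σ _
  have : ∃ j, j ≤ c ∧ c ≤ σ j := by
    by_contra hcon
    push Not at hcon
    have h5 : (Finset.Iic c).card ≤ (Finset.Iio c).card := by
      apply Finset.card_le_card_of_injOn σ
      · intro j hj
        simp only [Finset.coe_Iio, Set.mem_Iio]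
        exact hcon j (by simpa using hj)
      · exact σ.injective.injOn
    simp at h5
  obtain ⟨j, hj, hj'⟩ := this
  have h0 : ∏ i, t (σ i) i = 0 := Finset.prod_eq_zero (Finset.mem_univ j) (hz j (σ j) hj hj')
  rw [h0, smul_zero]

theorem ech_row {p r : ℕ} {F : Fin p → Fin r} (hF : StrictMono F) {e : Matrix (Fin r) (Fin p) ℂ}
    (h1 : Pat F e) (h2 : ∀ c, e (F c) c ≠ 0) (d : Fin p → ℂ) :
    ∃ x : Fin r → ℂ, x ᵥ* e = d ∧ (∀ a, (∀ c, F c ≠ a) → x a = 0) ∧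
      ∀ c, (∀ c' ≤ c, d c' = 0) → x (F c) = 0 := by
  classical
  let U : Matrix (Fin p) (Fin p) ℂ := e.submatrix F id
  have hU : U.BlockTriangular id := by
    intro i j hij
    exact h1 _ _ (hF hij)
  have hdet : IsUnit U.det := by
    rw [Matrix.det_of_isUpperTriangular hU, isUnit_iff_ne_zero, Finset.prod_ne_zero_iff]
    intro i _
    exact h2 i
  have : Invertible U := Matrix.invertibleOfIsUnitDet U hdet
  have hUi : U⁻¹.BlockTriangular id := Matrix.blockTriangular_inv_of_blockTriangular hU
  let z := d ᵥ* U⁻¹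
  have hz : z ᵥ* U = d := by
    simp only [z, Matrix.vecMul_vecMul]
    rw [Matrix.nonsing_inv_mul _ hdet, Matrix.vecMul_one]
  refine ⟨Function.extend F z 0, ?_, ?_, ?_⟩
  · rw [← hz]
    ext c
    simp only [Matrix.vecMul, dotProduct]
    symm
    apply Finset.sum_of_injOn F hF.injective.injOn
    · intro _ _; simp
    · intro a _ ha
      rw [Function.extend_apply', Pi.zero_apply, zero_mul]
      rintro ⟨c, rfl⟩
      exact ha ⟨c, by simp, rfl⟩
    · intro c _
      rw [hF.injective.extend_apply]
      rfl
  · intro a ha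
    rw [Function.extend_apply']
    · rfl
    · rintro ⟨c, hc⟩; exact ha c hc
  · intro c hc
    rw [hF.injective.extend_apply]
    simp only [z, Matrix.vecMul, dotProduct]
    apply Finset.sum_eq_zero
    intro c' _
    rcases le_or_gt c' c with h | h
    · rw [hc c' h, zero_mul]
    · rw [hUi h, mul_zero]

end Echelon


section Generic

variable {X : Type*} [NormedAddCommGroup X] [NormedSpace ℂ X]

/-- a generic-type function: analytic and not identically zero -/
def Gen (f : X → ℂ) : Prop := ContDiff ℂ ⊤ f ∧ ∃ x, f x ≠ 0

theorem Gen.isOpen {f : X → ℂ} (hf : ContDiff ℂ ⊤ f) : IsOpen {x | f x ≠ 0} :=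
  isOpen_ne_fun hf.continuous continuous_const

theorem Gen.dense {f : X → ℂ} (hf : Gen f) : Dense {x | f x ≠ 0} := by
  have hc : {x | f x ≠ 0} = {x | f x = 0}ᶜ := by ext x; simp
  rw [hc, ← interior_eq_empty_iff_dense_compl, Set.eq_empty_iff_forall_notMem]
  intro x hx
  rw [mem_interior_iff_mem_nhds] at hx
  have ha : AnalyticOnNhd ℂ f Set.univ := contDiff_omega_iff_analyticOnNhd.mp hf.1
  have := ha.eq_of_eventuallyEq (g := fun _ => (0:ℂ)) analyticOnNhd_const (z₀ := x) hx
  obtain ⟨y, hy⟩ := hf.2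
  exact hy (congrFun this y)

theorem Gen.mul {f g : X → ℂ} (hf : Gen f) (hg : Gen g) : Gen (fun x => f x * g x) := by
  refine ⟨hf.1.mul hg.1, ?_⟩
  obtain ⟨y, hy⟩ := hg.2
  obtain ⟨x, hx1, hx2⟩ := hf.dense.inter_open_nonempty _ (Gen.isOpen hg.1) ⟨y, hy⟩
  exact ⟨x, mul_ne_zero hx2 hx1⟩

theorem Gen.prod {ι : Type*} (s : Finset ι) (f : ι → X → ℂ) (hf : ∀ i ∈ s, Gen (f i)) :
    Gen (fun x => ∏ i ∈ s, f i x) := by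
  classical
  induction s using Finset.induction_on with
  | empty => simpa using ⟨contDiff_const, 0, one_ne_zero⟩
  | insert a s ha ih =>
    simp only [Finset.prod_insert ha]
    exact (hf a (Finset.mem_insert_self _ _)).mul
      (ih fun i hi => hf i (Finset.mem_insert_of_mem hi))

theorem contDiff_det {d : Type*} [Fintype d] [DecidableEq d] (M : X → Matrix d d ℂ)
    (hM : ∀ i j, ContDiff ℂ ⊤ (fun x => M x i j)) : ContDiff ℂ ⊤ (fun x => (M x).det) := by
  simp only [Matrix.det_apply]
  apply ContDiff.sum
  intro σ _
  apply ContDiff.const_smul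
  apply contDiff_prod
  intro i _
  exact hM _ _

theorem rank_generic {E κ : Type*} [AddCommGroup E] [Module ℂ E]
    [Fintype κ] (T : X → E →ₗ[ℂ] (κ → ℂ)) (hT : ∀ φ k, ContDiff ℂ ⊤ (fun t => T t φ k)) (x0 : X) :
    ∃ f : X → ℂ, ContDiff ℂ ⊤ f ∧ f x0 ≠ 0 ∧ ∀ x, f x ≠ 0 →
      Module.finrank ℂ (LinearMap.range (T x0)) ≤ Module.finrank ℂ (LinearMap.range (T x)) := by
  classical
  set d := Module.finrank ℂ (LinearMap.range (T x0)) with hd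
  let b := Module.finBasis ℂ (LinearMap.range (T x0))
  have hpre : ∀ i, ∃ φ, T x0 φ = b i := fun i => (b i).2
  choose φ hφ using hpre
  obtain ⟨q, hq⟩ := LinearMap.exists_leftInverse_of_injective
    ((LinearMap.range (T x0)).subtype) (Submodule.ker_subtype _)
  let Q : (κ → ℂ) →ₗ[ℂ] (Fin d → ℂ) := b.equivFun.toLinearMap ∘ₗ q
  let M : X → Matrix (Fin d) (Fin d) ℂ := fun x => Matrix.of fun i j => Q (T x (φ j)) i
  have hM : ∀ x i j, M x i j = ∑ k, Q (Pi.single k 1) i * T x (φ j) k := by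
    intro x i j
    have : T x (φ j) = ∑ k, T x (φ j) k • (Pi.single k 1 : κ → ℂ) := by
      ext k
      simp [Pi.single_apply]
    simp only [M, Matrix.of_apply]
    conv_lhs => rw [this]
    rw [map_sum, Finset.sum_apply]
    apply Finset.sum_congr rfl
    intro k _
    rw [map_smul, Pi.smul_apply, smul_eq_mul, mul_comm]
  refine ⟨fun x => (M x).det, ?_, ?_, ?_⟩
  · apply contDiff_det
    intro i j
    simp only [hM]
    apply ContDiff.sum
    intro k _
    exact contDiff_const.mul (hT _ _)
  · have : M x0 = 1 := by
      ext i j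
      simp only [M, Matrix.of_apply, hφ, Q, LinearMap.comp_apply]
      have h1 : q (b j : κ → ℂ) = b j := by
        have := LinearMap.congr_fun hq (b j)
        simpa using this
      rw [h1]
      simp [Matrix.one_apply, eq_comm]
    simp only [this, Matrix.det_one]
    exact one_ne_zero
  · intro x hx
    have hli : LinearIndependent ℂ (fun j => (⟨T x (φ j), φ j, rfl⟩ : LinearMap.range (T x))) := by
      rw [Fintype.linearIndependent_iff]
      intro g hg
      have h2 : M x *ᵥ g = 0 := by
        have h3 := congrArg (fun z : LinearMap.range (T x) => Q (z : κ → ℂ)) hg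
        ext i
        have h4 := congrFun h3 i
        simp only [Submodule.coe_sum, Submodule.coe_smul, map_sum, map_smul, Finset.sum_apply,
          Pi.smul_apply, smul_eq_mul, Submodule.coe_zero, map_zero, Pi.zero_apply] at h4
        simp only [Matrix.mulVec, dotProduct, M, Matrix.of_apply, Pi.zero_apply]
        rw [← h4]
        exact Finset.sum_congr rfl fun j _ => mul_comm _ _
      have h5 := Matrix.eq_zero_of_mulVec_eq_zero hx h2
      exact fun i => congrFun h5 i
    have := hli.fintype_card_le_finrank
    simpa using this

theorem surj_generic {E κ : Type*} [AddCommGroup E] [Module ℂ E]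
    [Fintype κ] (T : X → E →ₗ[ℂ] (κ → ℂ)) (hT : ∀ φ k, ContDiff ℂ ⊤ (fun t => T t φ k)) (x0 : X)
    (hs : Function.Surjective (T x0)) :
    ∃ f : X → ℂ, ContDiff ℂ ⊤ f ∧ f x0 ≠ 0 ∧ ∀ x, f x ≠ 0 → Function.Surjective (T x) := by
  obtain ⟨f, h1, h2, h3⟩ := rank_generic T hT x0
  refine ⟨f, h1, h2, fun x hx => ?_⟩
  have h4 := h3 x hx
  rw [LinearMap.range_eq_top.mpr hs, finrank_top] at h4
  rw [← LinearMap.range_eq_top]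
  exact Submodule.eq_top_of_finrank_eq (le_antisymm (Submodule.finrank_le _) h4)

end Generic

theorem lemma_LA {E κ : Type*} [AddCommGroup E] [Module ℂ E] [FiniteDimensional ℂ E]
    [Fintype κ] (T U : E →ₗ[ℂ] (κ → ℂ))
    (h : ∀ t : ℂ, Module.finrank ℂ (LinearMap.range (T + t • U)) ≤
      Module.finrank ℂ (LinearMap.range T)) (φ : E) (hφ : T φ = 0) : U φ ∈ LinearMap.range T := by
  by_contra hne
  let S : ℂ → (E × ℂ) →ₗ[ℂ] (κ → ℂ) := fun t =>
    (T + t • U).coprod (LinearMap.toSpanSingleton ℂ _ (U φ))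
  obtain ⟨f, h1, h2, h3⟩ := rank_generic S (by
    intro x k
    simp only [S, LinearMap.coprod_apply, LinearMap.add_apply, LinearMap.smul_apply, Pi.add_apply,
      Pi.smul_apply, smul_eq_mul]
    fun_prop) 0
  have hG : Gen f := ⟨h1, 0, h2⟩
  obtain ⟨t, ht, ht0⟩ := hG.dense.inter_open_nonempty {t : ℂ | t ≠ 0} isOpen_ne ⟨1, one_ne_zero⟩
  have h4 := h3 t ht0
  have hr : LinearMap.range (S t) ≤ LinearMap.range (T + t • U) := by
    rintro _ ⟨⟨x, c⟩, rfl⟩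
    refine ⟨x + (c / t) • φ, ?_⟩
    have ht' : t ≠ 0 := ht
    simp only [S, LinearMap.coprod_apply, map_add, map_smul, LinearMap.add_apply,
      LinearMap.smul_apply, hφ, LinearMap.toSpanSingleton_apply, zero_add, smul_smul]
    rw [div_mul_cancel₀ _ ht']
  have h5 := Submodule.finrank_mono hr
  have h6 : LinearMap.range T < LinearMap.range (S 0) := by
    rw [SetLike.lt_iff_le_and_exists]
    refine ⟨?_, U φ, ⟨(0, 1), by simp [S]⟩, hne⟩
    rintro _ ⟨x, rfl⟩
    exact ⟨(x, 0), by simp [S]⟩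
  have h7 := Submodule.finrank_lt_finrank_of_lt h6
  have h8 := h t
  omega


section LMap

/-- the cells of the incidence problem -/
abbrev Cells {r : ℕ} (w : ℕ) (l : Fin 3 → Fin r → ℕ) : Type :=
  {x : Fin 3 × Fin w × Fin r // l x.1 x.2.2 ≤ x.2.1}

/-- the linear map whose surjectivity expresses transversality -/
def Lm {r : ℕ} (w : ℕ) (l : Fin 3 → Fin r → ℕ) (v : Fin 3 → Matrix (Fin r) (Fin r) ℂ)
    (y : Fin 3 → Matrix (Fin w) (Fin w) ℂ) :
    Matrix (Fin w) (Fin r) ℂ →ₗ[ℂ] (Cells w l → ℂ) where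
  toFun φ x := (y x.1.1 * φ * v x.1.1) x.1.2.1 x.1.2.2
  map_add' φ ψ := by ext x; simp [Matrix.mul_add, Matrix.add_mul]
  map_smul' c φ := by ext x; simp

theorem Lm_apply {r w : ℕ} (l : Fin 3 → Fin r → ℕ) (v : Fin 3 → Matrix (Fin r) (Fin r) ℂ)
    (y : Fin 3 → Matrix (Fin w) (Fin w) ℂ) (φ) (x : Cells w l) :
    Lm w l v y φ x = (y x.1.1 * φ * v x.1.1) x.1.2.1 x.1.2.2 := rfl

theorem Lm_surj_iff {r w : ℕ} (l : Fin 3 → Fin r → ℕ) (v : Fin 3 → Matrix (Fin r) (Fin r) ℂ)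
    (y : Fin 3 → Matrix (Fin w) (Fin w) ℂ) :
    Function.Surjective (Lm w l v y) ↔ ∀ D : Fin 3 → Matrix (Fin w) (Fin r) ℂ,
      ∃ φ : Matrix (Fin w) (Fin r) ℂ, ∀ A (b : Fin w) a, l A a ≤ b →
        (y A * φ * v A) b a = D A b a := by
  constructor
  · intro h D
    obtain ⟨φ, hφ⟩ := h (fun x => D x.1.1 x.1.2.1 x.1.2.2)
    exact ⟨φ, fun A b a hab => congrFun hφ ⟨(A, b, a), hab⟩⟩
  · intro h D
    classical
    obtain ⟨φ, hφ⟩ := h (fun A => Matrix.of fun b a =>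
      if hh : l A a ≤ b then D ⟨(A, b, a), hh⟩ else 0)
    refine ⟨φ, ?_⟩
    ext ⟨⟨A, b, a⟩, hab⟩
    have := hφ A b a hab
    simp only [Matrix.of_apply] at this
    rw [Lm_apply]
    simp only at hab ⊢
    rw [this, dif_pos hab]

theorem card_cells {r w : ℕ} (l : Fin 3 → Fin r → ℕ) :
    Fintype.card (Cells w l) = ∑ A, ∑ a, (w - l A a) := by
  classical
  rw [Fintype.card_subtype, Finset.card_filter, Fintype.sum_prod_type]
  apply Finset.sum_congr rfl
  intro A _
  rw [Fintype.sum_prod_type, Finset.sum_comm]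
  apply Finset.sum_congr rfl
  intro a _
  rw [← Finset.card_filter]
  simp only
  have : (Finset.univ.filter fun b : Fin w => l A a ≤ b) = (Finset.univ.filter fun b : Fin w => (b : ℕ) < l A a)ᶜ := by
    ext b; simp
  rw [this, Finset.card_compl, Fin.card_filter_val_lt, Fintype.card_fin]
  omega

theorem card_cells_add {r w : ℕ} (l : Fin 3 → Fin r → ℕ) (hl : ∀ A a, l A a ≤ w) :
    Fintype.card (Cells w l) + ∑ A, ∑ a, l A a = 3 * (w * r) := by
  rw [card_cells, ← Finset.sum_add_distrib]
  have : ∀ A : Fin 3, (∑ a, (w - l A a) + ∑ a, l A a) = w * r := by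
    intro A
    rw [← Finset.sum_add_distrib, Finset.sum_congr rfl (fun a _ => Nat.sub_add_cancel (hl A a))]
    simp [mul_comm]
  rw [Finset.sum_congr rfl (fun A _ => this A)]
  simp

theorem card_cells_add_ge {r w : ℕ} (l : Fin 3 → Fin r → ℕ) :
    3 * (w * r) ≤ Fintype.card (Cells w l) + ∑ A, ∑ a, l A a := by
  rw [card_cells, ← Finset.sum_add_distrib]
  have : ∀ A : Fin 3, w * r ≤ (∑ a, (w - l A a) + ∑ a, l A a) := by
    intro A
    rw [← Finset.sum_add_distrib]
    calc w * r = ∑ a : Fin r, w := by simp [mul_comm]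
      _ ≤ _ := Finset.sum_le_sum fun a _ => by omega
  calc 3 * (w * r) = ∑ A : Fin 3, w * r := by simp
    _ ≤ _ := Finset.sum_le_sum fun A _ => this A

theorem surj_count {r w : ℕ} {l : Fin 3 → Fin r → ℕ} {v : Fin 3 → Matrix (Fin r) (Fin r) ℂ}
    {y : Fin 3 → Matrix (Fin w) (Fin w) ℂ} (h : Function.Surjective (Lm w l v y)) :
    2 * (r * w) ≤ ∑ A, ∑ a, l A a := by
  have h1 := LinearMap.finrank_range_le (Lm w l v y)
  rw [LinearMap.range_eq_top.mpr h, finrank_top, Module.finrank_fintype_fun_eq_card,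
    Module.finrank_matrix] at h1
  have h2 := card_cells_add_ge (w := w) l
  simp at h1
  rw [mul_comm r w]
  have h3 : Fintype.card (Cells w l) ≤ w * r := h1
  omega

/-- Th1 -/
theorem th1 {p r w : ℕ} {l : Fin 3 → Fin r → ℕ} (hl : ∀ A, Monotone (l A))
    {v : Fin 3 → Matrix (Fin r) (Fin r) ℂ} {y : Fin 3 → Matrix (Fin w) (Fin w) ℂ}
    (h : Function.Surjective (Lm w l v y)) {F : Fin 3 → Fin p → Fin r} (hF : ∀ A, StrictMono (F A))
    {m : Matrix (Fin r) (Fin p) ℂ} {u : Fin 3 → Matrix (Fin p) (Fin p) ℂ}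
    {e : Fin 3 → Matrix (Fin r) (Fin p) ℂ} (h1 : ∀ A, Pat (F A) (e A))
    (h2 : ∀ A c, e A (F A c) c ≠ 0) (hm : ∀ A, m * u A = v A * e A) :
    Function.Surjective (Lm w (fun A c => l A (F A c)) u y) := by
  rw [Lm_surj_iff] at h ⊢
  intro D
  have hx : ∀ A b, ∃ x : Fin r → ℂ, x ᵥ* e A = D A b := fun A b => by
    obtain ⟨x, hx, -⟩ := ech_row (hF A) (h1 A) (h2 A) (D A b)
    exact ⟨x, hx⟩
  choose x hx using hx
  obtain ⟨φ, hφ⟩ := h (fun A => Matrix.of fun b a => x A b a)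
  refine ⟨φ * m, ?_⟩
  intro A b c hbc
  have : y A * (φ * m) * u A = (y A * φ * v A) * e A := by
    simp only [Matrix.mul_assoc, hm]
  rw [this, ← hx A b, Matrix.mul_apply]
  simp only [Matrix.vecMul, dotProduct]
  apply Finset.sum_congr rfl
  intro a _
  rcases lt_or_ge (F A c) a with hlt | hge
  · rw [h1 A a c hlt, mul_zero, mul_zero]
  · rw [hφ A b a ((hl A hge).trans hbc), Matrix.of_apply]

theorem mat_factor {w r : ℕ} (φ G : Matrix (Fin w) (Fin r) ℂ)
    (h : ∀ x, φ *ᵥ x = 0 → G *ᵥ x = 0) : ∃ η : Matrix (Fin w) (Fin w) ℂ, G = η * φ := by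
  have hk : LinearMap.ker φ.mulVecLin ≤ LinearMap.ker G.mulVecLin := fun x hx => h x hx
  obtain ⟨g, hg⟩ := LinearMap.exists_extend
    ((LinearMap.ker φ.mulVecLin).liftQ G.mulVecLin hk ∘ₗ
      (φ.mulVecLin.quotKerEquivRange.symm.toLinearMap))
  refine ⟨LinearMap.toMatrix' g, ?_⟩
  have : G.mulVecLin = g ∘ₗ φ.mulVecLin := by
    ext1 x
    ext1
    have := LinearMap.congr_fun hg ⟨φ.mulVecLin (Pi.single x 1), _, rfl⟩
    simp only [LinearMap.comp_apply, Submodule.subtype_apply] at this ⊢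
    simp only [LinearMap.coe_single]
    rw [this]
    simp only [LinearEquiv.coe_coe]
    have h2 := LinearMap.quotKerEquivRange_symm_apply_image φ.mulVecLin (Pi.single x 1) ⟨_, rfl⟩
    rw [h2]
    simp
  have h3 := congrArg LinearMap.toMatrix' this
  rw [LinearMap.toMatrix'_comp] at h3
  simpa [← Matrix.toLin'_apply', LinearMap.toMatrix'_toLin'] using h3

/-- Lemma P -/
theorem lemma_P {p r w : ℕ} {l : Fin 3 → Fin r → ℕ} (hl : ∀ A, Monotone (l A))
    {v : Fin 3 → Matrix (Fin r) (Fin r) ℂ} {y : Fin 3 → Matrix (Fin w) (Fin w) ℂ}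
    (hv : ∀ A, IsUnit (v A).det)
    (hrank : ∀ y', Module.finrank ℂ (LinearMap.range (Lm w l v y')) ≤
      Module.finrank ℂ (LinearMap.range (Lm w l v y)))
    {φ : Matrix (Fin w) (Fin r) ℂ} (hφ : Lm w l v y φ = 0)
    {F : Fin 3 → Fin p → Fin r} (hF : ∀ A, StrictMono (F A))
    {m : Matrix (Fin r) (Fin p) ℂ} {k : Matrix (Fin p) (Fin r) ℂ} (hk : k * m = 1)
    (hker : ∀ x, φ *ᵥ x = 0 → ∃ z, x = m *ᵥ z)
    {u : Fin 3 → Matrix (Fin p) (Fin p) ℂ} (hu : ∀ A, IsUnit (u A).det)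
    {e : Fin 3 → Matrix (Fin r) (Fin p) ℂ} (h1 : ∀ A, Pat (F A) (e A))
    (h2 : ∀ A c, e A (F A c) c ≠ 0) (hm : ∀ A, m * u A = v A * e A)
    (hs : Function.Surjective (Lm w (fun A c => l A (F A c)) u y)) :
    Function.Surjective (Lm w l v y) := by
  classical
  rw [Lm_surj_iff] at hs
  intro D'
  let D : Fin 3 → Matrix (Fin w) (Fin r) ℂ := fun A => Matrix.of fun b a =>
      if hh : l A a ≤ b then D' ⟨(A, b, a), hh⟩ else 0
  obtain ⟨χ, hχ⟩ := hs (fun A => D A * e A)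
  let Φ := χ * k
  have hΦ : ∀ A, y A * Φ * v A * e A = y A * χ * u A := by
    intro A
    calc y A * Φ * v A * e A = y A * (χ * (k * (v A * e A))) := by
          simp only [Φ, Matrix.mul_assoc]
      _ = y A * (χ * ((k * m) * u A)) := by rw [← hm]; simp only [Matrix.mul_assoc]
      _ = _ := by rw [hk, Matrix.one_mul, Matrix.mul_assoc]
  let C : Fin 3 → Matrix (Fin w) (Fin r) ℂ := fun A => Matrix.of fun b a =>
      if l A a ≤ b then (D A - y A * Φ * v A) b a else 0
  have hCe : ∀ A (b : Fin w) c, l A (F A c) ≤ b → (C A * e A) b c = 0 := by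
    intro A b c hbc
    have h3 : (C A * e A) b c = ((D A - y A * Φ * v A) * e A) b c := by
      rw [Matrix.mul_apply, Matrix.mul_apply]
      apply Finset.sum_congr rfl
      intro a _
      rcases lt_or_ge (F A c) a with hlt | hge
      · rw [h1 A a c hlt, mul_zero, mul_zero]
      · simp only [C, Matrix.of_apply, if_pos ((hl A hge).trans hbc)]
    rw [h3, Matrix.sub_mul, hΦ, Matrix.sub_apply, hχ A b c hbc, sub_self]
  have hx : ∀ A (b : Fin w), ∃ x : Fin r → ℂ, x ᵥ* e A = -((C A * e A) b) ∧ ∀ a, l A a ≤ b → x a = 0 := by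
    intro A b
    obtain ⟨x, hx1, hx2, hx3⟩ := ech_row (hF A) (h1 A) (h2 A) (-((C A * e A) b))
    refine ⟨x, hx1, fun a ha => ?_⟩
    by_cases hc : ∃ c, F A c = a
    · obtain ⟨c, rfl⟩ := hc
      apply hx3
      intro c' hc'
      rw [Pi.neg_apply, hCe A b c', neg_zero]
      exact (hl A ((hF A).monotone hc')).trans ha
    · push Not at hc
      exact hx2 a hc
  choose x hx1 hx2 using hx
  let N : Fin 3 → Matrix (Fin w) (Fin r) ℂ := fun A => C A + Matrix.of fun b a => x A b a
  have hNe : ∀ A, N A * e A = 0 := by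
    intro A
    ext b c
    have h4 := congrFun (hx1 A b) c
    have h5 : ((Matrix.of fun b a => x A b a) * e A) b c = -((C A * e A) b c) := h4
    simp only [N, Matrix.add_mul, Matrix.add_apply, h5, Matrix.zero_apply]
    ring
  have hη : ∀ A, ∃ η : Matrix (Fin w) (Fin w) ℂ, N A * (v A)⁻¹ = η * φ := by
    intro A
    apply mat_factor
    intro z hz
    obtain ⟨z', rfl⟩ := hker z hz
    have h6 : m = v A * e A * (u A)⁻¹ := by
      rw [← hm, Matrix.mul_assoc, Matrix.mul_nonsing_inv _ (hu A), Matrix.mul_one]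
    have h7 : N A * (v A)⁻¹ * m = 0 := by
      rw [h6]
      calc N A * (v A)⁻¹ * (v A * e A * (u A)⁻¹) = N A * ((v A)⁻¹ * v A) * e A * (u A)⁻¹ := by
            simp only [Matrix.mul_assoc]
        _ = 0 := by rw [Matrix.nonsing_inv_mul _ (hv A), Matrix.mul_one, hNe, Matrix.zero_mul]
    rw [Matrix.mulVec_mulVec, h7, Matrix.zero_mulVec]
  choose η hη using hη
  have hηv : ∀ A, η A * φ * v A = N A := by
    intro A
    rw [← hη, Matrix.mul_assoc, Matrix.nonsing_inv_mul _ (hv A), Matrix.mul_one]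
  have hLA := lemma_LA (Lm w l v y) (Lm w l v η) (by
    intro t
    have : Lm w l v y + t • Lm w l v η = Lm w l v (fun A => y A + t • η A) := by
      ext1 ψ
      ext z
      simp [Lm_apply, Matrix.add_mul]
    rw [this]
    exact hrank _) φ hφ
  obtain ⟨ψ, hψ⟩ := hLA
  refine ⟨ψ + Φ, ?_⟩
  rw [map_add, hψ]
  ext ⟨⟨A, b, a⟩, hab⟩
  simp only at hab
  simp only [Pi.add_apply, Lm_apply, hηv]
  simp only [N, Matrix.add_apply, C, Matrix.of_apply, hx2 A b a hab, if_pos hab, D, Matrix.sub_apply,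
    dif_pos hab]
  ring

end LMap


section Th2

/-- entrywise analytic matrix families -/
def CDM {X : Type*} [NormedAddCommGroup X] [NormedSpace ℂ X] {m n : Type*}
    (M : X → Matrix m n ℂ) : Prop := ∀ i j, ContDiff ℂ ⊤ fun t => M t i j

theorem CDM.const {X : Type*} [NormedAddCommGroup X] [NormedSpace ℂ X] {m n : Type*}
    (M : Matrix m n ℂ) : CDM (fun _ : X => M) := fun _ _ => contDiff_const

theorem CDM.mul {X : Type*} [NormedAddCommGroup X] [NormedSpace ℂ X] {m n k : Type*} [Fintype n]
    {M : X → Matrix m n ℂ} {N : X → Matrix n k ℂ} (hM : CDM M) (hN : CDM N) :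
    CDM (fun t => M t * N t) := by
  intro i j
  simp only [Matrix.mul_apply]
  exact ContDiff.sum fun k _ => (hM i k).mul (hN k j)

theorem CDM.add {X : Type*} [NormedAddCommGroup X] [NormedSpace ℂ X] {m n : Type*}
    {M : X → Matrix m n ℂ} {N : X → Matrix m n ℂ} (hM : CDM M) (hN : CDM N) :
    CDM (fun t => M t + N t) := by
  intro i j
  simp only [Matrix.add_apply]
  exact (hM i j).add (hN i j)

theorem CDM.Lm {X : Type*} [NormedAddCommGroup X] [NormedSpace ℂ X] {r w : ℕ}
    (l : Fin 3 → Fin r → ℕ) {v : X → Fin 3 → Matrix (Fin r) (Fin r) ℂ}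
    {y : X → Fin 3 → Matrix (Fin w) (Fin w) ℂ} (hv : ∀ A, CDM (fun t => v t A))
    (hy : ∀ A, CDM (fun t => y t A)) (φ) (x : Cells w l) :
    ContDiff ℂ ⊤ (fun t => Lm w l (v t) (y t) φ x) := by
  simp only [Lm_apply]
  exact (((hy _).mul (CDM.const φ)).mul (hv _)) _ _

/-- transversality for generic data -/
def TransL {r : ℕ} (w : ℕ) (l : Fin 3 → Fin r → ℕ) : Prop :=
  ∃ (v : Fin 3 → Matrix (Fin r) (Fin r) ℂ) (y : Fin 3 → Matrix (Fin w) (Fin w) ℂ),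
    (∀ A, IsUnit (v A).det) ∧ (∀ A, IsUnit (y A).det) ∧ Function.Surjective (Lm w l v y)

theorem mul_one_add_single {w r : ℕ} (M : Matrix (Fin w) (Fin r) ℂ) (i j : Fin r) (t : ℂ) (b a) :
    (M * ((1 : Matrix (Fin r) (Fin r) ℂ) + Matrix.single i j t) : Matrix (Fin w) (Fin r) ℂ) b a = M b a + if a = j then M b i * t else 0 := by
  rw [Matrix.mul_add, Matrix.mul_one, Matrix.add_apply]
  congr 1
  split_ifs with h
  · subst h; simp
  · rw [Matrix.mul_single_apply_of_ne _ _ _ _ _ h]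

theorem one_add_single_mul {w r : ℕ} (M : Matrix (Fin w) (Fin r) ℂ) (i j : Fin w) (t : ℂ) (b a) :
    (((1 : Matrix (Fin w) (Fin w) ℂ) + Matrix.single i j t) * M : Matrix (Fin w) (Fin r) ℂ) b a = M b a + if b = i then t * M j a else 0 := by
  rw [Matrix.add_mul, Matrix.one_mul, Matrix.add_apply]
  congr 1
  split_ifs with h
  · subst h; simp
  · rw [Matrix.single_mul_apply_of_ne _ _ _ _ _ h]

theorem CDM.single {X : Type*} [NormedAddCommGroup X] [NormedSpace ℂ X] {m n : Type*}
    [DecidableEq m] [DecidableEq n] (i : m) (j : n) {f : X → ℂ} (hf : ContDiff ℂ ⊤ f) :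
    CDM (fun t => Matrix.single i j (f t)) := by
  intro a b
  simp only [Matrix.single_apply]
  split_ifs
  · exact hf
  · exact contDiff_const

theorem two_choice (a b : ℂ) (hb : b ≠ 0) :
    ∃ t : ℂ, a + t * b ≠ 0 := by
  by_cases h : a = 0
  · exact ⟨1, by simpa [h] using hb⟩
  · exact ⟨0, by simpa using h⟩

/-- one step of the reduction -/
theorem th2_step {r w : ℕ} {l : Fin 3 → Fin r → ℕ} (hl : ∀ A, Monotone (l A)) (hlw : ∀ A a, l A a ≤ w)
    (hT : TransL w l) (hd : 2 * (r * w) < ∑ A, ∑ a, l A a) :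
    ∃ l' : Fin 3 → Fin r → ℕ, (∀ A, Monotone (l' A)) ∧ (∀ A a, l' A a ≤ l A a) ∧ TransL w l' ∧
      (∑ A, ∑ a, l' A a) + 1 = ∑ A, ∑ a, l A a := by
  classical
  obtain ⟨v, y, hv, hy, hs⟩ := hT
  -- kernel element
  have hcard := card_cells_add l hlw
  have hkd := LinearMap.finrank_range_add_finrank_ker (Lm w l v y)
  rw [LinearMap.range_eq_top.mpr hs, finrank_top, Module.finrank_fintype_fun_eq_card,
    Module.finrank_matrix] at hkd
  simp only [Fintype.card_fin, Module.finrank_self, mul_one] at hkd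
  have hker : LinearMap.ker (Lm w l v y) ≠ ⊥ := by
    intro h0
    rw [h0, finrank_bot] at hkd
    rw [mul_comm w r] at hkd hcard
    omega
  obtain ⟨φ, hφ, hφ0⟩ := Submodule.exists_mem_ne_zero_of_ne_bot hker
  set ψ := y 0 * φ * v 0 with hψ
  have hψ0 : ψ ≠ 0 := by
    intro h0
    apply hφ0
    have : φ = (y 0)⁻¹ * ψ * (v 0)⁻¹ := by
      rw [hψ]
      calc φ = ((y 0)⁻¹ * y 0) * φ * (v 0 * (v 0)⁻¹) := by
            rw [Matrix.nonsing_inv_mul _ (hy 0), Matrix.mul_nonsing_inv _ (hv 0)]; simp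
        _ = _ := by simp only [Matrix.mul_assoc]
    rw [this, h0]; simp
  have hcell : ∀ b a, l 0 a ≤ (b : Fin w) → ψ b a = 0 := by
    intro b a hab
    have := congrFun (LinearMap.mem_ker.mp hφ) ⟨(0, b, a), hab⟩
    exact this
  obtain ⟨a0, ha0⟩ : ∃ a0, (fun b => ψ b a0) ≠ 0 := by
    by_contra hcon
    push Not at hcon
    apply hψ0
    ext b a
    exact congrFun (hcon a) b
  obtain ⟨b0, hb0, hb0'⟩ := exists_top _ ha0
  have hb0l : (b0 : ℕ) < l 0 a0 := by
    by_contra h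
    exact hb0 (hcell b0 a0 (not_lt.mp h))
  -- least column
  have hne : (Finset.univ.filter fun a => (b0 : ℕ) < l 0 a).Nonempty := ⟨a0, by simpa using hb0l⟩
  set a1 := (Finset.univ.filter fun a => (b0 : ℕ) < l 0 a).min' hne with ha1
  have ha1l : (b0 : ℕ) < l 0 a1 := by
    have := Finset.min'_mem _ hne
    simpa using this
  have ha1m : ∀ a, a < a1 → l 0 a ≤ b0 := by
    intro a ha
    by_contra h
    have := Finset.min'_le (Finset.univ.filter fun a => (b0 : ℕ) < l 0 a) a (by simpa using h)
    exact absurd ha (not_lt.mpr this)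
  have hb1w : l 0 a1 - 1 < w := by have := hlw 0 a1; omega
  set b1 : Fin w := ⟨l 0 a1 - 1, hb1w⟩ with hb1
  have hb1v : (b1 : ℕ) = l 0 a1 - 1 := rfl
  -- the perturbed data
  let v' : ℂ × ℂ → Fin 3 → Matrix (Fin r) (Fin r) ℂ := fun t =>
    Function.update v 0 (v 0 * (1 + Matrix.single a0 a1 t.1))
  let y' : ℂ × ℂ → Fin 3 → Matrix (Fin w) (Fin w) ℂ := fun t =>
    Function.update y 0 ((1 + Matrix.single b1 b0 t.2) * y 0)
  have hv'0 : v' (0, 0) = v := by simp [v']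
  have hy'0 : y' (0, 0) = y := by simp [y']
  have hv'c : ∀ A, CDM (fun t => v' t A) := by
    intro A
    by_cases hA : A = 0
    · subst hA
      simp only [v', Function.update_self]
      exact (CDM.const _).mul ((CDM.const _).add (CDM.single _ _ contDiff_fst))
    · simp only [v', Function.update_of_ne hA]
      exact CDM.const _
  have hy'c : ∀ A, CDM (fun t => y' t A) := by
    intro A
    by_cases hA : A = 0
    · subst hA
      simp only [y', Function.update_self]
      exact ((CDM.const _).add (CDM.single _ _ contDiff_snd)).mul (CDM.const _)
    · simp only [y', Function.update_of_ne hA]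
      exact CDM.const _
  obtain ⟨f, hf1, hf2, hf3⟩ := surj_generic (fun t => Lm w l (v' t) (y' t))
    (fun φ x => CDM.Lm l hv'c hy'c φ x) (0, 0) (by simpa [hv'0, hy'0] using hs)
  have g1 : Gen f := ⟨hf1, _, hf2⟩
  have g2 : ∀ A, Gen (fun t => (v' t A).det) := fun A =>
    ⟨contDiff_det _ (hv'c A), (0, 0), by change (v' (0, 0) A).det ≠ 0; rw [hv'0]; exact (hv A).ne_zero⟩
  have g3 : ∀ A, Gen (fun t => (y' t A).det) := fun A =>
    ⟨contDiff_det _ (hy'c A), (0, 0), by change (y' (0, 0) A).det ≠ 0; rw [hy'0]; exact (hy A).ne_zero⟩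
  have hentry : ∀ t b a, (y' t 0 * φ * v' t 0) b a =
      (ψ b a + if a = a1 then ψ b a0 * t.1 else 0) +
        if b = b1 then t.2 * (ψ b0 a + if a = a1 then ψ b0 a0 * t.1 else 0) else 0 := by
    intro t b a
    have : y' t 0 * φ * v' t 0 = (1 + Matrix.single b1 b0 t.2) * (ψ * (1 + Matrix.single a0 a1 t.1)) := by
      simp only [v', y', Function.update_self, hψ, Matrix.mul_assoc]
    rw [this, one_add_single_mul, mul_one_add_single, mul_one_add_single]
  have g4 : Gen (fun t => (y' t 0 * φ * v' t 0) b1 a1) := by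
    refine ⟨((hy'c 0).mul (CDM.const φ)).mul (hv'c 0) _ _, ?_⟩
    simp only [hentry, if_true]
    obtain ⟨t, ht⟩ := two_choice (ψ b0 a1) (ψ b0 a0) hb0
    obtain ⟨s, hs⟩ := two_choice (ψ b1 a1 + ψ b1 a0 * t) (ψ b0 a1 + ψ b0 a0 * t)
      (by rw [mul_comm]; exact ht)
    exact ⟨(t, s), hs⟩
  obtain ⟨t, ht⟩ := ((g1.mul g4).mul ((Gen.prod Finset.univ _ (fun A _ => g2 A)).mul
    (Gen.prod Finset.univ _ (fun A _ => g3 A)))).2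
  simp only [mul_ne_zero_iff, Finset.prod_ne_zero_iff] at ht
  obtain ⟨⟨ht1, ht4⟩, ht2, ht3⟩ := ht
  have hsurj := hf3 t ht1
  have hz : ∀ A b a, l A a ≤ (b : Fin w) → (y' t A * φ * v' t A) b a = 0 := by
    intro A b a hab
    by_cases hA : A = 0
    · subst hA
      rw [hentry]
      have e1 : ψ b a = 0 := hcell b a hab
      have e2 : (if a = a1 then ψ b a0 * t.1 else 0) = 0 := by
        split_ifs with h
        · subst h
          have h3 : ψ b a0 = 0 := hb0' b (Fin.lt_def.mpr (by omega))
          rw [h3, zero_mul]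
        · rfl
      have e3 : (if b = b1 then t.2 * (ψ b0 a + if a = a1 then ψ b0 a0 * t.1 else 0) else 0) = 0 := by
        split_ifs with h h'
        · subst h'
          rw [h, hb1v] at hab
          omega
        · have haa : a < a1 := by
            by_contra hcon
            have := hl 0 (not_lt.mp hcon)
            rw [h, hb1v] at hab
            omega
          rw [hcell b0 a (ha1m a haa)]; simp
        · rfl
      rw [e1, e2, e3]; simp
    · have := congrFun (LinearMap.mem_ker.mp hφ) ⟨(A, b, a), hab⟩
      simp only [v', y', Function.update_of_ne hA]
      exact this
  let l' : Fin 3 → Fin r → ℕ := fun A a => if A = 0 ∧ a = a1 then l A a - 1 else l A a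
  refine ⟨l', ?_, ?_, ⟨v' t, y' t, ?_, ?_, ?_⟩, ?_⟩
  · intro A a a' haa
    have h1 := hl A haa
    simp only [l']
    split_ifs with h2 h3 h3
    · omega
    · omega
    · obtain ⟨rfl, rfl⟩ := h3
      have hlt : a < a1 := lt_of_le_of_ne haa (fun h => h2 ⟨rfl, h⟩)
      have := ha1m a hlt
      omega
    · exact h1
  · intro A a
    simp only [l']
    split_ifs <;> omega
  · exact fun A => isUnit_iff_ne_zero.mpr (ht2 A (Finset.mem_univ _))
  · exact fun A => isUnit_iff_ne_zero.mpr (ht3 A (Finset.mem_univ _))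
  · rw [Lm_surj_iff] at hsurj ⊢
    intro D
    obtain ⟨χ, hχ⟩ := hsurj D
    let c := (D 0 b1 a1 - (y' t 0 * χ * v' t 0) b1 a1) / (y' t 0 * φ * v' t 0) b1 a1
    refine ⟨χ + c • φ, ?_⟩
    intro A b a hab
    have hexp : (y' t A * (χ + c • φ) * v' t A) b a =
        (y' t A * χ * v' t A) b a + c * (y' t A * φ * v' t A) b a := by
      simp [Matrix.mul_add, Matrix.add_mul]
    rw [hexp]
    by_cases hc : l A a ≤ b
    · rw [hz A b a hc, hχ A b a hc, mul_zero, add_zero]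
    · simp only [l'] at hab
      split_ifs at hab with h2
      · obtain ⟨rfl, rfl⟩ := h2
        have hbb : b = b1 := by
          apply Fin.ext
          rw [hb1v]
          omega
        rw [hbb]
        simp only [c]
        rw [div_mul_cancel₀ _ ht4]
        ring
      · exact absurd hab hc
  · have h0 : ∀ A, (∑ a, l' A a) + (if A = 0 then 1 else 0) = ∑ a, l A a := by
      intro A
      split_ifs with hA
      · subst hA
        rw [← Finset.add_sum_erase _ _ (Finset.mem_univ a1), ← Finset.add_sum_erase _ (l 0) (Finset.mem_univ a1)]
        have : ∑ x ∈ Finset.univ.erase a1, l' 0 x = ∑ x ∈ Finset.univ.erase a1, l 0 x := by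
          apply Finset.sum_congr rfl
          intro x hx
          simp only [l']
          rw [if_neg]
          rintro ⟨-, rfl⟩
          simp at hx
        rw [this]
        simp only [l', and_self, if_true]
        omega
      · simp [l', hA]
    rw [← Finset.sum_congr rfl (fun A _ => h0 A), Finset.sum_add_distrib]
    simp

theorem th2 {r w : ℕ} : ∀ (k : ℕ) (l : Fin 3 → Fin r → ℕ), (∀ A, Monotone (l A)) →
    (∀ A a, l A a ≤ w) → TransL w l → 2 * (r * w) + k = ∑ A, ∑ a, l A a →
    ∃ l' : Fin 3 → Fin r → ℕ, (∀ A, Monotone (l' A)) ∧ (∀ A a, l' A a ≤ l A a) ∧ TransL w l' ∧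
      (∑ A, ∑ a, l' A a) = 2 * (r * w) := by
  intro k
  induction k with
  | zero => intro l h1 _ h3 h4; exact ⟨l, h1, fun _ _ => le_rfl, h3, by omega⟩
  | succ k ih =>
    intro l h1 h2 h3 h4
    obtain ⟨l1, g1, g2, g3, g4⟩ := th2_step h1 h2 h3 (by omega)
    obtain ⟨l2, f1, f2, f3, f4⟩ := ih l1 g1 (fun A a => (g2 A a).trans (h2 A a)) g3 (by omega)
    exact ⟨l2, f1, fun A a => (f2 A a).trans (g2 A a), f3, f4⟩

/-- the partition of a position -/
def lam {p r : ℕ} (F : Fin 3 → Fin p → Fin r) (A : Fin 3) (a : Fin p) : ℕ := (F A a : ℕ) - a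

/-- generic (transversal) positions -/
def TransP {p r : ℕ} (F : Fin 3 → Fin p → Fin r) : Prop := TransL (r - p) (lam F)

theorem strictMono_add_le {p r : ℕ} {F : Fin p → Fin r} (hF : StrictMono F) (a b : Fin p) (h : a ≤ b) :
    (F a : ℕ) + (b - a : ℕ) ≤ F b := by
  obtain ⟨b, hb⟩ := b
  induction b with
  | zero =>
    have : a = ⟨0, hb⟩ := le_antisymm h (Fin.le_def.mpr (Nat.zero_le _))
    subst this; simp
  | succ b ih =>
    rcases h.lt_or_eq with h | h
    · have h1 : (a : ℕ) < b + 1 := h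
      have h2 := ih (by omega) (Fin.le_def.mpr (Nat.le_of_lt_succ h1))
      have h3 : F ⟨b, by omega⟩ < F ⟨b + 1, hb⟩ := hF (Fin.lt_def.mpr (Nat.lt_succ_self b))
      have h4 : (F ⟨b, by omega⟩ : ℕ) < F ⟨b + 1, hb⟩ := h3
      simp only at h2 ⊢
      omega
    · subst h; simp

theorem le_strictMono {p r : ℕ} {F : Fin p → Fin r} (hF : StrictMono F) (a : Fin p) :
    (a : ℕ) ≤ F a := by
  have h0 : 0 < p := lt_of_le_of_lt (Nat.zero_le _) a.2
  have := strictMono_add_le hF ⟨0, h0⟩ a (Fin.le_def.mpr (Nat.zero_le _))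
  simp only at this
  omega

theorem lam_mono {p r : ℕ} {F : Fin 3 → Fin p → Fin r} (hF : ∀ A, StrictMono (F A)) (A : Fin 3) :
    Monotone (lam F A) := by
  intro a b hab
  have := strictMono_add_le (hF A) a b hab
  have h2 := le_strictMono (hF A) a
  have h3 : (a : ℕ) ≤ b := hab
  simp only [lam]
  omega

theorem lam_le {p r : ℕ} {F : Fin 3 → Fin p → Fin r} (hF : ∀ A, StrictMono (F A)) (A : Fin 3) (a : Fin p) :
    lam F A a ≤ r - p := by
  have hp : 0 < p := lt_of_le_of_lt (Nat.zero_le _) a.2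
  have := strictMono_add_le (hF A) a ⟨p - 1, by omega⟩ (Fin.le_def.mpr (by have := a.2; simp only; omega))
  have h2 := (F A ⟨p - 1, by omega⟩).2
  simp only at this
  simp only [lam]
  have := a.2
  omega

theorem lam_add {p r : ℕ} {F : Fin 3 → Fin p → Fin r} (hF : ∀ A, StrictMono (F A)) (A : Fin 3) (a : Fin p) :
    lam F A a + a = F A a := by
  have h2 := le_strictMono (hF A) a
  simp only [lam]; omega

/-- positions can be lowered to positions of expected dimension zero -/
theorem th2_pos {p r : ℕ} {F : Fin 3 → Fin p → Fin r} (hF : ∀ A, StrictMono (F A)) (hT : TransP F) :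
    ∃ F' : Fin 3 → Fin p → Fin r, (∀ A, StrictMono (F' A)) ∧ (∀ A a, F' A a ≤ F A a) ∧ TransP F' ∧
      (∑ A, ∑ a, lam F' A a) = 2 * (p * (r - p)) := by
  obtain ⟨v, y, hv, hy, hs⟩ := id hT
  obtain ⟨k, hk⟩ := Nat.exists_eq_add_of_le (surj_count hs)
  obtain ⟨l', h1, h2, h3, h4⟩ := th2 k (lam F) (lam_mono hF) (lam_le hF) hT hk.symm
  have hlt : ∀ A a, l' A a + a < r := by
    intro A a
    have := h2 A a
    have h5 := lam_add hF A a
    have := (F A a).2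
    omega
  let F' : Fin 3 → Fin p → Fin r := fun A a => ⟨l' A a + a, hlt A a⟩
  have hlam : lam F' = l' := by
    ext A a
    simp [lam, F']
  refine ⟨F', ?_, ?_, ?_, ?_⟩
  · intro A a b hab
    have := h1 A hab.le
    have h6 : (a : ℕ) < b := hab
    apply Fin.lt_def.mpr
    simp only [F']
    omega
  · intro A a
    have := h2 A a
    have h5 := lam_add hF A a
    apply Fin.le_def.mpr
    simp only [F']
    omega
  · rw [TransP, hlam]; exact h3
  · rw [hlam]; exact h4

end Th2


section Cell

/-- enumeration of a subset and its complement -/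
theorem exists_theta {r w n : ℕ} (hw : r + w = n) {I : Fin r → Fin n} (hI : StrictMono I) :
    ∃ θ : Fin r ⊕ Fin w ≃ Fin n, (∀ a, θ (Sum.inl a) = I a) ∧
      (∀ b a, θ (Sum.inr b) < I a ↔ (b : ℕ) < (I a : ℕ) - a) := by
  classical
  let s : Finset (Fin n) := Finset.univ.image I
  have hs : s.card = r := by
    rw [Finset.card_image_of_injective _ hI.injective]; simp
  have hs' : sᶜ.card = w := by
    rw [Finset.card_compl, hs, Fintype.card_fin]; omega
  let θ := finSumEquivOfFinset hs hs'
  have h1 : ∀ a, θ (Sum.inl a) = I a := by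
    intro a
    simp only [θ, finSumEquivOfFinset_inl]
    have := Finset.orderEmbOfFin_unique hs (f := I) (fun x => by simp [s]) hI
    rw [this]
  have hJ : StrictMono (fun b => θ (Sum.inr b)) := by
    intro b b' hb
    simp only [θ, finSumEquivOfFinset_inr]
    exact (sᶜ.orderEmbOfFin hs').strictMono hb
  have hcount : ∀ a, (Finset.univ.filter fun b : Fin w => θ (Sum.inr b) < I a).card = (I a : ℕ) - a := by
    intro a
    have h2 : ∑ x, (if θ x < I a then 1 else 0) = ∑ i : Fin n, (if i < I a then 1 else 0) :=
      Equiv.sum_comp θ (fun i => if i < I a then 1 else 0)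
    rw [Fintype.sum_sum_type] at h2
    simp only [h1, hI.lt_iff_lt] at h2
    simp only [← Finset.card_filter] at h2
    have h3 : (Finset.univ.filter fun i => i < a) = Finset.Iio a := by ext; simp
    have h4 : (Finset.univ.filter fun i => i < I a) = Finset.Iio (I a) := by ext; simp
    rw [h3, h4, Fin.card_Iio, Fin.card_Iio] at h2
    omega
  refine ⟨θ, h1, ?_⟩
  intro b a
  rw [← hcount a]
  constructor
  · intro h
    have : (Finset.Iic b).card ≤ (Finset.univ.filter fun b : Fin w => θ (Sum.inr b) < I a).card := by
      apply Finset.card_le_card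
      intro b' hb'
      simp only [Finset.mem_filter, Finset.mem_univ, true_and]
      exact lt_of_le_of_lt (hJ.monotone (by simpa using hb')) h
    rw [Fin.card_Iic] at this
    omega
  · intro h
    by_contra hcon
    have : (Finset.univ.filter fun b : Fin w => θ (Sum.inr b) < I a).card ≤ (Finset.Iio b).card := by
      apply Finset.card_le_card
      intro b' hb'
      simp only [Finset.mem_filter, Finset.mem_univ, true_and] at hb'
      simp only [Finset.mem_Iio]
      by_contra h5
      exact hcon (lt_of_le_of_lt (hJ.monotone (not_lt.mp h5)) hb')
    rw [Fin.card_Iio] at this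
    omega

/-- block-upper-triangular mask -/
def maskP {r w : ℕ} (x x' : Fin r ⊕ Fin w) : Bool := !(x.isRight && x'.isLeft)

abbrev IV (r w : ℕ) := ((Fin r ⊕ Fin w) × (Fin r ⊕ Fin w)) ⊕
  ((Fin 3 × (Fin r ⊕ Fin w) × (Fin r ⊕ Fin w)) ⊕ (Fin 3 × (Fin r ⊕ Fin w) × (Fin r ⊕ Fin w)))

variable {r w n : ℕ} (θ : Fin 3 → Fin r ⊕ Fin w ≃ Fin n)

def gM {R : Type*} (x : IV r w → R) : Matrix (Fin r ⊕ Fin w) (Fin r ⊕ Fin w) R :=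
  Matrix.of fun i j => x (Sum.inl (i, j))

def pM {R : Type*} [Zero R] (x : IV r w → R) (A : Fin 3) : Matrix (Fin r ⊕ Fin w) (Fin r ⊕ Fin w) R :=
  Matrix.of fun i j => if maskP i j then x (Sum.inr (Sum.inl (A, i, j))) else 0

def bM {R : Type*} [Zero R] (x : IV r w → R) (A : Fin 3) : Matrix (Fin r ⊕ Fin w) (Fin r ⊕ Fin w) R :=
  Matrix.of fun i j => if θ A i ≤ θ A j then x (Sum.inr (Sum.inr (A, i, j))) else 0

noncomputable def PsiM {R : Type*} [CommRing R] (x : IV r w → R) (A : Fin 3) :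
    Matrix (Fin r ⊕ Fin w) (Fin r ⊕ Fin w) R := gM x * pM x A * bM θ x A

noncomputable def Pmap (k : Fin 3 × (Fin r ⊕ Fin w) × (Fin r ⊕ Fin w)) : MvPolynomial (IV r w) ℂ :=
  PsiM θ (MvPolynomial.X : IV r w → MvPolynomial (IV r w) ℂ) k.1 k.2.1 k.2.2

theorem eval_Pmap (x : IV r w → ℂ) (k) :
    MvPolynomial.eval x (Pmap θ k) = PsiM θ x k.1 k.2.1 k.2.2 := by
  simp only [Pmap, PsiM, Matrix.mul_apply, map_sum, map_mul, gM, pM, bM, Matrix.of_apply]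
  simp only [apply_ite (MvPolynomial.eval x), MvPolynomial.eval_X, map_zero]

theorem gM_add (x h : IV r w → ℂ) (t : ℂ) : gM (x + t • h) = gM x + t • gM h := by
  ext i j; simp [gM]

theorem pM_add (x h : IV r w → ℂ) (t : ℂ) (A) : pM (x + t • h) A = pM x A + t • pM h A := by
  ext i j; simp only [pM, Matrix.of_apply, Matrix.add_apply, Matrix.smul_apply]; split_ifs <;> simp

theorem bM_add (x h : IV r w → ℂ) (t : ℂ) (A) : bM θ (x + t • h) A = bM θ x A + t • bM θ h A := by
  ext i j; simp only [bM, Matrix.of_apply, Matrix.add_apply, Matrix.smul_apply]; split_ifs <;> simp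

theorem fderiv_Psi (x h : IV r w → ℂ) (A i j) :
    fderiv ℂ (fun (x : IV r w → ℂ) k => MvPolynomial.eval x (Pmap θ k)) x h (A, i, j) =
      (gM h * pM x A * bM θ x A + gM x * pM h A * bM θ x A + gM x * pM x A * bM θ h A) i j := by
  have hcd : ContDiff ℂ ⊤ (fun (x : IV r w → ℂ) k => MvPolynomial.eval x (Pmap θ k)) :=
    contDiff_pi.mpr fun k => mvpoly_contDiff (Pmap θ k)
  have h1 := (hcd.differentiable (by simp) x).hasFDerivAt
  have h2 := h1.hasLineDerivAt h
  rw [HasLineDerivAt, hasDerivAt_pi] at h2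
  have h3 := h2 (A, i, j)
  have h4 : (fun t : ℂ => MvPolynomial.eval (x + t • h) (Pmap θ (A, i, j))) = fun t =>
      (gM x * pM x A * bM θ x A) i j +
      t * (gM h * pM x A * bM θ x A + gM x * pM h A * bM θ x A + gM x * pM x A * bM θ h A) i j +
      t ^ 2 * (gM h * pM h A * bM θ x A + gM h * pM x A * bM θ h A + gM x * pM h A * bM θ h A) i j +
      t ^ 3 * (gM h * pM h A * bM θ h A) i j := by
    funext t
    rw [eval_Pmap]
    simp only [PsiM, gM_add, pM_add, bM_add]
    simp only [Matrix.add_mul, Matrix.mul_add, Matrix.smul_mul, Matrix.mul_smul, Matrix.add_apply,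
      Matrix.smul_apply, smul_eq_mul, smul_add]
    ring
  rw [h4] at h3
  have h5 : ∀ c0 c1 c2 c3 : ℂ, HasDerivAt (fun t : ℂ => c0 + t * c1 + t ^ 2 * c2 + t ^ 3 * c3) c1 0 := by
    intro c0 c1 c2 c3
    have e1 := ((hasDerivAt_id (0:ℂ)).mul_const c1).const_add c0
    have e2 := ((hasDerivAt_id (0:ℂ)).pow 2).mul_const c2
    have e3 := ((hasDerivAt_id (0:ℂ)).pow 3).mul_const c3
    have h6 : HasDerivAt (fun t : ℂ => c0 + t * c1 + t ^ 2 * c2 + t ^ 3 * c3) _ 0 := (e1.add e2).add e3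
    exact h6.congr_deriv (by simp)
  exact h3.unique (h5 _ _ _ _)

end Cell


section Cell2

variable {r w n : ℕ} (θ : Fin 3 → Fin r ⊕ Fin w ≃ Fin n)

def mkx (G : Matrix (Fin r ⊕ Fin w) (Fin r ⊕ Fin w) ℂ)
    (P B : Fin 3 → Matrix (Fin r ⊕ Fin w) (Fin r ⊕ Fin w) ℂ) : IV r w → ℂ :=
  Sum.elim (fun z => G z.1 z.2) (Sum.elim (fun z => P z.1 z.2.1 z.2.2) (fun z => B z.1 z.2.1 z.2.2))

theorem gM_mkx (G : Matrix (Fin r ⊕ Fin w) (Fin r ⊕ Fin w) ℂ)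
    (P B : Fin 3 → Matrix (Fin r ⊕ Fin w) (Fin r ⊕ Fin w) ℂ) : gM (mkx G P B) = G := by
  ext i j; simp [gM, mkx]

theorem pM_mkx (G : Matrix (Fin r ⊕ Fin w) (Fin r ⊕ Fin w) ℂ)
    (P B : Fin 3 → Matrix (Fin r ⊕ Fin w) (Fin r ⊕ Fin w) ℂ) (A : Fin 3)
    (h : ∀ b a, P A (Sum.inr b) (Sum.inl a) = 0) : pM (mkx G P B) A = P A := by
  ext i j
  rcases i with i | i <;> rcases j with j | j <;> simp [pM, mkx, maskP, h]

theorem bM_mkx (G : Matrix (Fin r ⊕ Fin w) (Fin r ⊕ Fin w) ℂ)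
    (P B : Fin 3 → Matrix (Fin r ⊕ Fin w) (Fin r ⊕ Fin w) ℂ) (A : Fin 3)
    (h : (B A).BlockTriangular (θ A)) : bM θ (mkx G P B) A = B A := by
  ext i j
  simp only [bM, mkx, Matrix.of_apply, Sum.elim_inr]
  split_ifs with h1
  · rfl
  · exact (h (not_le.mp h1)).symm

theorem pM_lower (x : IV r w → ℂ) (A b a) : pM x A (Sum.inr b) (Sum.inl a) = 0 := by
  simp [pM, maskP]

theorem bM_tri (x : IV r w → ℂ) (A) : (bM θ x A).BlockTriangular (θ A) := by
  intro i j h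
  simp [bM, not_le.mpr h]

theorem submersion_of_trans {I : Fin 3 → Fin r → Fin n}
    (hθ1 : ∀ A a, θ A (Sum.inl a) = I A a)
    (hθ2 : ∀ A b a, θ A (Sum.inr b) < I A a ↔ (b : ℕ) < lam I A a)
    (hT : TransL w (lam I)) :
    ∃ x, Function.Surjective (fderiv ℂ (fun (x : IV r w → ℂ) k => MvPolynomial.eval x (Pmap θ k)) x) := by
  obtain ⟨v, y, hv, hy, hs⟩ := hT
  rw [Lm_surj_iff] at hs
  let P : Fin 3 → Matrix (Fin r ⊕ Fin w) (Fin r ⊕ Fin w) ℂ := fun A =>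
    Matrix.fromBlocks (v A) 0 0 (y A)⁻¹
  let x := mkx 1 P (fun _ => 1)
  have hg : gM x = 1 := gM_mkx _ _ _
  have hp : ∀ A, pM x A = P A := fun A => pM_mkx _ _ _ _ (by intro b a; simp [P])
  have hb : ∀ A, bM θ x A = 1 := fun A => bM_mkx θ _ _ _ _ Matrix.blockTriangular_one
  refine ⟨x, fun N => ?_⟩
  let NA : Fin 3 → Matrix (Fin r ⊕ Fin w) (Fin r ⊕ Fin w) ℂ := fun A => Matrix.of fun i j => N (A, i, j)
  obtain ⟨φ, hφ⟩ := hs (fun A => y A * (NA A).toBlocks₂₁)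
  let Z : Fin 3 → Matrix (Fin w) (Fin r) ℂ := fun A => y A * (NA A).toBlocks₂₁ - y A * φ * v A
  let h := mkx (Matrix.fromBlocks 0 0 φ 0)
    (fun A => Matrix.fromBlocks (NA A).toBlocks₁₁ (NA A).toBlocks₁₂ 0 (NA A).toBlocks₂₂)
    (fun A => Matrix.fromBlocks 0 0 (Z A) 0)
  have hg' : gM h = Matrix.fromBlocks 0 0 φ 0 := gM_mkx _ _ _
  have hp' : ∀ A, pM h A = Matrix.fromBlocks (NA A).toBlocks₁₁ (NA A).toBlocks₁₂ 0 (NA A).toBlocks₂₂ :=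
    fun A => pM_mkx _ _ _ _ (by intro b a; simp)
  have hb' : ∀ A, bM θ h A = Matrix.fromBlocks 0 0 (Z A) 0 := fun A => bM_mkx θ _ _ _ _ (by
    intro i j hij
    rcases i with i | i <;> rcases j with j | j <;> simp
    rw [hθ1] at hij
    have h1 : ¬ (i : ℕ) < lam I A j := by
      rw [← hθ2]; exact not_lt.mpr hij.le
    simp only [Z, Matrix.sub_apply]
    rw [hφ A i j (not_lt.mp h1), sub_self])
  refine ⟨h, ?_⟩
  funext ⟨A, i, j⟩
  rw [fderiv_Psi, hg, hp, hb, hg', hp', hb']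
  have hyz : (y A)⁻¹ * Z A = (NA A).toBlocks₂₁ - φ * v A := by
    simp only [Z, Matrix.mul_sub, Matrix.mul_assoc]
    rw [Matrix.nonsing_inv_mul_cancel_left _ _ (hy A), Matrix.nonsing_inv_mul_cancel_left _ _ (hy A)]
  have : Matrix.fromBlocks 0 0 φ 0 * P A * 1 + 1 * Matrix.fromBlocks (NA A).toBlocks₁₁ (NA A).toBlocks₁₂ 0 (NA A).toBlocks₂₂ * 1
      + 1 * P A * Matrix.fromBlocks 0 0 (Z A) 0 = NA A := by
    simp only [P, Matrix.mul_one, Matrix.one_mul, Matrix.fromBlocks_multiply, Matrix.fromBlocks_add, hyz]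
    conv_rhs => rw [← Matrix.fromBlocks_toBlocks (NA A)]
    simp
  rw [this]
  rfl

theorem inv_blocks (P : Matrix (Fin r) (Fin r) ℂ) (Q : Matrix (Fin r) (Fin w) ℂ) (S : Matrix (Fin w) (Fin w) ℂ)
    (hP : IsUnit P.det) (hS : IsUnit S.det) :
    (Matrix.fromBlocks P Q 0 S)⁻¹ = Matrix.fromBlocks P⁻¹ (-(P⁻¹ * Q * S⁻¹)) 0 S⁻¹ := by
  apply Matrix.inv_eq_left_inv
  rw [Matrix.fromBlocks_multiply, ← Matrix.fromBlocks_one]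
  simp [Matrix.nonsing_inv_mul _ hP, Matrix.nonsing_inv_mul _ hS, Matrix.mul_assoc]

theorem trans_of_submersion {I : Fin 3 → Fin r → Fin n}
    (hθ1 : ∀ A a, θ A (Sum.inl a) = I A a)
    (hθ2 : ∀ A b a, θ A (Sum.inr b) < I A a ↔ (b : ℕ) < lam I A a)
    (x : IV r w → ℂ) (hx : ∀ A, IsUnit (PsiM θ x A).det)
    (hs : Function.Surjective (fderiv ℂ (fun (x : IV r w → ℂ) k => MvPolynomial.eval x (Pmap θ k)) x)) :
    TransL w (lam I) := by
  have hdet : ∀ A, IsUnit (gM x).det ∧ IsUnit (pM x A).det ∧ IsUnit (bM θ x A).det := by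
    intro A
    have := hx A
    rw [PsiM, Matrix.det_mul, Matrix.det_mul, IsUnit.mul_iff, IsUnit.mul_iff] at this
    exact ⟨this.1.1, this.1.2, this.2⟩
  have hpb : ∀ A, pM x A = Matrix.fromBlocks (pM x A).toBlocks₁₁ (pM x A).toBlocks₁₂ 0 (pM x A).toBlocks₂₂ := by
    intro A
    conv_lhs => rw [← Matrix.fromBlocks_toBlocks (pM x A)]
    have h0 : (pM x A).toBlocks₂₁ = 0 := by
      ext b a
      exact pM_lower x A b a
    rw [h0]
  have hpd : ∀ A, IsUnit (pM x A).toBlocks₁₁.det ∧ IsUnit (pM x A).toBlocks₂₂.det := by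
    intro A
    have h1 := (hdet A).2.1
    rw [hpb A, Matrix.det_fromBlocks_zero₂₁, IsUnit.mul_iff] at h1
    exact h1
  refine ⟨fun A => (pM x A).toBlocks₁₁, fun A => (pM x A).toBlocks₂₂⁻¹, fun A => (hpd A).1, fun A => ?_, ?_⟩
  · exact Matrix.isUnit_nonsing_inv_det _ (hpd A).2
  rw [Lm_surj_iff]
  intro D
  let DB : Fin 3 → Matrix (Fin r ⊕ Fin w) (Fin r ⊕ Fin w) ℂ := fun A => Matrix.fromBlocks 0 0 (D A) 0
  obtain ⟨h, hh⟩ := hs (fun k => (gM x * pM x k.1 * DB k.1 * bM θ x k.1) k.2.1 k.2.2)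
  have hmat : ∀ A, gM h * pM x A * bM θ x A + gM x * pM h A * bM θ x A + gM x * pM x A * bM θ h A =
      gM x * pM x A * DB A * bM θ x A := by
    intro A
    ext i j
    have := congrFun hh (A, i, j)
    rw [fderiv_Psi] at this
    exact this
  let X := (gM x)⁻¹ * gM h
  refine ⟨X.toBlocks₂₁, ?_⟩
  intro A b a hab
  obtain ⟨hg, hp, hb⟩ := hdet A
  have hinv : (pM x A)⁻¹ * X * pM x A + (pM x A)⁻¹ * ((gM x)⁻¹ * gM x) * pM h A + bM θ h A * (bM θ x A)⁻¹ = DB A := by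
    have h1 := congrArg (fun M => (pM x A)⁻¹ * (gM x)⁻¹ * M * (bM θ x A)⁻¹) (hmat A)
    simp only [Matrix.mul_add, Matrix.add_mul, Matrix.mul_assoc] at h1
    rw [Matrix.mul_nonsing_inv _ hb] at h1
    simp only [Matrix.mul_one] at h1
    rw [Matrix.nonsing_inv_mul_cancel_left _ _ hg, Matrix.nonsing_inv_mul_cancel_left _ _ hg,
      Matrix.nonsing_inv_mul_cancel_left _ _ hp, Matrix.nonsing_inv_mul_cancel_left _ _ hg,
      Matrix.nonsing_inv_mul_cancel_left _ _ hp] at h1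
    simp only [X, Matrix.mul_assoc]
    rw [Matrix.nonsing_inv_mul_cancel_left _ _ hg]
    exact h1
  rw [Matrix.nonsing_inv_mul _ hg, Matrix.mul_one] at hinv
  have h11 := (hpd A).1
  have h22 := (hpd A).2
  have hpi : (pM x A)⁻¹ = Matrix.fromBlocks (pM x A).toBlocks₁₁⁻¹
      (-((pM x A).toBlocks₁₁⁻¹ * (pM x A).toBlocks₁₂ * (pM x A).toBlocks₂₂⁻¹)) 0 (pM x A).toBlocks₂₂⁻¹ := by
    have h3 := congrArg Inv.inv (hpb A)
    rw [inv_blocks _ _ _ h11 h22] at h3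
    exact h3
  have hent := congrFun (congrFun hinv (Sum.inr b)) (Sum.inl a)
  have e3 : (bM θ h A * (bM θ x A)⁻¹) (Sum.inr b) (Sum.inl a) = 0 := by
    have : Invertible (bM θ x A) := Matrix.invertibleOfIsUnitDet _ hb
    have htri := (bM_tri θ h A).mul (Matrix.blockTriangular_inv_of_blockTriangular (bM_tri θ x A))
    apply htri
    rw [hθ1]
    have h1 : ¬ θ A (Sum.inr b) < I A a := by rw [hθ2]; exact not_lt.mpr hab
    apply lt_of_le_of_ne (not_lt.mp h1)
    rw [← hθ1]
    intro h2
    have := (θ A).injective h2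
    simp at this
  have e2 : ((pM x A)⁻¹ * pM h A) (Sum.inr b) (Sum.inl a) = 0 := by
    rw [hpi, Matrix.mul_apply, Fintype.sum_sum_type]
    simp [pM_lower]
  have e1 : ((pM x A)⁻¹ * X * pM x A) (Sum.inr b) (Sum.inl a) =
      ((pM x A).toBlocks₂₂⁻¹ * X.toBlocks₂₁ * (pM x A).toBlocks₁₁) b a := by
    rw [hpi]
    conv_lhs => rw [hpb A, ← Matrix.fromBlocks_toBlocks X]
    rw [Matrix.fromBlocks_multiply, Matrix.fromBlocks_multiply, Matrix.fromBlocks_apply₂₁]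
    simp
  rw [Matrix.add_apply, Matrix.add_apply, e1, e2, e3] at hent
  simpa [DB] using hent

end Cell2


section Cell3

/-- closed-position data -/
def ClosPos {r n : ℕ} (v : Fin 3 → Matrix (Fin n) (Fin n) ℂ) (I : Fin 3 → Fin r → Fin n) : Prop :=
  ∃ (m : Matrix (Fin n) (Fin r) ℂ) (k : Matrix (Fin r) (Fin n) ℂ) (u : Fin 3 → Matrix (Fin r) (Fin r) ℂ)
    (e : Fin 3 → Matrix (Fin n) (Fin r) ℂ), k * m = 1 ∧ ∀ A, IsUnit (u A).det ∧ Pat (I A) (e A) ∧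
      m * u A = v A * e A

/-- exact-position data -/
def ExPos {r n : ℕ} (v : Fin 3 → Matrix (Fin n) (Fin n) ℂ) (I : Fin 3 → Fin r → Fin n)
    (m : Matrix (Fin n) (Fin r) ℂ) : Prop :=
  ∃ (u : Fin 3 → Matrix (Fin r) (Fin r) ℂ)
    (e : Fin 3 → Matrix (Fin n) (Fin r) ℂ), ∀ A, IsUnit (u A).det ∧ Pat (I A) (e A) ∧
      (∀ c, e A (I A c) c ≠ 0) ∧ m * u A = v A * e A

variable {r w n : ℕ}

theorem complete_ech (θ : Fin r ⊕ Fin w ≃ Fin n) {I : Fin r → Fin n} (hθ : ∀ a, θ (Sum.inl a) = I a)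
    {e : Matrix (Fin n) (Fin r) ℂ} (h1 : Pat I e) (h2 : ∀ c, e (I c) c ≠ 0) :
    ∃ c : Matrix (Fin r ⊕ Fin w) (Fin r ⊕ Fin w) ℂ, (∀ x a, c x (Sum.inl a) = e (θ x) a) ∧
      c.BlockTriangular θ ∧ IsUnit c.det := by
  classical
  let c : Matrix (Fin r ⊕ Fin w) (Fin r ⊕ Fin w) ℂ := Matrix.of fun x =>
    Sum.elim (fun a => e (θ x) a) (fun b => if x = Sum.inr b then 1 else 0)
  have hc : c.BlockTriangular θ := by
    intro i j hij
    rcases j with a | b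
    · simp only [c, Matrix.of_apply, Sum.elim_inl]
      apply h1
      rw [← hθ]; exact hij
    · simp only [c, Matrix.of_apply, Sum.elim_inr]
      rw [if_neg]
      rintro rfl
      exact lt_irrefl _ hij
  refine ⟨c, fun x a => rfl, hc, ?_⟩
  rw [← Matrix.det_submatrix_equiv_self θ.symm c, Matrix.det_of_upperTriangular]
  · rw [isUnit_iff_ne_zero, Finset.prod_ne_zero_iff]
    intro i _
    obtain ⟨x, rfl⟩ := θ.surjective i
    simp only [Matrix.submatrix_apply, Equiv.symm_apply_apply]
    rcases x with a | b
    · simp only [c, Matrix.of_apply, Sum.elim_inl, hθ]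
      exact h2 a
    · simp [c]
  · intro i j hij
    apply hc
    simpa using hij

theorem image_of_exPos (θ : Fin 3 → Fin r ⊕ Fin w ≃ Fin n) (τ : Fin r ⊕ Fin w ≃ Fin n)
    (hw : r + w = n) {I : Fin 3 → Fin r → Fin n}
    (hθ1 : ∀ A a, θ A (Sum.inl a) = I A a) (v : Fin 3 → Matrix (Fin n) (Fin n) ℂ)
    (m : Matrix (Fin n) (Fin r) ℂ) (hm : ∀ x, m *ᵥ x = 0 → x = 0) (hex : ExPos v I m) :
    ∃ x, ∀ A, PsiM θ x A = (v A).submatrix τ (θ A) := by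
  classical
  obtain ⟨u, e, h⟩ := hex
  obtain ⟨F0, e0, u0, hF0, hp0, hd0, hu0, hmu0⟩ := exists_ech m hm
  obtain ⟨θ0, hθ01, -⟩ := exists_theta hw hF0
  obtain ⟨c0, hc0, -, hc0u⟩ := complete_ech θ0 hθ01 hp0 hd0
  choose c hc hct hcu using fun A => complete_ech (θ A) (hθ1 A) (h A).2.1 (h A).2.2.1
  let G := c0.submatrix (τ.trans θ0.symm) id
  have hG : IsUnit G.det := by
    rw [← Matrix.isUnit_iff_isUnit_det]
    exact (Matrix.isUnit_submatrix_equiv (τ.trans θ0.symm) (Equiv.refl _)).mpr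
      ((Matrix.isUnit_iff_isUnit_det _).mpr hc0u)
  let V := fun A => (v A).submatrix τ (θ A)
  have key : ∀ A, (V A * c A).submatrix id Sum.inl = G.submatrix id Sum.inl * (u0⁻¹ * u A) := by
    intro A
    have e1 : (V A * c A).submatrix id Sum.inl = (v A * e A).submatrix τ id := by
      ext x a
      simp only [V, Matrix.submatrix_apply, Matrix.mul_apply, id, hc]
      exact Equiv.sum_comp (θ A) (fun j => v A (τ x) j * e A j a)
    have e2 : G.submatrix id Sum.inl = (m * u0).submatrix τ id := by
      ext x a
      simp [G, hc0, hmu0]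
    rw [e1, ← (h A).2.2.2, e2]
    have : m * u A = (m * u0) * (u0⁻¹ * u A) := by
      rw [Matrix.mul_assoc, Matrix.mul_nonsing_inv_cancel_left _ _ hu0]
    rw [this]
    ext x a
    simp [Matrix.mul_apply]
  let P := fun A => G⁻¹ * (V A * c A)
  have hP : ∀ A b a, P A (Sum.inr b) (Sum.inl a) = 0 := by
    intro A b a
    have e1 : (P A).submatrix id Sum.inl = (G⁻¹ * G).submatrix id Sum.inl * (u0⁻¹ * u A) := by
      have : (P A).submatrix id Sum.inl = G⁻¹ * (V A * c A).submatrix id Sum.inl := by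
        ext x y; simp [P, Matrix.mul_apply]
      rw [this, key A, ← Matrix.mul_assoc]
      congr 1
    have e2 := congrFun (congrFun e1 (Sum.inr b)) a
    rw [Matrix.nonsing_inv_mul _ hG, Matrix.mul_apply] at e2
    simpa [Matrix.one_apply] using e2
  let B := fun A => (c A)⁻¹
  refine ⟨mkx G P B, fun A => ?_⟩
  rw [PsiM, gM_mkx, pM_mkx _ _ _ _ (hP A), bM_mkx]
  · simp only [P, B, Matrix.mul_assoc]
    rw [Matrix.mul_nonsing_inv_cancel_left _ _ hG, Matrix.mul_nonsing_inv _ (hcu A), Matrix.mul_one]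
  · have : Invertible (c A) := Matrix.invertibleOfIsUnitDet _ (hcu A)
    exact Matrix.blockTriangular_inv_of_blockTriangular (hct A)

theorem closPos_of_image (θ : Fin 3 → Fin r ⊕ Fin w ≃ Fin n) (τ : Fin r ⊕ Fin w ≃ Fin n)
    {I : Fin 3 → Fin r → Fin n}
    (hθ1 : ∀ A a, θ A (Sum.inl a) = I A a) (v : Fin 3 → Matrix (Fin n) (Fin n) ℂ)
    (hv : ∀ A, IsUnit (v A).det) (x)
    (hx : ∀ A, PsiM θ x A = (v A).submatrix τ (θ A)) : ClosPos v I := by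
  have hdet : ∀ A, IsUnit (gM x).det ∧ IsUnit (pM x A).det ∧ IsUnit (bM θ x A).det := by
    intro A
    have : IsUnit (PsiM θ x A).det := by
      rw [hx A, ← Matrix.isUnit_iff_isUnit_det]
      exact (Matrix.isUnit_submatrix_equiv _ _).mpr ((Matrix.isUnit_iff_isUnit_det _).mpr (hv A))
    rw [PsiM, Matrix.det_mul, Matrix.det_mul, IsUnit.mul_iff, IsUnit.mul_iff] at this
    exact ⟨this.1.1, this.1.2, this.2⟩
  refine ⟨(gM x).submatrix τ.symm Sum.inl, (gM x)⁻¹.submatrix Sum.inl τ.symm,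
    fun A => (pM x A).toBlocks₁₁, fun A => (bM θ x A)⁻¹.submatrix (θ A).symm Sum.inl, ?_, ?_⟩
  · rw [Matrix.submatrix_mul_equiv, Matrix.nonsing_inv_mul _ (hdet 0).1]
    ext a b; simp [Matrix.one_apply]
  intro A
  obtain ⟨hg, hp, hb⟩ := hdet A
  refine ⟨?_, ?_, ?_⟩
  · have h0 : (pM x A).toBlocks₂₁ = 0 := by
      ext b a
      exact pM_lower x A b a
    rw [← Matrix.fromBlocks_toBlocks (pM x A), h0, Matrix.det_fromBlocks_zero₂₁, IsUnit.mul_iff] at hp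
    exact hp.1
  · intro a c hac
    have : Invertible (bM θ x A) := Matrix.invertibleOfIsUnitDet _ hb
    apply Matrix.blockTriangular_inv_of_blockTriangular (bM_tri θ x A)
    rw [hθ1]; simpa using hac
  · have h1 : gM x * pM x A = (v A).submatrix τ (θ A) * (bM θ x A)⁻¹ := by
      rw [← hx A, PsiM, Matrix.mul_assoc, Matrix.mul_nonsing_inv _ hb, Matrix.mul_one]
    ext i a
    have h2 := congrFun (congrFun h1 (τ.symm i)) (Sum.inl a)
    rw [Matrix.mul_apply, Fintype.sum_sum_type] at h2
    simp only [pM_lower, mul_zero, Finset.sum_const_zero, add_zero] at h2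
    rw [Matrix.mul_apply]
    simp only [Matrix.submatrix_apply, Matrix.toBlocks₁₁, Matrix.of_apply]
    rw [h2, Matrix.mul_apply, Matrix.mul_apply]
    rw [← Equiv.sum_comp (θ A)]
    simp

end Cell3


section QR
open scoped ComplexOrder

theorem posdef_chol {r : ℕ} {S : Matrix (Fin r) (Fin r) ℂ} (hS : S.PosDef) :
    ∃ t : Matrix (Fin r) (Fin r) ℂ, t.BlockTriangular id ∧ IsUnit t.det ∧ tᴴ * S * t = 1 := by
  have hL := LDL.diag_eq_lowerInv_conj hS
  set L := LDL.lowerInv hS with hLdef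
  have hinv : Invertible L := LDL.invertibleLowerInv hS
  have hLu : IsUnit L := isUnit_of_invertible L
  have hpd : (LDL.diag hS).PosDef := by
    rw [hL]
    have := (Matrix.IsUnit.posDef_star_right_conjugate_iff hLu (x := S)).mpr hS
    simpa [Matrix.star_eq_conjTranspose] using this
  have hd : ∀ i, 0 < LDL.diagEntries hS i := by
    rw [LDL.diag, Matrix.posDef_diagonal_iff] at hpd
    exact hpd
  have hd' : ∀ i, (0 < (LDL.diagEntries hS i).re) ∧ (((LDL.diagEntries hS i).re : ℝ) : ℂ) = LDL.diagEntries hS i := by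
    intro i
    have := hd i
    rw [Complex.lt_def] at this
    refine ⟨by simpa using this.1, ?_⟩
    apply Complex.ext <;> simp [← this.2]
  let s : Fin r → ℝ := fun i => (Real.sqrt (LDL.diagEntries hS i).re)⁻¹
  have hs : ∀ i, s i ≠ 0 := fun i => inv_ne_zero (Real.sqrt_ne_zero'.mpr (hd' i).1)
  refine ⟨Lᴴ * Matrix.diagonal (fun i => (s i : ℂ)), ?_, ?_, ?_⟩
  · intro i j hij
    rw [Matrix.mul_diagonal, Matrix.conjTranspose_apply]
    rw [hLdef, LDL.lowerInv_triangular hS (show j < i from hij)]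
    simp
  · rw [Matrix.det_mul, Matrix.det_diagonal, Matrix.det_conjTranspose]
    apply IsUnit.mul
    · exact ((Matrix.isUnit_iff_isUnit_det L).mp hLu).star
    · rw [isUnit_iff_ne_zero, Finset.prod_ne_zero_iff]
      intro i _
      exact_mod_cast hs i
  · rw [Matrix.conjTranspose_mul, Matrix.conjTranspose_conjTranspose]
    have : (Matrix.diagonal fun i => (s i : ℂ))ᴴ * L * S * (Lᴴ * Matrix.diagonal fun i => (s i : ℂ)) =
      (Matrix.diagonal fun i => (s i : ℂ))ᴴ * (L * S * Lᴴ) * Matrix.diagonal fun i => (s i : ℂ) := by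
      simp only [Matrix.mul_assoc]
    rw [this, ← hL, LDL.diag, Matrix.diagonal_conjTranspose, Matrix.diagonal_mul_diagonal,
      Matrix.diagonal_mul_diagonal, ← Matrix.diagonal_one]
    congr 1
    funext i
    rw [← (hd' i).2]
    simp only [Pi.star_apply, s, Complex.star_def, Complex.conj_ofReal]
    norm_cast
    have h1 := Real.mul_self_sqrt (hd' i).1.le
    have h2 : Real.sqrt (LDL.diagEntries hS i).re ≠ 0 := Real.sqrt_ne_zero'.mpr (hd' i).1
    field_simp
    nlinarith

theorem qr_exists {n r : ℕ} (m : Matrix (Fin n) (Fin r) ℂ) (hm : ∀ x, m *ᵥ x = 0 → x = 0) :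
    ∃ t : Matrix (Fin r) (Fin r) ℂ, t.BlockTriangular id ∧ IsUnit t.det ∧ (m * t)ᴴ * (m * t) = 1 := by
  have hinj : Function.Injective m.mulVec := by
    intro x y hxy
    have := hm (x - y) (by rw [Matrix.mulVec_sub]; exact sub_eq_zero.mpr hxy)
    exact sub_eq_zero.mp this
  obtain ⟨t, h1, h2, h3⟩ := posdef_chol (Matrix.PosDef.conjTranspose_mul_self m hinj)
  refine ⟨t, h1, h2, ?_⟩
  rw [Matrix.conjTranspose_mul, ← h3]
  simp only [Matrix.mul_assoc]

theorem Pat.mul_tri {p r : ℕ} {F : Fin p → Fin r} (hF : StrictMono F) {e : Matrix (Fin r) (Fin p) ℂ}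
    (h1 : Pat F e) {t : Matrix (Fin p) (Fin p) ℂ} (ht : t.BlockTriangular id) : Pat F (e * t) := by
  intro a c hac
  rw [Matrix.mul_apply]
  apply Finset.sum_eq_zero
  intro d _
  rcases le_or_gt d c with h | h
  · rw [h1 a d (lt_of_le_of_lt (hF.monotone h) hac), zero_mul]
  · rw [ht (show id c < id d from h), mul_zero]

theorem isCompact_orth {n r : ℕ} : IsCompact {q : Fin n → Fin r → ℂ | (Matrix.of q)ᴴ * Matrix.of q = 1} := by
  rw [Metric.isCompact_iff_isClosed_bounded]
  constructor
  · apply isClosed_eq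
    · apply Continuous.matrix_mul
      · apply Continuous.matrix_conjTranspose; exact continuous_id
      · exact continuous_id
    · exact continuous_const
  · apply (Metric.isBounded_closedBall (x := (0 : Fin n → Fin r → ℂ)) (r := 1)).subset
    intro q hq
    simp only [mem_closedBall_zero_iff]
    rw [pi_norm_le_iff_of_nonneg zero_le_one]
    intro i
    rw [pi_norm_le_iff_of_nonneg zero_le_one]
    intro j
    have h1 := congrFun (congrFun hq j) j
    rw [Matrix.mul_apply, Matrix.one_apply_eq] at h1
    simp only [Matrix.conjTranspose_apply, Matrix.of_apply, Complex.star_def] at h1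
    have h2 : ∑ x, ‖q x j‖ ^ 2 = 1 := by
      have h3 : ∀ x, (starRingEnd ℂ) (q x j) * q x j = ((‖q x j‖ ^ 2 : ℝ) : ℂ) := by
        intro x
        rw [mul_comm, Complex.mul_conj, Complex.normSq_eq_norm_sq]
      simp only [h3] at h1
      exact_mod_cast h1
    have h4 : ‖q i j‖ ^ 2 ≤ 1 := by
      rw [← h2]
      exact Finset.single_le_sum (f := fun x => ‖q x j‖ ^ 2) (fun x _ => by positivity) (Finset.mem_univ i)
    nlinarith [norm_nonneg (q i j)]

end QR


section Th4

/-- the space of triples of matrices -/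
abbrev VS (n : ℕ) := Fin 3 → Fin n → Fin n → ℂ

def toM {n : ℕ} (v : VS n) (A : Fin 3) : Matrix (Fin n) (Fin n) ℂ := Matrix.of (v A)

/-- orthonormal form of closed position -/
def OrthPos {r n : ℕ} (v : Fin 3 → Matrix (Fin n) (Fin n) ℂ) (I : Fin 3 → Fin r → Fin n) : Prop :=
  ∃ q : Fin 3 → Matrix (Fin n) (Fin r) ℂ, (∀ A, (q A)ᴴ * q A = 1) ∧ (∀ A, q 0 * ((q 0)ᴴ * q A) = q A) ∧
    ∀ A, Pat (I A) ((v A).adjugate * q A)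

variable {r n : ℕ}

theorem cdm_toM (A : Fin 3) : CDM (fun v : VS n => toM v A) := by
  intro i j
  simp only [toM, Matrix.of_apply]
  fun_prop

theorem gen_eval (θ : Fin 3 → Fin r ⊕ Fin (n - r) ≃ Fin n)
    (B : MvPolynomial (Fin 3 × (Fin r ⊕ Fin (n - r)) × (Fin r ⊕ Fin (n - r))) ℂ) (hB : B ≠ 0) :
    Gen (fun v : VS n => MvPolynomial.eval
      (fun k => (toM v k.1).submatrix (θ 0) (θ k.1) k.2.1 k.2.2) B) := by
  constructor
  · have h1 := mvpoly_contDiff B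
    have h2 : ContDiff ℂ ⊤ (fun (v : VS n) (k : Fin 3 × (Fin r ⊕ Fin (n - r)) × (Fin r ⊕ Fin (n - r))) =>
        (toM v k.1).submatrix (θ 0) (θ k.1) k.2.1 k.2.2) := by
      rw [contDiff_pi]
      intro k
      exact cdm_toM k.1 _ _
    exact h1.comp h2
  · obtain ⟨y, hy⟩ := (mvpoly_dense B hB).2.nonempty
    refine ⟨fun A i j => y (A, (θ 0).symm i, (θ A).symm j), ?_⟩
    simpa [toM] using hy

theorem gen_det (A : Fin 3) : Gen (fun v : VS n => (toM v A).det) := by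
  refine ⟨contDiff_det _ (cdm_toM A), fun _ => (1 : Matrix (Fin n) (Fin n) ℂ), ?_⟩
  change (1 : Matrix (Fin n) (Fin n) ℂ).det ≠ 0
  simp

theorem th4b (hr : r ≤ n) {I : Fin 3 → Fin r → Fin n} (hI : ∀ A, StrictMono (I A)) (hT : ¬ TransP I) :
    ∃ f : VS n → ℂ, Gen f ∧ ∀ v, f v ≠ 0 → ∀ m, (∀ x, m *ᵥ x = 0 → x = 0) → ¬ ExPos (toM v) I m := by
  classical
  have hw : r + (n - r) = n := by omega
  choose θ hθ1 hθ2 using fun A => exists_theta hw (hI A)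
  by_cases hai : AlgebraicIndependent ℂ (Pmap θ)
  · exfalso
    let b : MvPolynomial (Fin 3 × (Fin r ⊕ Fin (n - r)) × (Fin r ⊕ Fin (n - r))) ℂ :=
      ∏ A : Fin 3, (Matrix.of fun i j => (MvPolynomial.X (A, i, j) : MvPolynomial _ ℂ)).det
    have hev : ∀ y : (Fin 3 × (Fin r ⊕ Fin (n - r)) × (Fin r ⊕ Fin (n - r))) → ℂ,
        MvPolynomial.eval y b = ∏ A : Fin 3, (Matrix.of fun i j => y (A, i, j)).det := by
      intro y
      simp only [b, map_prod]
      apply Finset.prod_congr rfl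
      intro A _
      rw [RingHom.map_det]
      congr 1
      ext i j
      simp
    have hb : b ≠ 0 := by
      intro h0
      have h1 := hev (fun k => (1 : Matrix (Fin r ⊕ Fin (n - r)) (Fin r ⊕ Fin (n - r)) ℂ) k.2.1 k.2.2)
      rw [h0, map_zero] at h1
      have h2 : ∀ A : Fin 3, (Matrix.of fun i j => (1 : Matrix (Fin r ⊕ Fin (n - r)) (Fin r ⊕ Fin (n - r)) ℂ) i j).det = 1 :=
        fun A => Matrix.det_one
      rw [Finset.prod_congr rfl (fun A _ => h2 A)] at h1
      simp at h1
    obtain ⟨x, hx1, hx2⟩ := poly_submersion (Pmap θ) hai b hb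
    apply hT
    refine trans_of_submersion θ hθ1 hθ2 x ?_ hx2
    intro A
    rw [hev, Finset.prod_ne_zero_iff] at hx1
    have := hx1 A (Finset.mem_univ _)
    simp only [eval_Pmap] at this
    exact isUnit_iff_ne_zero.mpr this
  · rw [algebraicIndependent_iff] at hai
    push Not at hai
    obtain ⟨B, hB0, hB⟩ := hai
    refine ⟨_, gen_eval θ B hB, ?_⟩
    intro v hv m hm hex
    apply hv
    obtain ⟨x, hx⟩ := image_of_exPos θ (θ 0) hw hθ1 (toM v) m hm hex
    have h1 : (fun k : Fin 3 × (Fin r ⊕ Fin (n - r)) × (Fin r ⊕ Fin (n - r)) =>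
        (toM v k.1).submatrix (θ 0) (θ k.1) k.2.1 k.2.2) = fun k => MvPolynomial.eval x (Pmap θ k) := by
      funext k
      rw [eval_Pmap, hx]
    rw [h1]
    have h2 := congrArg (MvPolynomial.eval x) hB0
    rw [map_zero] at h2
    rw [← h2]
    have h3 := MvPolynomial.comp_aeval_apply (f := Pmap θ) (MvPolynomial.aeval x : MvPolynomial (IV r (n-r)) ℂ →ₐ[ℂ] ℂ) B
    simp only [MvPolynomial.aeval_eq_eval] at h3
    exact h3.symm

theorem orthPos_of_closPos {v : Fin 3 → Matrix (Fin n) (Fin n) ℂ}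
    {I : Fin 3 → Fin r → Fin n} (hI : ∀ A, StrictMono (I A)) (h : ClosPos v I) : OrthPos v I := by
  obtain ⟨m, k, u, e, hk, h⟩ := h
  have hinj : ∀ A x, (m * u A) *ᵥ x = 0 → x = 0 := by
    intro A x hx
    have h1 := congrArg (fun y => (u A)⁻¹ *ᵥ (k *ᵥ y)) hx
    simp only [Matrix.mulVec_mulVec, Matrix.mulVec_zero] at h1
    have : (u A)⁻¹ * (k * (m * u A)) = 1 := by
      rw [← Matrix.mul_assoc k, hk, Matrix.one_mul, Matrix.nonsing_inv_mul _ (h A).1]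
    rw [this, Matrix.one_mulVec] at h1
    exact h1
  choose t ht1 ht2 ht3 using fun A => qr_exists (m * u A) (hinj A)
  refine ⟨fun A => m * u A * t A, ht3, ?_, ?_⟩
  · intro A
    have h1 : m * u A * t A = m * u 0 * t 0 * ((t 0)⁻¹ * ((u 0)⁻¹ * (u A * t A))) := by
      simp only [Matrix.mul_assoc]
      rw [Matrix.mul_nonsing_inv_cancel_left _ _ (ht2 0), Matrix.mul_nonsing_inv_cancel_left _ _ (h 0).1]
    change m * u 0 * t 0 * ((m * u 0 * t 0)ᴴ * (m * u A * t A)) = m * u A * t A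
    rw [h1, ← Matrix.mul_assoc _ (m * u 0 * t 0) , ht3, Matrix.one_mul]
  · intro A
    have h1 : (v A).adjugate * (m * u A * t A) = (v A).det • (e A * t A) := by
      rw [(h A).2.2, ← Matrix.mul_assoc, ← Matrix.mul_assoc, Matrix.adjugate_mul, Matrix.smul_mul,
        Matrix.one_mul, Matrix.smul_mul]
    rw [h1]
    intro a c hac
    rw [Matrix.smul_apply, Pat.mul_tri (hI A) (h A).2.1 (ht1 A) a c hac, smul_zero]

theorem closPos_of_orthPos {v : Fin 3 → Matrix (Fin n) (Fin n) ℂ} (hv : ∀ A, IsUnit (v A).det)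
    {I : Fin 3 → Fin r → Fin n} (h : OrthPos v I) : ClosPos v I := by
  obtain ⟨q, h1, h2, h3⟩ := h
  refine ⟨q 0, (q 0)ᴴ, fun A => (q 0)ᴴ * q A, fun A => (v A)⁻¹ * q A, h1 0, fun A => ⟨?_, ?_, ?_⟩⟩
  · have h4 : ((q 0)ᴴ * q A)ᴴ * ((q 0)ᴴ * q A) = 1 := by
      rw [Matrix.conjTranspose_mul, Matrix.conjTranspose_conjTranspose, Matrix.mul_assoc, h2, h1]
    have h5 := congrArg Matrix.det h4
    rw [Matrix.det_mul, Matrix.det_one] at h5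
    exact IsUnit.of_mul_eq_one_right _ h5
  · intro a c hac
    have h4 := h3 A a c hac
    change ((v A)⁻¹ * q A) a c = 0
    rw [Matrix.inv_def, Matrix.smul_mul, Matrix.smul_apply, h4, smul_zero]
  · rw [h2, Matrix.mul_nonsing_inv_cancel_left _ _ (hv A)]

theorem isClosed_orthPos (I : Fin 3 → Fin r → Fin n) : IsClosed {v : VS n | OrthPos (toM v) I} := by
  let K := {q : Fin n → Fin r → ℂ | (Matrix.of q)ᴴ * Matrix.of q = 1}
  have hK : IsCompact K := isCompact_orth
  have : CompactSpace K := isCompact_iff_compactSpace.mp hK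
  let Q : (Fin 3 → K) → Fin 3 → Matrix (Fin n) (Fin r) ℂ := fun q A => Matrix.of (q A : Fin n → Fin r → ℂ)
  have hQ : ∀ A, Continuous (fun z : VS n × (Fin 3 → K) => Q z.2 A) := by
    intro A
    have h1 : Continuous (fun z : VS n × (Fin 3 → K) => z.2 A) := (continuous_apply A).comp continuous_snd
    exact Continuous.subtype_val h1
  have hV : ∀ A, Continuous (fun z : VS n × (Fin 3 → K) => toM z.1 A) := by
    intro A
    exact (continuous_apply A).comp continuous_fst
  let S := {z : VS n × (Fin 3 → K) | (∀ A, Q z.2 0 * ((Q z.2 0)ᴴ * Q z.2 A) = Q z.2 A) ∧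
    ∀ A a c, I A c < a → ((toM z.1 A).adjugate * Q z.2 A) a c = 0}
  have hS : IsClosed S := by
    have e1 : IsClosed (⋂ A, {z : VS n × (Fin 3 → K) | Q z.2 0 * ((Q z.2 0)ᴴ * Q z.2 A) = Q z.2 A}) := by
      apply isClosed_iInter
      intro A
      apply isClosed_eq
      · exact (hQ 0).matrix_mul ((hQ 0).matrix_conjTranspose.matrix_mul (hQ A))
      · exact hQ A
    have e2 : IsClosed (⋂ A, ⋂ a, ⋂ c, ⋂ (_ : I A c < a),
        {z : VS n × (Fin 3 → K) | ((toM z.1 A).adjugate * Q z.2 A) a c = 0}) := by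
      apply isClosed_iInter; intro A
      apply isClosed_iInter; intro a
      apply isClosed_iInter; intro c
      apply isClosed_iInter; intro _
      apply isClosed_eq _ continuous_const
      exact ((hV A).matrix_adjugate.matrix_mul (hQ A)).matrix_elem a c
    convert e1.inter e2 using 1
    ext z
    simp [S]
  have h1 := isClosedMap_fst_of_compactSpace (X := VS n) (Y := Fin 3 → K) S hS
  convert h1 using 1
  ext v
  constructor
  · rintro ⟨q, h1, h2, h3⟩
    exact ⟨(v, fun A => ⟨q A, h1 A⟩), ⟨h2, h3⟩, rfl⟩
  · rintro ⟨⟨v', q⟩, ⟨h2, h3⟩, rfl⟩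
    exact ⟨Q q, fun A => (q A).2, h2, h3⟩

theorem th4a (hr : r ≤ n) {I : Fin 3 → Fin r → Fin n} (hI : ∀ A, StrictMono (I A)) (hT : TransP I)
    (v : VS n) : OrthPos (toM v) I := by
  classical
  have hw : r + (n - r) = n := by omega
  choose θ hθ1 hθ2 using fun A => exists_theta hw (hI A)
  obtain ⟨x, hx⟩ := submersion_of_trans θ hθ1 hθ2 hT
  obtain ⟨a, ha0, ha⟩ := poly_image (Pmap θ) (algInd_of_submersion _ x hx)
  have hg := (gen_eval θ a ha0).mul (Gen.prod Finset.univ (fun A (v : VS n) => (toM v A).det) (fun A _ => gen_det A))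
  have h1 := hg.dense
  have h2 : {v : VS n | OrthPos (toM v) I} = Set.univ := by
    rw [← Set.univ_subset_iff, ← h1.closure_eq]
    apply (isClosed_orthPos I).closure_subset_iff.mpr
    intro v hv
    obtain ⟨hv1, hv2⟩ := mul_ne_zero_iff.mp hv
    rw [Finset.prod_ne_zero_iff] at hv2
    obtain ⟨x, hx⟩ := ha _ hv1
    apply orthPos_of_closPos hI
    refine closPos_of_image θ (θ 0) hθ1 _ (fun A => isUnit_iff_ne_zero.mpr (hv2 A (Finset.mem_univ _))) x ?_
    intro A
    ext i j
    have := hx (A, i, j)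
    rw [eval_Pmap] at this
    exact this
  have : v ∈ {v : VS n | OrthPos (toM v) I} := by rw [h2]; trivial
  exact this

theorem th4a' (hr : r ≤ n) {I : Fin 3 → Fin r → Fin n} (hI : ∀ A, StrictMono (I A)) (hT : TransP I)
    (v : Fin 3 → Matrix (Fin n) (Fin n) ℂ) : OrthPos v I :=
  th4a hr hI hT (fun A => v A)

end Th4


section Th3

theorem inj_of_left_inv {n r : ℕ} {m : Matrix (Fin n) (Fin r) ℂ} {k : Matrix (Fin r) (Fin n) ℂ}
    (hk : k * m = 1) (x) (hx : m *ᵥ x = 0) : x = 0 := by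
  have := congrArg (fun y => k *ᵥ y) hx
  simpa [Matrix.mulVec_mulVec, hk] using this

theorem exPos_exists {n r : ℕ} {v : Fin 3 → Matrix (Fin n) (Fin n) ℂ} (hv : ∀ A, IsUnit (v A).det)
    (m : Matrix (Fin n) (Fin r) ℂ) (hm : ∀ x, m *ᵥ x = 0 → x = 0) :
    ∃ G : Fin 3 → Fin r → Fin n, (∀ A, StrictMono (G A)) ∧ ExPos v G m := by
  have hinj : ∀ A x, ((v A)⁻¹ * m) *ᵥ x = 0 → x = 0 := by
    intro A x hx
    apply hm
    have := congrArg (fun y => v A *ᵥ y) hx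
    simp only [Matrix.mulVec_mulVec, Matrix.mulVec_zero] at this
    rwa [Matrix.mul_nonsing_inv_cancel_left _ _ (hv A)] at this
  choose G e u h1 h2 h3 h4 h5 using fun A => exists_ech ((v A)⁻¹ * m) (hinj A)
  refine ⟨G, h1, u, e, fun A => ⟨h4 A, h2 A, h3 A, ?_⟩⟩
  rw [← h5, Matrix.mul_assoc, Matrix.mul_nonsing_inv_cancel_left _ _ (hv A)]

theorem exPos_le {n r : ℕ} {v : Fin 3 → Matrix (Fin n) (Fin n) ℂ} (hv : ∀ A, IsUnit (v A).det)
    {m : Matrix (Fin n) (Fin r) ℂ} {G F : Fin 3 → Fin r → Fin n} (hG : ∀ A, StrictMono (G A))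
    (hF : ∀ A, StrictMono (F A)) (hex : ExPos v G m) {u : Fin 3 → Matrix (Fin r) (Fin r) ℂ}
    {e : Fin 3 → Matrix (Fin n) (Fin r) ℂ}
    (h : ∀ A, IsUnit (u A).det ∧ Pat (F A) (e A) ∧ m * u A = v A * e A) (A c) : G A c ≤ F A c := by
  obtain ⟨u', e', h'⟩ := hex
  refine pos_le (hF A) (hG A) (h A).2.1 (h' A).2.1 (h' A).2.2.1 ((u' A)⁻¹ * u A) ?_ ?_ c
  · rw [Matrix.det_mul]
    exact (Matrix.isUnit_nonsing_inv_det _ (h' A).1).mul (h A).1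
  · have h1 : e A = (v A)⁻¹ * (m * u A) := by
      rw [(h A).2.2, Matrix.nonsing_inv_mul_cancel_left _ _ (hv A)]
    have h2 : e' A = (v A)⁻¹ * (m * u' A) := by
      rw [(h' A).2.2.2, Matrix.nonsing_inv_mul_cancel_left _ _ (hv A)]
    rw [h1, h2]
    simp only [Matrix.mul_assoc]
    rw [Matrix.mul_nonsing_inv_cancel_left _ _ (h' A).1]

theorem Gen.fst {X Y : Type*} [NormedAddCommGroup X] [NormedSpace ℂ X] [NormedAddCommGroup Y]
    [NormedSpace ℂ Y] {f : X → ℂ} (hf : Gen f) : Gen (fun z : X × Y => f z.1) := by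
  obtain ⟨h1, x, hx⟩ := hf
  exact ⟨h1.comp contDiff_fst, (x, 0), hx⟩

theorem Gen.snd {X Y : Type*} [NormedAddCommGroup X] [NormedSpace ℂ X] [NormedAddCommGroup Y]
    [NormedSpace ℂ Y] {f : Y → ℂ} (hf : Gen f) : Gen (fun z : X × Y => f z.2) := by
  obtain ⟨h1, x, hx⟩ := hf
  exact ⟨h1.comp contDiff_snd, (0, x), hx⟩

/-- generic flags: all occurring exact positions are transversal -/
theorem good_flags (n : ℕ) : ∃ f : VS n → ℂ, Gen f ∧ ∀ v, f v ≠ 0 → (∀ A, IsUnit (toM v A).det) ∧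
    ∀ p, p ≤ n → ∀ F : Fin 3 → Fin p → Fin n, (∀ A, StrictMono (F A)) → ∀ m, (∀ x, m *ᵥ x = 0 → x = 0) →
      ExPos (toM v) F m → TransP F := by
  classical
  have key : ∀ z : (Σ p : Fin (n + 1), Fin 3 → Fin p → Fin n), ∃ f : VS n → ℂ, Gen f ∧ ∀ v, f v ≠ 0 →
      (∀ A, StrictMono (z.2 A)) → ∀ m, (∀ x, m *ᵥ x = 0 → x = 0) → ExPos (toM v) z.2 m → TransP z.2 := by
    intro ⟨p, F⟩
    by_cases h : (∀ A, StrictMono (F A)) ∧ ¬ TransP F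
    · obtain ⟨f, hf, hf'⟩ := th4b (by have := p.2; omega) h.1 h.2
      exact ⟨f, hf, fun v hv _ m hm hex => absurd hex (hf' v hv m hm)⟩
    · refine ⟨fun _ => 1, ⟨contDiff_const, 0, one_ne_zero⟩, fun v _ hF m _ _ => ?_⟩
      by_contra hcon
      exact h ⟨hF, hcon⟩
  choose f hf hf' using key
  refine ⟨_, (Gen.prod Finset.univ f (fun i _ => hf i)).mul
    (Gen.prod Finset.univ (fun A (v : VS n) => (toM v A).det) (fun A _ => gen_det A)), ?_⟩
  intro v hv
  obtain ⟨hv1, hv2⟩ := mul_ne_zero_iff.mp hv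
  rw [Finset.prod_ne_zero_iff] at hv1 hv2
  refine ⟨fun A => isUnit_iff_ne_zero.mpr (hv2 A (Finset.mem_univ _)), ?_⟩
  intro p hp F hF m hm hex
  exact hf' ⟨⟨p, by omega⟩, F⟩ v (hv1 _ (Finset.mem_univ _)) hF m hm hex

theorem ker_basis {w r : ℕ} (φ : Matrix (Fin w) (Fin r) ℂ) :
    ∃ (p : ℕ) (m : Matrix (Fin r) (Fin p) ℂ) (k : Matrix (Fin p) (Fin r) ℂ), p ≤ r ∧ k * m = 1 ∧ φ * m = 0 ∧
      ∀ x, φ *ᵥ x = 0 → ∃ z, x = m *ᵥ z := by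
  let N := LinearMap.ker φ.mulVecLin
  let b := Module.finBasis ℂ N
  let p := Module.finrank ℂ N
  let m' : (Fin p → ℂ) →ₗ[ℂ] (Fin r → ℂ) := N.subtype ∘ₗ (b.equivFun.symm : (Fin p → ℂ) →ₗ[ℂ] N)
  have hinj : LinearMap.ker m' = ⊥ := by
    rw [LinearMap.ker_eq_bot]
    exact N.injective_subtype.comp b.equivFun.symm.injective
  obtain ⟨k', hk'⟩ := m'.exists_leftInverse_of_injective hinj
  refine ⟨p, LinearMap.toMatrix' m', LinearMap.toMatrix' k', ?_, ?_, ?_, ?_⟩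
  · have := Submodule.finrank_le N
    simpa using this
  · rw [← LinearMap.toMatrix'_comp, hk', LinearMap.toMatrix'_id]
  · have h1 : φ.mulVecLin ∘ₗ m' = 0 := by
      ext z
      have := (b.equivFun.symm (Pi.single z 1)).2
      have h2 := LinearMap.mem_ker.mp this
      simp only [LinearMap.comp_apply, LinearMap.coe_single]
      exact congrFun h2 _
    have h2 := congrArg LinearMap.toMatrix' h1
    rw [LinearMap.toMatrix'_comp, ← Matrix.toLin'_apply', LinearMap.toMatrix'_toLin'] at h2
    simpa using h2
  · intro x hx
    refine ⟨b.equivFun ⟨x, hx⟩, ?_⟩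
    rw [LinearMap.toMatrix'_mulVec]
    simp [m']

theorem pat_comp {p q r : ℕ} {F : Fin q → Fin r} (hF : StrictMono F) {F' : Fin p → Fin q}
    {e : Matrix (Fin r) (Fin q) ℂ} {e' : Matrix (Fin q) (Fin p) ℂ} (h : Pat F e) (h' : Pat F' e') :
    Pat (fun c => F (F' c)) (e * e') := by
  intro a c hac
  rw [Matrix.mul_apply]
  apply Finset.sum_eq_zero
  intro d _
  rcases le_or_gt d (F' c) with h1 | h1
  · rw [h a d (lt_of_le_of_lt (hF.monotone h1) hac), zero_mul]
  · rw [h' d c h1, mul_zero]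

/-- composition of closed positions -/
theorem comp_ineq {p q r w : ℕ} (hq : q ≤ r) (hp : p ≤ q) {l : Fin 3 → Fin r → ℕ} (hl : ∀ A, Monotone (l A))
    (H : ∀ F : Fin 3 → Fin p → Fin r, (∀ A, StrictMono (F A)) → TransP F →
      2 * (p * w) ≤ ∑ A, ∑ c, l A (F A c))
    {F : Fin 3 → Fin q → Fin r} (hF : ∀ A, StrictMono (F A)) (hFT : TransP F)
    {F' : Fin 3 → Fin p → Fin q} (hF' : ∀ A, StrictMono (F' A)) (hFT' : TransP F') :
    2 * (p * w) ≤ ∑ A, ∑ c, l A (F A (F' A c)) := by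
  obtain ⟨f, hf, hgood⟩ := good_flags r
  obtain ⟨-, v, hv⟩ := hf
  obtain ⟨hvd, hvT⟩ := hgood v hv
  obtain ⟨m, k, u, e, hk, h⟩ := closPos_of_orthPos hvd (th4a' hq hF hFT (toM v))
  obtain ⟨m', k', u', e', hk', h'⟩ := closPos_of_orthPos (fun A => (h A).1) (th4a' hp hF' hFT' u)
  have hkk : (k' * k) * (m * m') = 1 := by
    calc (k' * k) * (m * m') = k' * (k * m) * m' := by simp only [Matrix.mul_assoc]
      _ = 1 := by rw [hk, Matrix.mul_one, hk']
  obtain ⟨G, hG, hex⟩ := exPos_exists hvd (m * m') (inj_of_left_inv hkk)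
  have hGT := hvT p (hp.trans hq) G hG _ (inj_of_left_inv hkk) hex
  have hle := exPos_le hvd hG (F := fun A c => F A (F' A c)) (fun A => (hF A).comp (hF' A)) hex
    (u := u') (e := fun A => e A * e' A) (fun A => ⟨(h' A).1, pat_comp (hF A) (h A).2.1 (h' A).2.1, by
      rw [Matrix.mul_assoc, (h' A).2.2, ← Matrix.mul_assoc, (h A).2.2, Matrix.mul_assoc]⟩)
  calc 2 * (p * w) ≤ ∑ A, ∑ c, l A (G A c) := H G hG hGT
    _ ≤ _ := Finset.sum_le_sum fun A _ => Finset.sum_le_sum fun c _ => hl A (hle A c)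

theorem ker_shift {r p w : ℕ} {φ : Matrix (Fin w) (Fin r) ℂ} {m : Matrix (Fin r) (Fin p) ℂ} (h : φ * m = 0)
    (y : Matrix (Fin w) (Fin w) ℂ) (s : Matrix (Fin p) (Fin p) ℂ) (k : Matrix (Fin p) (Fin r) ℂ)
    (v : Matrix (Fin r) (Fin r) ℂ) : y * φ * ((1 + m * s * k) * v) = y * φ * v := by
  have : y * φ * ((1 + m * s * k) * v) = y * φ * v + y * (φ * m) * (s * k * v) := by
    rw [Matrix.add_mul, Matrix.one_mul, Matrix.mul_add]
    simp only [Matrix.mul_assoc]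
  rw [this, h]; simp

theorem flag_shift {r p : ℕ} {m e : Matrix (Fin r) (Fin p) ℂ} {k : Matrix (Fin p) (Fin r) ℂ} (hk : k * m = 1)
    {u : Matrix (Fin p) (Fin p) ℂ} (hu : IsUnit u.det) {v : Matrix (Fin r) (Fin r) ℂ} (he : m * u = v * e)
    (s : Matrix (Fin p) (Fin p) ℂ) : m * s = ((1 + m * (s * u⁻¹ + -1) * k) * v) * e := by
  have h1 : m * (s * u⁻¹ + -1) * k * (m * u) = m * (s * u⁻¹ + -1) * u := by
    rw [Matrix.mul_assoc _ k, ← Matrix.mul_assoc k, hk, Matrix.one_mul]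
  have h2 : (s * u⁻¹ + -1) * u = s - u := by
    rw [Matrix.add_mul, Matrix.mul_assoc s, Matrix.nonsing_inv_mul _ hu, Matrix.mul_one, neg_mul, Matrix.one_mul,
      sub_eq_add_neg]
  rw [Matrix.mul_assoc _ v, ← he, Matrix.add_mul, Matrix.one_mul, h1, Matrix.mul_assoc m, h2, Matrix.mul_sub]
  abel

set_option maxHeartbeats 1000000 in
theorem th3 : ∀ (r w : ℕ) (l : Fin 3 → Fin r → ℕ), (∀ A, Monotone (l A)) → (∀ A a, l A a ≤ w) →
    (∀ p, 1 ≤ p → p ≤ r → ∀ F : Fin 3 → Fin p → Fin r, (∀ A, StrictMono (F A)) → TransP F →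
      2 * (p * w) ≤ ∑ A, ∑ c, l A (F A c)) → TransL w l := by
  classical
  intro r
  induction r using Nat.strong_induction_on with
  | _ r IH =>
  intro w l hl hlw H
  by_contra hnot
  have hsurjT : ∀ v : VS r, ∀ y : VS w, (∀ A, IsUnit (toM v A).det) → (∀ A, IsUnit (toM y A).det) →
      ¬ Function.Surjective (Lm w l (toM v) (toM y)) := fun v y h1 h2 h3 => hnot ⟨_, _, h1, h2, h3⟩
  let T : VS r × VS w → Matrix (Fin w) (Fin r) ℂ →ₗ[ℂ] (Cells w l → ℂ) := fun x => Lm w l (toM x.1) (toM x.2)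
  -- maximal rank
  have hmax : ∃ x0, ∀ x, Module.finrank ℂ (LinearMap.range (T x)) ≤ Module.finrank ℂ (LinearMap.range (T x0)) := by
    have hfin : (Set.range fun x => Module.finrank ℂ (LinearMap.range (T x))).Finite := by
      apply (Set.finite_Iic (Fintype.card (Cells w l))).subset
      rintro _ ⟨x, rfl⟩
      have := Submodule.finrank_le (LinearMap.range (T x))
      simpa using this
    obtain ⟨_, ⟨x0, rfl⟩, hx0⟩ := Set.exists_max_image _ id hfin ⟨_, ⟨0, rfl⟩⟩
    exact ⟨x0, fun x => hx0 _ ⟨x, rfl⟩⟩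
  obtain ⟨x0, hx0⟩ := hmax
  have hTcd : ∀ φ k, ContDiff ℂ ⊤ (fun t => T t φ k) := by
    intro φ k
    apply CDM.Lm
    · intro A i j; exact (cdm_toM A i j).comp contDiff_fst
    · intro A i j; exact (cdm_toM A i j).comp contDiff_snd
  obtain ⟨f0, hf0, hf0x, hf0r⟩ := rank_generic T hTcd x0
  have hf0max : ∀ x, f0 x ≠ 0 → ∀ x', Module.finrank ℂ (LinearMap.range (T x')) ≤
      Module.finrank ℂ (LinearMap.range (T x)) := fun x hx x' => (hx0 x').trans (hf0r x hx)
  obtain ⟨f1, hf1, hf1'⟩ := good_flags r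
  -- generic y
  have key : ∀ z : (Σ p : Fin r, Fin 3 → Fin p → Fin r), ∃ f : VS w → ℂ, Gen f ∧ ∀ y, f y ≠ 0 →
      1 ≤ (z.1 : ℕ) → (∀ A, StrictMono (z.2 A)) → TransP z.2 →
      ∃ σ : VS z.1, Function.Surjective (Lm w (fun A c => l A (z.2 A c)) (toM σ) (toM y)) := by
    intro ⟨p, F⟩
    by_cases h : 1 ≤ (p : ℕ) ∧ (∀ A, StrictMono (F A)) ∧ TransP F
    · obtain ⟨hp, hF, hFT⟩ := h
      obtain ⟨σ, y0, -, -, hs⟩ := IH p p.2 w (fun A c => l A (F A c)) (fun A => (hl A).comp (hF A).monotone)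
        (fun A a => hlw _ _) (fun p' hp' hp'' F' hF' hFT' =>
          comp_ineq p.2.le hp'' hl (H p' hp' (hp''.trans p.2.le)) hF hFT hF' hFT')
      obtain ⟨f, h1, h2, h3⟩ := surj_generic (fun y : VS w => Lm w (fun A c => l A (F A c)) σ (toM y))
        (fun φ k => CDM.Lm _ (fun A => CDM.const _) (fun A => cdm_toM A) φ k) (fun A => y0 A) hs
      exact ⟨f, ⟨h1, _, h2⟩, fun y hy _ _ _ => ⟨fun A => σ A, h3 y hy⟩⟩
    · refine ⟨fun _ => 1, ⟨contDiff_const, 0, one_ne_zero⟩, fun v _ h1 h2 h3 => absurd ⟨h1, h2, h3⟩ h⟩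
  choose f2 hf2 hf2' using key
  have hf0G : Gen f0 := ⟨hf0, x0, hf0x⟩
  have hG := (hf0G.mul (hf1.fst (Y := VS w))).mul
    (((Gen.prod Finset.univ f2 (fun i _ => hf2 i)).mul
    (Gen.prod Finset.univ (fun A (v : VS w) => (toM v A).det) (fun A _ => gen_det A))).snd (X := VS r))
  obtain ⟨-, ⟨v, y⟩, hvy⟩ := hG
  obtain ⟨hvy1, hvy2⟩ := mul_ne_zero_iff.mp hvy
  obtain ⟨h0, h1⟩ := mul_ne_zero_iff.mp hvy1
  obtain ⟨h2, h3⟩ := mul_ne_zero_iff.mp hvy2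
  rw [Finset.prod_ne_zero_iff] at h2 h3
  have hyd : ∀ A, IsUnit (toM y A).det := fun A => isUnit_iff_ne_zero.mpr (h3 A (Finset.mem_univ _))
  obtain ⟨hvd, hvT⟩ := hf1' v h1
  have hns := hsurjT v y hvd hyd
  -- kernel
  have hker : LinearMap.ker (T (v, y)) ≠ ⊥ := by
    intro hbot
    have hr : 1 ≤ r := by
      by_contra hr0
      have : r = 0 := by omega
      subst this
      apply hns
      intro D
      exact ⟨0, funext fun x => x.1.2.2.elim0⟩
    have e1 := LinearMap.finrank_range_add_finrank_ker (T (v, y))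
    rw [hbot, finrank_bot, Module.finrank_matrix] at e1
    simp only [Fintype.card_fin, Module.finrank_self, mul_one, add_zero] at e1
    have e2 : Module.finrank ℂ (LinearMap.range (T (v, y))) < Fintype.card (Cells w l) := by
      have : LinearMap.range (T (v, y)) < ⊤ := by
        rw [lt_top_iff_ne_top]
        intro h; exact hns (LinearMap.range_eq_top.mp h)
      have := Submodule.finrank_lt this.ne
      simpa using this
    have e3 := card_cells_add l hlw
    have hid : TransP (fun (_ : Fin 3) (c : Fin r) => c) := by
      unfold TransP
      refine ⟨fun _ => 1, fun _ => 1, fun _ => by simp, fun _ => by simp, ?_⟩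
      rw [Lm_surj_iff]
      intro D
      refine ⟨0, fun A b => ?_⟩
      have := b.2
      omega
    have e4 := H r hr le_rfl (fun _ c => c) (fun _ => strictMono_id) hid
    rw [mul_comm r w] at e4
    omega
  obtain ⟨φ, hφ, hφ0⟩ := Submodule.exists_mem_ne_zero_of_ne_bot hker
  rw [LinearMap.mem_ker] at hφ
  obtain ⟨p, m, k, hpr, hk, hφm, hmk⟩ := ker_basis φ
  have hp : p < r := by
    rcases hpr.lt_or_eq with h | h
    · exact h
    · exfalso
      subst h
      have : m * k = 1 := mul_eq_one_comm.mp hk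
      apply hφ0
      rw [← Matrix.mul_one φ, ← this, ← Matrix.mul_assoc, hφm, Matrix.zero_mul]
  have hminj := inj_of_left_inv hk
  obtain ⟨F, hF, hex⟩ := exPos_exists hvd m hminj
  have hFT := hvT p hpr F hF m hminj hex
  obtain ⟨u, e, hue⟩ := hex
  have hσ0 : ∃ σ : VS p, Function.Surjective (Lm w (fun A c => l A (F A c)) (toM σ) (toM y)) := by
    rcases Nat.eq_zero_or_pos p with h | h
    · subst h
      exact ⟨0, fun D => ⟨0, funext fun x => x.1.2.2.elim0⟩⟩
    · exact hf2' ⟨⟨p, hp⟩, F⟩ y (h2 _ (Finset.mem_univ _)) h hF hFT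
  obtain ⟨σ0, hσ0⟩ := hσ0
  obtain ⟨g, hg1, hg2, hg3⟩ := surj_generic (fun σ : VS p => Lm w (fun A c => l A (F A c)) (toM σ) (toM y))
        (fun φ k => CDM.Lm (X := VS p) (fun A c => l A (F A c)) (v := fun σ => toM σ) (y := fun _ => toM y)
          (fun A => cdm_toM A) (fun A => CDM.const (toM y A)) φ k) σ0 hσ0
  have hgG : Gen g := ⟨hg1, σ0, hg2⟩
  let V : VS p → Fin 3 → Matrix (Fin r) (Fin r) ℂ := fun σ A =>
    (1 + m * (toM σ A * (u A)⁻¹ + -1) * k) * toM v A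
  have hVc : ∀ A, CDM (fun σ => V σ A) := by
    intro A
    exact (CDM.add (CDM.const _) (((CDM.const _).mul (((cdm_toM A).mul (CDM.const _)).add (CDM.const _))).mul
      (CDM.const _))).mul (CDM.const _)
  let Vs : VS p → VS r := fun σ A i j => V σ A i j
  have hVs : ContDiff ℂ ⊤ Vs := by
    rw [contDiff_pi]; intro A
    rw [contDiff_pi]; intro i
    rw [contDiff_pi]; intro j
    exact hVc A i j
  let us : VS p := fun A i j => u A i j
  have hus : ∀ A, toM us A = u A := fun A => rfl
  have hVu : ∀ A, V us A = toM v A := by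
    intro A
    simp only [V]
    rw [hus, Matrix.mul_nonsing_inv _ (hue A).1]
    simp
  have hVsu : Vs us = v := by
    funext A i j
    exact congrFun (congrFun (hVu A) i) j
  have hGen : Gen (fun σ => (g σ * f0 (Vs σ, y)) * ((∏ A, (toM σ A).det) * ∏ A, (V σ A).det)) := by
    refine (hgG.mul ?_).mul ((Gen.prod Finset.univ (fun A (v : VS p) => (toM v A).det) (fun A _ => gen_det A)).mul ?_)
    · refine ⟨hf0.comp (hVs.prodMk contDiff_const), us, ?_⟩
      change f0 (Vs us, y) ≠ 0
      rw [hVsu]; exact h0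
    · apply Gen.prod Finset.univ (fun A σ => (V σ A).det)
      intro A _
      refine ⟨contDiff_det _ (hVc A), us, ?_⟩
      change (V us A).det ≠ 0
      rw [hVu]
      exact (hvd A).ne_zero
  obtain ⟨-, σ, hσ⟩ := hGen
  obtain ⟨hσ1, hσ2⟩ := mul_ne_zero_iff.mp hσ
  obtain ⟨hσg, hσf⟩ := mul_ne_zero_iff.mp hσ1
  obtain ⟨hσd, hσV⟩ := mul_ne_zero_iff.mp hσ2
  rw [Finset.prod_ne_zero_iff] at hσd hσV
  have hVd : ∀ A, IsUnit (V σ A).det := fun A => isUnit_iff_ne_zero.mpr (hσV A (Finset.mem_univ _))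
  have hfin : Function.Surjective (Lm w l (V σ) (toM y)) := by
    refine lemma_P hl hVd ?_ (φ := φ) ?_ hF hk hmk (u := toM σ)
      (fun A => isUnit_iff_ne_zero.mpr (hσd A (Finset.mem_univ _))) (fun A => (hue A).2.1)
      (fun A => (hue A).2.2.1) ?_ (hg3 σ hσg)
    · intro y'
      exact hf0max _ hσf (Vs σ, fun A => y' A)
    · rw [← hφ]
      funext x
      simp only [T, Lm_apply]
      exact congrFun (congrFun (ker_shift hφm (toM y x.1.1) _ k (toM v x.1.1)) _) _
    · intro A
      exact flag_shift hk (hue A).1 (hue A).2.2.2 _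
  exact hnot ⟨_, _, hVd, hyd, hfin⟩

end Th3


section Th5

theorem sym_iff {r n : ℕ} {I : Fin 3 → Fin r → Fin n} (hI : ∀ A, StrictMono (I A))
    (hsum : ∑ A, ∑ a, lam I A a = 2 * (r * (n - r))) :
    TransP I ↔ ∀ p, 1 ≤ p → p < r → ∀ F : Fin 3 → Fin p → Fin r, (∀ A, StrictMono (F A)) →
      TransP F → ∑ A, ∑ a, lam F A a = 2 * (p * (r - p)) →
      2 * (p * (n - r)) ≤ ∑ A, ∑ c, lam I A (F A c) := by
  constructor
  · rintro ⟨v, y, hv, hy, hs⟩ p hp hpr F hF hFT _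
    obtain ⟨m, k, u, e, hk, h⟩ := closPos_of_orthPos hv (th4a' hpr.le hF hFT v)
    obtain ⟨G, hG, hex⟩ := exPos_exists hv m (inj_of_left_inv hk)
    have hle := exPos_le hv hG hF hex h
    obtain ⟨u', e', h'⟩ := hex
    have h1 := surj_count (th1 (lam_mono hI) hs hG (fun A => (h' A).2.1) (fun A => (h' A).2.2.1)
      (fun A => (h' A).2.2.2))
    exact h1.trans (Finset.sum_le_sum fun A _ => Finset.sum_le_sum fun c _ => lam_mono hI A (hle A c))
  · intro H
    refine th3 r (n - r) (lam I) (lam_mono hI) (lam_le hI) ?_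
    intro p hp hpr F hF hFT
    rcases hpr.lt_or_eq with h | h
    · obtain ⟨F', hF', hle, hFT', hs'⟩ := th2_pos hF hFT
      exact (H p hp h F' hF' hFT' hs').trans
        (Finset.sum_le_sum fun A _ => Finset.sum_le_sum fun c _ => lam_mono hI A (hle A c))
    · subst h
      rw [← hsum]
      exact Finset.sum_le_sum fun A _ => Finset.sum_le_sum fun c _ =>
        lam_mono hI A (Fin.le_def.mpr (le_strictMono (hF A) c))

theorem adj_unitary {n : ℕ} {v : Matrix (Fin n) (Fin n) ℂ} (hv : vᴴ * v = 1) :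
    v.adjugate = v.det • vᴴ ∧ v.det ≠ 0 := by
  have h1 : v * vᴴ = 1 := mul_eq_one_comm.mp hv
  constructor
  · calc v.adjugate = v.adjugate * (v * vᴴ) := by rw [h1, Matrix.mul_one]
      _ = _ := by rw [← Matrix.mul_assoc, Matrix.adjugate_mul]; simp
  · intro h
    have := congrArg Matrix.det h1
    rw [Matrix.det_mul, h] at this
    simp at this

theorem col_ineq {n r : ℕ} {z : Fin n → ℝ} (hz : Antitone z) {I : Fin r → Fin n}
    {e : Matrix (Fin n) (Fin r) ℂ} (he : eᴴ * e = 1) (hp : Pat I e) :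
    ∑ c, z (I c) ≤ (eᴴ * diagonal (fun a => (z a : ℂ)) * e).trace.re := by
  rw [Matrix.trace, Complex.re_sum]
  apply Finset.sum_le_sum
  intro c _
  have h1 : ∑ a, Complex.normSq (e a c) = 1 := by
    have := congrFun (congrFun he c) c
    simp only [Matrix.mul_apply, Matrix.conjTranspose_apply, Matrix.one_apply_eq] at this
    have h2 := congrArg Complex.re this
    rw [Complex.re_sum] at h2
    simp only [Complex.one_re] at h2
    rw [← h2]
    apply Finset.sum_congr rfl
    intro a _
    simp [Complex.normSq_apply]
  have h2 : ((eᴴ * diagonal (fun a => (z a : ℂ)) * e).diag c).re = ∑ a, z a * Complex.normSq (e a c) := by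
    rw [Matrix.diag_apply, Matrix.mul_apply, Complex.re_sum]
    apply Finset.sum_congr rfl
    intro a _
    rw [Matrix.mul_diagonal]
    simp [Complex.normSq_apply]
    ring
  rw [h2]
  calc z (I c) = ∑ a, z (I c) * Complex.normSq (e a c) := by rw [← Finset.mul_sum, h1, mul_one]
    _ ≤ _ := by
      apply Finset.sum_le_sum
      intro a _
      rcases lt_or_ge (I c) a with h | h
      · rw [hp a c h]; simp
      · exact mul_le_mul_of_nonneg_right (hz h) (Complex.normSq_nonneg _)

theorem th5 {n r : ℕ} {v : Fin 3 → Matrix (Fin n) (Fin n) ℂ} (hv : ∀ A, (v A)ᴴ * v A = 1)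
    {z : Fin 3 → Fin n → ℝ} (hz : ∀ A, Antitone (z A)) {I : Fin 3 → Fin r → Fin n} (h : OrthPos v I)
    (hs : ∑ A, v A * diagonal (fun a => (z A a : ℂ)) * (v A)ᴴ = 0) :
    ∑ A, ∑ c, z A (I A c) ≤ 0 := by
  obtain ⟨q, hq1, hq2, hq3⟩ := h
  have h1 : ∀ A, ∑ c, z A (I A c) ≤ ((v A * diagonal (fun a => (z A a : ℂ)) * (v A)ᴴ) * (q 0 * (q 0)ᴴ)).trace.re := by
    intro A
    have hp : Pat (I A) ((v A)ᴴ * q A) := by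
      intro a c hac
      have := hq3 A a c hac
      rw [(adj_unitary (hv A)).1, Matrix.smul_mul, Matrix.smul_apply, smul_eq_mul] at this
      exact (mul_eq_zero.mp this).resolve_left (adj_unitary (hv A)).2
    have he : ((v A)ᴴ * q A)ᴴ * ((v A)ᴴ * q A) = 1 := by
      rw [Matrix.conjTranspose_mul, Matrix.conjTranspose_conjTranspose, Matrix.mul_assoc, ← Matrix.mul_assoc (v A),
        mul_eq_one_comm.mp (hv A), Matrix.one_mul, hq1]
    refine (col_ineq (hz A) he hp).trans_eq ?_
    congr 1
    have hg : ((q 0)ᴴ * q A)ᴴ * ((q 0)ᴴ * q A) = 1 := by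
      rw [Matrix.conjTranspose_mul, Matrix.conjTranspose_conjTranspose, Matrix.mul_assoc, hq2, hq1]
    have hg' := mul_eq_one_comm.mp hg
    have hqq : q A * (q A)ᴴ = q 0 * (q 0)ᴴ := by
      conv_lhs => rw [← hq2 A]
      rw [Matrix.conjTranspose_mul, ← Matrix.mul_assoc, Matrix.mul_assoc (q 0), hg', Matrix.mul_one]
    rw [← hqq, ← Matrix.mul_assoc _ (q A), Matrix.trace_mul_comm _ (q A)ᴴ]
    congr 1
    simp only [Matrix.conjTranspose_mul, Matrix.conjTranspose_conjTranspose, Matrix.mul_assoc]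
  calc ∑ A, ∑ c, z A (I A c) ≤ ∑ A, ((v A * diagonal (fun a => (z A a : ℂ)) * (v A)ᴴ) * (q 0 * (q 0)ᴴ)).trace.re :=
        Finset.sum_le_sum fun A _ => h1 A
    _ = 0 := by
      rw [← Complex.re_sum, ← Matrix.trace_sum, ← Finset.sum_mul, hs]
      simp

end Th5


section KN
open scoped ComplexOrder

abbrev Low (n a : ℕ) := {i : Fin n // (i : ℕ) < a}

/-- leading principal minors -/
def Nm {n : ℕ} (a : ℕ) (M : Matrix (Fin n) (Fin n) ℂ) : ℂ :=
  (M.submatrix (Subtype.val : Low n a → Fin n) Subtype.val).det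

variable {n : ℕ}

theorem sum_low (a : ℕ) {β : Type*} [AddCommMonoid β] (f : Fin n → β) :
    ∑ i : Low n a, f i = ∑ i : Fin n, if (i : ℕ) < a then f i else 0 := by
  rw [← Finset.sum_filter]
  exact (Finset.sum_subtype _ (by simp) f).symm

theorem sub_mul_tri (a : ℕ) {m : Type*} (M : Matrix m (Fin n) ℂ) {t : Matrix (Fin n) (Fin n) ℂ}
    (ht : t.BlockTriangular id) :
    (M * t).submatrix id (Subtype.val : Low n a → Fin n) =
      M.submatrix id (Subtype.val : Low n a → Fin n) * t.submatrix Subtype.val Subtype.val := by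
  ext i j
  refine Eq.trans ?_ (Matrix.mul_apply (M := M.submatrix id (Subtype.val : Low n a → Fin n))
    (N := t.submatrix (Subtype.val : Low n a → Fin n) (Subtype.val : Low n a → Fin n))).symm
  refine Eq.trans (Matrix.mul_apply (M := M) (N := t)) ?_
  refine Eq.trans ?_ (sum_low a (fun k => M i k * t k j)).symm
  apply Finset.sum_congr rfl
  intro k _
  by_cases h : (k : ℕ) < a
  · rw [if_pos h]; rfl
  · rw [if_neg h]
    rw [ht (show (j : Fin n) < k from Fin.lt_def.mpr (lt_of_lt_of_le j.2 (not_lt.mp h))), mul_zero]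

theorem Nm_mul_tri (a : ℕ) (M : Matrix (Fin n) (Fin n) ℂ) {t : Matrix (Fin n) (Fin n) ℂ}
    (ht : t.BlockTriangular id) : Nm a (M * t) = Nm a M * Nm a t := by
  rw [Nm, Nm, Nm, ← Matrix.det_mul]
  congr 1
  exact sub_mul_tri a (M.submatrix (Subtype.val : Low n a → Fin n) id) ht

theorem Nm_conj (a : ℕ) (M : Matrix (Fin n) (Fin n) ℂ) : Nm a Mᴴ = star (Nm a M) := by
  rw [Nm, Nm, ← Matrix.det_conjTranspose, Matrix.conjTranspose_submatrix]

theorem Nm_tri_conj (a : ℕ) (M : Matrix (Fin n) (Fin n) ℂ) {t : Matrix (Fin n) (Fin n) ℂ}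
    (ht : t.BlockTriangular id) : (Nm a (tᴴ * M * t)).re = (Nm a M).re * Complex.normSq (Nm a t) := by
  rw [Nm_mul_tri a _ ht]
  have : tᴴ * M = (Mᴴ * t)ᴴ := by rw [Matrix.conjTranspose_mul, Matrix.conjTranspose_conjTranspose]
  rw [this, Nm_conj, Nm_mul_tri a _ ht, Nm_conj]
  simp [Complex.normSq_apply]
  ring

theorem Nm_one (a : ℕ) : Nm a (1 : Matrix (Fin n) (Fin n) ℂ) = 1 := by
  rw [Nm, Matrix.submatrix_one _ Subtype.val_injective, Matrix.det_one]

theorem Nm_pos (a : ℕ) {M : Matrix (Fin n) (Fin n) ℂ} (h : M.PosDef) : 0 < (Nm a M).re := by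
  have := (h.submatrix (e := (Subtype.val : Low n a → Fin n)) Subtype.val_injective).det_pos
  rw [Complex.lt_def] at this
  exact this.1

theorem Nm_tri_conj' (a : ℕ) {t : Matrix (Fin n) (Fin n) ℂ}
    (ht : t.BlockTriangular id) : (Nm a (tᴴ * t)).re = Complex.normSq (Nm a t) := by
  have := Nm_tri_conj a 1 ht
  rw [Matrix.mul_one, Nm_one] at this
  simpa using this

theorem posDef_conj {M : Matrix (Fin n) (Fin n) ℂ} (h : M.PosDef) {t : Matrix (Fin n) (Fin n) ℂ}
    (ht : IsUnit t.det) : (tᴴ * M * t).PosDef :=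
  (Matrix.IsUnit.posDef_star_left_conjugate_iff ((Matrix.isUnit_iff_isUnit_det t).mpr ht) (x := M)).mpr h

theorem posDef_conj' {t : Matrix (Fin n) (Fin n) ℂ}
    (ht : IsUnit t.det) : (tᴴ * t).PosDef := by
  have := posDef_conj (Matrix.PosDef.one (n := Fin n) (R := ℂ)) ht
  rwa [Matrix.mul_one] at this

theorem Nm_tri_ne (a : ℕ) {t : Matrix (Fin n) (Fin n) ℂ}
    (ht : t.BlockTriangular id) (hu : IsUnit t.det) : 0 < Complex.normSq (Nm a t) := by
  rw [← Nm_tri_conj' a ht]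
  exact Nm_pos a (posDef_conj' hu)

noncomputable def FF (z : Fin n → ℝ) (M : Matrix (Fin n) (Fin n) ℂ) : ℝ :=
  ∑ b : Fin n, z b * (Real.log (Nm (b + 1) M).re - Real.log (Nm b M).re)

theorem FF_tri (z : Fin n → ℝ) {M t : Matrix (Fin n) (Fin n) ℂ} (hM : M.PosDef)
    (ht : t.BlockTriangular id) (hu : IsUnit t.det) : FF z (tᴴ * M * t) = FF z M + FF z (tᴴ * t) := by
  rw [FF, FF, FF, ← Finset.sum_add_distrib]
  apply Finset.sum_congr rfl
  intro b _
  simp only [Nm_tri_conj _ _ ht, Nm_tri_conj' _ ht]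
  rw [Real.log_mul (Nm_pos _ hM).ne' (Nm_tri_ne _ ht hu).ne', Real.log_mul (Nm_pos _ hM).ne' (Nm_tri_ne _ ht hu).ne']
  ring

theorem FF_one (z : Fin n → ℝ) : FF z 1 = 0 := by
  simp [FF, Nm_one]

theorem Nm_deriv (a : ℕ) (H : Matrix (Fin n) (Fin n) ℂ) :
    HasDerivAt (fun s : ℝ => Real.log (Nm a (1 + (s : ℂ) • H)).re) (∑ i : Low n a, H i i).re 0 := by
  let K : Matrix (Low n a) (Low n a) ℂ := H.submatrix Subtype.val Subtype.val
  let P : ℂ[X] := det (1 + (X : ℂ[X]) • K.map Polynomial.C)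
  have hP : ∀ s : ℂ, P.eval s = Nm a (1 + s • H) := by
    intro s
    simp only [P, Nm]
    rw [← Polynomial.coe_evalRingHom, RingHom.map_det]
    congr 1
    ext i j
    simp [K, Matrix.one_apply, Subtype.ext_iff]
    split_ifs <;> simp [mul_comm]
  have h1 : HasDerivAt (fun s : ℂ => P.eval s) (P.derivative.eval 0) ((0 : ℝ) : ℂ) := by
    simpa using P.hasDerivAt (0 : ℂ)
  have h2 := h1.real_of_complex
  have h3 : P.derivative.eval 0 = ∑ i : Low n a, H i i := by
    simp only [P]
    rw [Matrix.derivative_det_one_add_X_smul]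
    rfl
  rw [h3] at h2
  simp only [hP] at h2
  have h4 := h2.log (by simp [Nm_one])
  simpa [Nm_one] using h4

theorem FF_deriv (z : Fin n → ℝ) (H : Matrix (Fin n) (Fin n) ℂ) :
    HasDerivAt (fun s : ℝ => FF z (1 + (s : ℂ) • H)) (∑ b, z b * (H b b).re) 0 := by
  simp only [FF]
  have : ∀ b : Fin n, HasDerivAt (fun s : ℝ => z b * (Real.log (Nm (b + 1) (1 + (s : ℂ) • H)).re -
      Real.log (Nm b (1 + (s : ℂ) • H)).re)) (z b * (H b b).re) 0 := by
    intro b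
    have h1 := ((Nm_deriv (b + 1) H).sub (Nm_deriv b H)).const_mul (z b)
    have h2 : (∑ i : Low n (b + 1), H i i).re - (∑ i : Low n b, H i i).re = (H b b).re := by
      rw [sum_low (b + 1) (fun i => H i i), sum_low b (fun i => H i i), ← Complex.sub_re, ← Finset.sum_sub_distrib]
      congr 1
      rw [Finset.sum_eq_single b]
      · simp
      · intro i _ hi
        have : (i : ℕ) ≠ b := fun h => hi (Fin.ext h)
        split_ifs <;> first | omega | simp
      · simp
    rw [h2] at h1
    exact h1
  exact HasDerivAt.fun_sum fun b _ => this b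

theorem posDef_near {M : Matrix (Fin n) (Fin n) ℂ} (hM : M.IsHermitian) :
    ∀ᶠ s : ℝ in nhds 0, (1 + (s : ℂ) • M).PosDef := by
  have h0 : ∀ᶠ s : ℝ in nhds 0, ∀ i, 0 < 1 + s * hM.eigenvalues i := by
    rw [Filter.eventually_all]
    intro i
    have : ContinuousAt (fun s : ℝ => 1 + s * hM.eigenvalues i) 0 := by fun_prop
    exact this.eventually (lt_mem_nhds (by simp))
  filter_upwards [h0] with s hs
  set U := (hM.eigenvectorUnitary : Matrix (Fin n) (Fin n) ℂ) with hU
  have hUU : U * star U = 1 := by simp [hU]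
  have hUunit : IsUnit U := IsUnit.of_mul_eq_one _ hUU
  have h1 : M = U * diagonal (RCLike.ofReal ∘ hM.eigenvalues) * star U := by
    conv_lhs => rw [hM.spectral_theorem, Unitary.conjStarAlgAut_apply]
  have h2 : 1 + (s : ℂ) • M = U * diagonal (fun i => ((1 + s * hM.eigenvalues i : ℝ) : ℂ)) * star U := by
    have : (diagonal (fun i => ((1 + s * hM.eigenvalues i : ℝ) : ℂ)) : Matrix (Fin n) (Fin n) ℂ) =
        1 + (s : ℂ) • diagonal (RCLike.ofReal ∘ hM.eigenvalues) := by
      ext i j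
      by_cases h : i = j
      · subst h; simp
      · simp [h]
    rw [this, Matrix.mul_add, Matrix.add_mul, Matrix.mul_one, hUU, Matrix.mul_smul, Matrix.smul_mul, ← h1]
  rw [h2, Matrix.IsUnit.posDef_star_right_conjugate_iff hUunit, Matrix.posDef_diagonal_iff]
  intro i
  exact_mod_cast hs i

theorem kn_crit {q : Fin 3 → Matrix (Fin n) (Fin n) ℂ} (hq : ∀ A, (q A)ᴴ * q A = 1) (z : Fin 3 → Fin n → ℝ)
    (H : ∀ h : Matrix (Fin n) (Fin n) ℂ, h.PosDef → 0 ≤ ∑ A, FF (z A) ((q A)ᴴ * h * q A)) :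
    ∑ A, q A * diagonal (fun a => (z A a : ℂ)) * (q A)ᴴ = 0 := by
  set μ := ∑ A, q A * diagonal (fun a => (z A a : ℂ)) * (q A)ᴴ with hμ
  have hherm : μᴴ = μ := by
    rw [hμ, Matrix.conjTranspose_sum]
    apply Finset.sum_congr rfl
    intro A _
    rw [Matrix.conjTranspose_mul, Matrix.conjTranspose_mul, Matrix.conjTranspose_conjTranspose,
      Matrix.diagonal_conjTranspose, ← Matrix.mul_assoc]
    congr 3
    ext a; simp
  have hd : HasDerivAt (fun s : ℝ => ∑ A, FF (z A) (1 + (s : ℂ) • ((q A)ᴴ * μ * q A)))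
      (∑ A, ∑ b, z A b * (((q A)ᴴ * μ * q A) b b).re) 0 :=
    HasDerivAt.fun_sum fun A _ => FF_deriv (z A) ((q A)ᴴ * μ * q A)
  have hmin : IsLocalMin (fun s : ℝ => ∑ A, FF (z A) (1 + (s : ℂ) • ((q A)ᴴ * μ * q A))) 0 := by
    filter_upwards [posDef_near (M := μ) hherm] with s hs
    have h1 := H _ hs
    have h2 : ∀ A, (q A)ᴴ * (1 + (s : ℂ) • μ) * q A = 1 + (s : ℂ) • ((q A)ᴴ * μ * q A) := by
      intro A
      rw [Matrix.mul_add, Matrix.add_mul, Matrix.mul_one, hq, Matrix.mul_smul, Matrix.smul_mul]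
    simp only [h2] at h1
    simpa [FF_one] using h1
  have hz := hmin.hasDerivAt_eq_zero hd
  have htr : (μᴴ * μ).trace.re = ∑ A, ∑ b, z A b * (((q A)ᴴ * μ * q A) b b).re := by
    rw [hherm]
    conv_lhs => rw [hμ]
    rw [← hμ, Finset.sum_mul, Matrix.trace_sum, Complex.re_sum]
    apply Finset.sum_congr rfl
    intro A _
    rw [Matrix.mul_assoc, Matrix.mul_assoc, Matrix.trace_mul_comm, Matrix.mul_assoc,
      Matrix.trace, Complex.re_sum]
    apply Finset.sum_congr rfl
    intro b _
    rw [Matrix.diag_apply, Matrix.diagonal_mul, Complex.re_ofReal_mul]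
  rw [hz] at htr
  rw [← Matrix.trace_conjTranspose_mul_self_eq_zero_iff]
  apply Complex.ext
  · exact htr
  · have h1 := (Matrix.posSemidef_conjTranspose_mul_self μ).trace_nonneg
    rw [Complex.le_def] at h1
    exact h1.2.symm

end KN


section Bruhat
open scoped ComplexOrder

variable {n : ℕ}

theorem bruhat {B : Matrix (Fin n) (Fin n) ℂ} (hB : IsUnit B.det) :
    ∃ (U : Matrix (Fin n) (Fin n) ℂ) (π : Fin n → Fin n), U.BlockTriangular id ∧ (∀ a, U a a = 1) ∧
      Function.Injective π ∧ (∀ a i, π a < i → (B * U) i a = 0) ∧ ∀ a, (B * U) (π a) a ≠ 0 := by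
  classical
  let Q : Fin n → ℕ → Prop := fun a j => ∃ c : Fin n → ℂ, c a = 1 ∧ (∀ b, a < b → c b = 0) ∧
    ∀ i : Fin n, j ≤ (i : ℕ) → (B *ᵥ c) i = 0
  have hex : ∀ a, ∃ j, Q a j := fun a => ⟨n, Pi.single a 1, by simp, fun b hb => by simp [hb.ne'],
    fun i hi => absurd i.2 (not_lt.mpr hi)⟩
  have hinj : ∀ c, B *ᵥ c = 0 → c = 0 := fun c hc => by
    have := congrArg (fun y => B⁻¹ *ᵥ y) hc
    simpa [Matrix.mulVec_mulVec, Matrix.nonsing_inv_mul _ hB] using this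
  have hlt : ∀ a, ∃ p : Fin n, Q a (p + 1) ∧ ¬ Q a p := by
    intro a
    have h1 := Nat.find_spec (hex a)
    have h2 : Nat.find (hex a) ≠ 0 := by
      intro h0
      rw [h0] at h1
      obtain ⟨c, hc1, -, hc3⟩ := h1
      have := hinj c (funext fun i => hc3 i (Nat.zero_le _))
      rw [this] at hc1
      simp at hc1
    have h3 : Nat.find (hex a) ≤ n := Nat.find_min' _ ⟨Pi.single a 1, by simp, fun b hb => by simp [hb.ne'],
      fun i hi => absurd i.2 (not_lt.mpr hi)⟩
    have h4 : Nat.find (hex a) - 1 < n := lt_of_lt_of_le (Nat.sub_lt (Nat.pos_of_ne_zero h2) one_pos) h3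
    refine ⟨⟨Nat.find (hex a) - 1, h4⟩, ?_, ?_⟩
    · simpa [Nat.sub_add_cancel (Nat.one_le_iff_ne_zero.mpr h2)] using h1
    · exact Nat.find_min (hex a) (Nat.sub_lt (Nat.pos_of_ne_zero h2) one_pos)
  choose π hπ1 hπ2 using hlt
  choose c hc1 hc2 hc3 using hπ1
  have hne : ∀ a, (B *ᵥ c a) (π a) ≠ 0 := by
    intro a h0
    apply hπ2 a
    refine ⟨c a, hc1 a, hc2 a, ?_⟩
    intro i hi
    rcases hi.lt_or_eq with h | h
    · exact hc3 a i h
    · rw [← Fin.ext h]; exact h0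
  have hBU : ∀ i a, (B * (Matrix.of fun i a => c a i)) i a = (B *ᵥ c a) i := by
    intro i a
    simp [Matrix.mul_apply, Matrix.mulVec, dotProduct]
  have hlt' : ∀ a a', a < a' → π a ≠ π a' := by
    intro a a' haa h
    apply hπ2 a'
    refine ⟨c a' - ((B *ᵥ c a') (π a') / (B *ᵥ c a) (π a)) • c a, ?_, ?_, ?_⟩
    · simp [hc1, hc2 a a' haa]
    · intro b hb
      simp [hc2 a' b hb, hc2 a b (haa.trans hb)]
    · intro i hi
      rw [Matrix.mulVec_sub, Matrix.mulVec_smul]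
      simp only [Pi.sub_apply, Pi.smul_apply, smul_eq_mul]
      rcases hi.lt_or_eq with h1 | h1
      · rw [hc3 a' i h1, hc3 a i (by rw [h]; exact h1)]; simp
      · have h2 : i = π a' := (Fin.ext h1).symm
        rw [h2, ← h, div_mul_cancel₀ _ (hne a), sub_self]
  refine ⟨Matrix.of fun i a => c a i, π, ?_, ?_, ?_, ?_, ?_⟩
  · intro i j hij
    exact hc2 j i hij
  · intro a; exact hc1 a
  · intro a a' h
    rcases lt_trichotomy a a' with h1 | h1 | h1
    · exact absurd h (hlt' a a' h1)
    · exact h1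
    · exact absurd h.symm (hlt' a' a h1)
  · intro a i h
    rw [hBU]; exact hc3 a i h
  · intro a
    rw [hBU]; exact hne a

theorem det_one_add_ge {ι : Type*} [Fintype ι] [DecidableEq ι] {R : Matrix ι ι ℂ} (hR : R.PosSemidef) :
    ∃ x : ℝ, 1 ≤ x ∧ (1 + R).det = x := by
  have hM := hR.1
  set U := (hM.eigenvectorUnitary : Matrix ι ι ℂ) with hU
  have hUU : U * star U = 1 := by simp [hU]
  have h1 : R = U * diagonal (RCLike.ofReal ∘ hM.eigenvalues) * star U := by
    conv_lhs => rw [hM.spectral_theorem, Unitary.conjStarAlgAut_apply]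
  have h2 : 1 + R = U * diagonal (fun i => ((1 + hM.eigenvalues i : ℝ) : ℂ)) * star U := by
    have : (diagonal (fun i => ((1 + hM.eigenvalues i : ℝ) : ℂ)) : Matrix ι ι ℂ) =
        1 + diagonal (RCLike.ofReal ∘ hM.eigenvalues) := by
      ext i j
      by_cases h : i = j
      · subst h; simp
      · simp [h]
    rw [this, Matrix.mul_add, Matrix.add_mul, Matrix.mul_one, hUU, ← h1]
  refine ⟨∏ i, (1 + hM.eigenvalues i), ?_, ?_⟩
  · have h3 := Finset.prod_le_prod (s := Finset.univ) (f := fun _ : ι => (1 : ℝ))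
      (g := fun i => 1 + hM.eigenvalues i) (fun _ _ => zero_le_one)
      (fun i _ => by linarith [hR.eigenvalues_nonneg i])
    simpa using h3
  · rw [h2, Matrix.det_mul, Matrix.det_mul, mul_comm, ← mul_assoc, ← Matrix.det_mul, mul_eq_one_comm.mp hUU]
    simp

theorem det_add_ge {ι : Type*} [Fintype ι] [DecidableEq ι] {G R : Matrix ι ι ℂ} (hR : R.PosSemidef) :
    Complex.normSq G.det ≤ (Gᴴ * G + R).det.re := by
  by_cases hG : IsUnit G.det
  · have hR' : ((G⁻¹)ᴴ * R * G⁻¹).PosSemidef := hR.conjTranspose_mul_mul_same _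
    obtain ⟨x, hx, hx'⟩ := det_one_add_ge hR'
    have h1 : Gᴴ * G + R = Gᴴ * (1 + (G⁻¹)ᴴ * R * G⁻¹) * G := by
      rw [Matrix.mul_add, Matrix.add_mul, Matrix.mul_one]
      congr 1
      have h2 : Gᴴ * (G⁻¹)ᴴ = 1 := by
        rw [← Matrix.conjTranspose_mul, Matrix.nonsing_inv_mul _ hG, Matrix.conjTranspose_one]
      calc R = (Gᴴ * (G⁻¹)ᴴ) * R * (G⁻¹ * G) := by rw [h2, Matrix.nonsing_inv_mul _ hG]; simp
        _ = _ := by simp only [Matrix.mul_assoc]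
    rw [h1, Matrix.det_mul, Matrix.det_mul, hx', Matrix.det_conjTranspose]
    have : (star G.det * (x : ℂ) * G.det).re = x * Complex.normSq G.det := by
      simp [Complex.normSq_apply]; ring
    rw [this]
    nlinarith [Complex.normSq_nonneg G.det]
  · rw [isUnit_iff_ne_zero, not_not] at hG
    rw [hG]
    have h1 : (Gᴴ * G + R).PosSemidef := (Matrix.posSemidef_conjTranspose_mul_self G).add hR
    have h2 := h1.det_nonneg
    rw [Complex.le_def] at h2
    simpa using h2.1

theorem Nm_ge (a : ℕ) (B : Matrix (Fin n) (Fin n) ℂ) {d : Fin n → ℝ} (hd : ∀ i, 0 < d i)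
    {σ : Low n a → Fin n} (hσ : Function.Injective σ) :
    Complex.normSq (B.submatrix σ (Subtype.val : Low n a → Fin n)).det * ∏ i, d (σ i) ≤
      (Nm a (Bᴴ * diagonal (fun i => (d i : ℂ)) * B)).re := by
  classical
  let G : Matrix (Low n a) (Low n a) ℂ := diagonal (fun i => (Real.sqrt (d (σ i)) : ℂ)) *
    B.submatrix σ (Subtype.val : Low n a → Fin n)
  let D' : Matrix (Fin n) (Fin n) ℂ := diagonal (fun i => if i ∈ Set.range σ then 0 else (d i : ℂ))
  have hD' : D'.PosSemidef := by
    apply Matrix.PosSemidef.diagonal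
    intro i
    by_cases h : i ∈ Set.range σ
    · simp [h]
    · simp only [h, if_false, Pi.zero_apply]
      exact_mod_cast (hd i).le
  have hR := hD'.conjTranspose_mul_mul_same (B.submatrix id (Subtype.val : Low n a → Fin n))
  have h1 := det_add_ge (G := G) hR
  have h2 : Complex.normSq G.det =
      Complex.normSq (B.submatrix σ (Subtype.val : Low n a → Fin n)).det * ∏ i, d (σ i) := by
    simp only [G]
    rw [Matrix.det_mul, Matrix.det_diagonal, Complex.normSq_mul, mul_comm]
    congr 1
    rw [map_prod]
    apply Finset.prod_congr rfl
    intro i _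
    rw [Complex.normSq_ofReal, Real.mul_self_sqrt (hd _).le]
  rw [h2] at h1
  refine h1.trans_eq ?_
  rw [Nm]
  congr 2
  ext j k
  have e1 : (Gᴴ * G) j k = ∑ l : Low n a, star (B (σ l) j) * (d (σ l) : ℂ) * B (σ l) k := by
    rw [Matrix.mul_apply]
    apply Finset.sum_congr rfl
    intro l _
    simp only [G, Matrix.conjTranspose_apply, Matrix.diagonal_mul, Matrix.submatrix_apply, star_mul']
    have : ((Real.sqrt (d (σ l)) : ℂ)) * (Real.sqrt (d (σ l)) : ℂ) = d (σ l) := by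
      rw [← Complex.ofReal_mul, Real.mul_self_sqrt (hd _).le]
    rw [← this]
    simp
    ring
  have e2 : ((B.submatrix id (Subtype.val : Low n a → Fin n))ᴴ * D' *
      (B.submatrix id (Subtype.val : Low n a → Fin n))) j k =
      ∑ i, if i ∈ Set.range σ then 0 else star (B i j) * (d i : ℂ) * B i k := by
    rw [Matrix.mul_apply]
    apply Finset.sum_congr rfl
    intro i _
    simp only [D', Matrix.mul_diagonal, Matrix.conjTranspose_apply, Matrix.submatrix_apply, id]
    split_ifs <;> simp
  have e3 : (Bᴴ * diagonal (fun i => (d i : ℂ)) * B) j k = ∑ i, star (B i j) * (d i : ℂ) * B i k := by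
    rw [Matrix.mul_apply]
    apply Finset.sum_congr rfl
    intro i _
    simp only [Matrix.mul_diagonal, Matrix.conjTranspose_apply]
  rw [Matrix.add_apply, Matrix.submatrix_apply, e1, e2, e3]
  have e4 : ∑ l : Low n a, star (B (σ l) j) * (d (σ l) : ℂ) * B (σ l) k =
      ∑ i, if i ∈ Set.range σ then star (B i j) * (d i : ℂ) * B i k else 0 := by
    rw [← Finset.sum_filter, ← Finset.sum_image (s := Finset.univ) (g := σ)
      (f := fun i => star (B i j) * (d i : ℂ) * B i k) (fun x _ y _ h => hσ h)]
    apply Finset.sum_congr _ (fun _ _ => rfl)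
    ext i; simp
  rw [e4, ← Finset.sum_add_distrib]
  apply Finset.sum_congr rfl
  intro i _
  split_ifs <;> simp

theorem minor_ne {B U : Matrix (Fin n) (Fin n) ℂ} {π : Fin n → Fin n} (hU : U.BlockTriangular id)
    (hπ : Function.Injective π) (h1 : ∀ a i, π a < i → (B * U) i a = 0) (h2 : ∀ a, (B * U) (π a) a ≠ 0) (a : ℕ) :
    (B.submatrix (fun i : Low n a => π i) (Subtype.val : Low n a → Fin n)).det ≠ 0 := by
  have h3 : ((B * U).submatrix (fun i : Low n a => π i) (Subtype.val : Low n a → Fin n)).det ≠ 0 := by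
    intro h0
    obtain ⟨x, hx0, hx⟩ := Matrix.exists_mulVec_eq_zero_iff.mpr h0
    obtain ⟨i0, hi0⟩ := Function.ne_iff.mp hx0
    obtain ⟨c, hc, hmax⟩ := Finset.exists_max_image (Finset.univ.filter fun i => x i ≠ 0) (fun i : Low n a => π i)
      ⟨i0, by simpa using hi0⟩
    simp only [Finset.mem_filter, Finset.mem_univ, true_and] at hc hmax
    have := congrFun hx c
    rw [Matrix.mulVec, dotProduct, Finset.sum_eq_single c] at this
    · simp only [Matrix.submatrix_apply, Pi.zero_apply, mul_eq_zero] at this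
      exact this.elim (h2 c) hc
    · intro b _ hb
      by_cases hxb : x b = 0
      · rw [hxb, mul_zero]
      · have h4 := lt_of_le_of_ne (hmax b hxb) (fun h => hb (Subtype.ext (hπ h)))
        rw [Matrix.submatrix_apply, h1 b _ h4, zero_mul]
    · simp
  intro h0
  apply h3
  have h4 := sub_mul_tri a (B.submatrix (fun i : Low n a => π i) id) hU
  have h5 : (B * U).submatrix (fun i : Low n a => π i) (Subtype.val : Low n a → Fin n) =
    B.submatrix (fun i : Low n a => π i) (Subtype.val : Low n a → Fin n) *
      U.submatrix (Subtype.val : Low n a → Fin n) (Subtype.val : Low n a → Fin n) := h4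
  rw [h5, Matrix.det_mul, h0, zero_mul]

end Bruhat


section Lower
open scoped ComplexOrder
variable {n : ℕ}

theorem bruhat_exPos {v : Fin 3 → Matrix (Fin n) (Fin n) ℂ} {k k' : Matrix (Fin n) (Fin n) ℂ} (hk : k' * k = 1)
    {U : Fin 3 → Matrix (Fin n) (Fin n) ℂ} {π : Fin 3 → Fin n → Fin n} (hU : ∀ A, (U A).BlockTriangular id)
    (hU1 : ∀ A a, U A a a = 1) 
    (h1 : ∀ A a i, π A a < i → (k * v A * U A) i a = 0) (h2 : ∀ A a, (k * v A * U A) (π A a) a ≠ 0)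
    (hπ : ∀ A, Function.Injective (π A))
    {j : ℕ} (hj : j ≤ n) {I : Fin 3 → Fin j → Fin n} (hI : ∀ A, StrictMono (I A))
    (hIπ : ∀ A c, (π A (I A c) : ℕ) < j) :
    ExPos v I (k' * (1 : Matrix (Fin n) (Fin n) ℂ).submatrix id (Fin.castLE hj)) := by
  refine ⟨fun A => (k * v A * U A).submatrix (Fin.castLE hj) (I A), fun A => (U A).submatrix id (I A), fun A => ⟨?_, ?_, ?_, ?_⟩⟩
  · rw [isUnit_iff_ne_zero]
    intro h0
    obtain ⟨x, hx0, hx⟩ := Matrix.exists_mulVec_eq_zero_iff.mpr h0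
    obtain ⟨i0, hi0⟩ := Function.ne_iff.mp hx0
    obtain ⟨c, hc, hmax⟩ := Finset.exists_max_image (Finset.univ.filter fun i => x i ≠ 0) (fun i : Fin j => π A (I A i))
      ⟨i0, by simpa using hi0⟩
    simp only [Finset.mem_filter, Finset.mem_univ, true_and] at hc hmax
    have := congrFun hx ⟨π A (I A c), hIπ A c⟩
    have hcast : Fin.castLE hj ⟨π A (I A c), hIπ A c⟩ = π A (I A c) := Fin.ext rfl
    rw [Matrix.mulVec, dotProduct, Finset.sum_eq_single c] at this
    · simp only [Matrix.submatrix_apply, Pi.zero_apply, mul_eq_zero, hcast] at this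
      exact this.elim (h2 A _) hc
    · intro b _ hb
      by_cases hxb : x b = 0
      · rw [hxb, mul_zero]
      · have h4 := lt_of_le_of_ne (hmax b hxb) (fun h => hb ((hI A).injective (hπ A h)))
        dsimp only
        rw [Matrix.submatrix_apply, hcast, h1 A _ _ h4, zero_mul]
    · simp
  · intro a c hac
    exact hU A hac
  · intro c
    simp [hU1]
  · have e1 : (1 : Matrix (Fin n) (Fin n) ℂ).submatrix id (Fin.castLE hj) *
        (k * v A * U A).submatrix (Fin.castLE hj) (I A) = (k * v A * U A).submatrix id (I A) := by
      ext i c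
      rw [Matrix.mul_apply]
      by_cases hi : (i : ℕ) < j
      · rw [Finset.sum_eq_single ⟨i, hi⟩]
        · have : Fin.castLE hj ⟨i, hi⟩ = i := Fin.ext rfl
          rw [Matrix.submatrix_apply, Matrix.submatrix_apply, this]
          change (1 : Matrix (Fin n) (Fin n) ℂ) i i * _ = _
          rw [Matrix.one_apply_eq, one_mul]
          rfl
        · intro b _ hb
          have : i ≠ Fin.castLE hj b := fun h => hb (Fin.ext (congrArg Fin.val h).symm)
          simp [this]
        · simp
      · rw [Finset.sum_eq_zero]
        · exact (h1 A (I A c) i (Fin.lt_def.mpr (lt_of_lt_of_le (hIπ A c) (not_lt.mp hi)))).symm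
        · intro b _
          have : i ≠ Fin.castLE hj b := fun h => hi (by rw [h]; exact b.2)
          simp [this]
    dsimp only
    rw [Matrix.mul_assoc, e1]
    have e2 : (k * v A * U A).submatrix id (I A) = k * (v A * (U A).submatrix id (I A)) := by
      rw [← Matrix.mul_assoc]
      ext i c
      simp [Matrix.mul_apply]
    rw [e2, ← Matrix.mul_assoc, hk, Matrix.one_mul]

/-- position hypothesis -/
def PosHyp (v : Fin 3 → Matrix (Fin n) (Fin n) ℂ) (z : Fin 3 → Fin n → ℝ) : Prop :=
  ∀ r, 1 ≤ r → r < n → ∀ I : Fin 3 → Fin r → Fin n, (∀ A, StrictMono (I A)) →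
    ∀ m : Matrix (Fin n) (Fin r) ℂ, (∀ x, m *ᵥ x = 0 → x = 0) → ExPos v I m → ∑ A, ∑ c, z A (I A c) ≤ 0

theorem pos_sum {v : Fin 3 → Matrix (Fin n) (Fin n) ℂ} {z : Fin 3 → Fin n → ℝ} (H : PosHyp v z)
    {k k' : Matrix (Fin n) (Fin n) ℂ} (hk : k' * k = 1)
    {U : Fin 3 → Matrix (Fin n) (Fin n) ℂ} {π : Fin 3 → Fin n → Fin n} (hU : ∀ A, (U A).BlockTriangular id)
    (hU1 : ∀ A a, U A a a = 1) 
    (h1 : ∀ A a i, π A a < i → (k * v A * U A) i a = 0) (h2 : ∀ A a, (k * v A * U A) (π A a) a ≠ 0)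
    (hπ : ∀ A, Function.Injective (π A))
    {j : ℕ} (hj1 : 1 ≤ j) (hj : j < n) : ∑ A, ∑ b, (if (π A b : ℕ) < j then z A b else 0) ≤ 0 := by
  classical
  have hcard : ∀ A, (Finset.univ.filter fun b => (π A b : ℕ) < j).card = j := by
    intro A
    have hb : Function.Bijective (π A) := Finite.injective_iff_bijective.mp (hπ A)
    have : (Finset.univ.filter fun b => (π A b : ℕ) < j).card = (Finset.univ.filter fun i : Fin n => (i : ℕ) < j).card := by
      rw [← Finset.card_image_of_injective _ (hπ A)]
      congr 1
      ext i
      simp only [Finset.mem_image, Finset.mem_filter, Finset.mem_univ, true_and]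
      constructor
      · rintro ⟨a, ha, rfl⟩; exact ha
      · intro hi
        obtain ⟨a, rfl⟩ := hb.2 i
        exact ⟨a, hi, rfl⟩
    rw [this]
    simp [Fin.card_filter_val_lt, hj.le]
  let I : Fin 3 → Fin j → Fin n := fun A => (Finset.univ.filter fun b => (π A b : ℕ) < j).orderEmbOfFin (hcard A)
  have hI : ∀ A, StrictMono (I A) := fun A => OrderEmbedding.strictMono _
  have hIπ : ∀ A c, (π A (I A c) : ℕ) < j := by
    intro A c
    have := Finset.orderEmbOfFin_mem _ (hcard A) c
    exact (Finset.mem_filter.mp this).2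
  have hkk : k * k' = 1 := mul_eq_one_comm.mp hk
  have := H j hj1 hj I hI _ ?_ (bruhat_exPos hk hU hU1 h1 h2 hπ hj.le hI hIπ)
  · refine le_trans (le_of_eq ?_) this
    apply Finset.sum_congr rfl
    intro A _
    rw [← Finset.sum_filter, ← Finset.image_orderEmbOfFin_univ _ (hcard A), Finset.sum_image]
    exact fun x _ y _ h => (hI A).injective h
  · intro x hx
    have h3 := congrArg (fun y => k *ᵥ y) hx
    simp only [Matrix.mulVec_mulVec, ← Matrix.mul_assoc, hkk, Matrix.one_mul, Matrix.mulVec_zero] at h3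
    funext c
    have h4 := congrFun h3 (Fin.castLE hj.le c)
    rw [Matrix.mulVec, dotProduct, Finset.sum_eq_single c] at h4
    · rw [Matrix.submatrix_apply, id, Matrix.one_apply_eq, one_mul] at h4
      exact h4
    · intro b _ hb
      have : Fin.castLE hj.le c ≠ Fin.castLE hj.le b := fun h => hb (Fin.castLE_injective _ h).symm
      simp [this]
    · simp

theorem pos_mono {z : Fin 3 → Fin n → ℝ} {π : Fin 3 → Fin n → Fin n} (hz : ∑ A, ∑ b, z A b = 0)
    (H : ∀ j, 1 ≤ j → j < n → ∑ A, ∑ b, (if (π A b : ℕ) < j then z A b else 0) ≤ 0)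
    {f : Fin n → ℝ} (hf : Monotone f) : 0 ≤ ∑ A, ∑ b, z A b * f (π A b) := by
  rcases Nat.eq_zero_or_pos n with h0 | h0
  · subst h0; simp
  obtain ⟨n, rfl⟩ : ∃ m, n = m + 1 := ⟨n - 1, by omega⟩
  let g : ℕ → ℝ := fun i => if h : i < n + 1 then f ⟨i, h⟩ else 0
  have key : ∀ i : Fin (n + 1), f i = g n - ∑ j ∈ Finset.range n, if (i : ℕ) < j + 1 then g (j + 1) - g j else 0 := by
    intro i
    have : ∀ m, (i : ℕ) ≤ m → m ≤ n → (∑ j ∈ Finset.range m, if (i : ℕ) < j + 1 then g (j + 1) - g j else 0) = g m - g i := by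
      intro m hm
      induction m, hm using Nat.le_induction with
      | base =>
        intro _
        rw [sub_self]
        apply Finset.sum_eq_zero
        intro j hj
        rw [if_neg]
        have := Finset.mem_range.mp hj
        omega
      | succ m hm ih =>
        intro h
        rw [Finset.sum_range_succ, ih (by omega), if_pos (by omega)]
        ring
    rw [this n (by omega) le_rfl]
    have : g i = f i := dif_pos i.2
    rw [this]; ring
  have hg : ∀ j ∈ Finset.range n, 0 ≤ g (j + 1) - g j := by
    intro j hj
    have hj := Finset.mem_range.mp hj
    simp only [g, sub_nonneg]
    rw [dif_pos (by omega), dif_pos (by omega)]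
    exact hf (by simp)
  have e : ∑ A, ∑ b, z A b * f (π A b) = g n * ∑ A, ∑ b, z A b -
      ∑ j ∈ Finset.range n, (g (j + 1) - g j) * ∑ A, ∑ b, (if (π A b : ℕ) < j + 1 then z A b else 0) := by
    simp only [key, mul_sub, Finset.sum_sub_distrib, Finset.mul_sum]
    congr 1
    · simp only [mul_comm]
    · symm
      rw [Finset.sum_comm (s := Finset.range n)]
      apply Finset.sum_congr rfl
      intro A _
      rw [Finset.sum_comm (s := Finset.range n)]
      apply Finset.sum_congr rfl
      intro b _
      apply Finset.sum_congr rfl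
      intro j _
      split_ifs <;> ring
  rw [e, hz, mul_zero, zero_sub, Left.nonneg_neg_iff]
  apply Finset.sum_nonpos
  intro j hj
  exact mul_nonpos_of_nonneg_of_nonpos (hg j hj) (H _ (by omega) (by have := Finset.mem_range.mp hj; omega))

/-- Abel summation lower bound -/
theorem abel_lower (z : Fin n → ℝ) (hz : Antitone z) : ∃ K : ℝ, 0 ≤ K ∧ ∀ (L : ℕ → ℝ) (C : ℝ), 0 ≤ C → L 0 = 0 →
    (∀ a ≤ n, -C ≤ L a) → L n ≤ C → -(K * C) ≤ ∑ b : Fin n, z b * (L (b + 1) - L b) := by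
  rcases Nat.eq_zero_or_pos n with h0 | h0
  · subst h0; exact ⟨0, le_rfl, fun L C _ _ _ _ => by simp⟩
  obtain ⟨n, rfl⟩ : ∃ m, n = m + 1 := ⟨n - 1, by omega⟩
  let g : ℕ → ℝ := fun i => if h : i < n + 1 then z ⟨i, h⟩ else 0
  have hg : ∀ j ∈ Finset.range n, 0 ≤ g j - g (j + 1) := by
    intro j hj
    have hj := Finset.mem_range.mp hj
    simp only [g, sub_nonneg]
    rw [dif_pos (by omega), dif_pos (by omega)]
    exact hz (by simp)
  have key : ∀ (L : ℕ → ℝ), L 0 = 0 → ∑ b : Fin (n + 1), z b * (L (b + 1) - L b) =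
      g n * L (n + 1) + ∑ j ∈ Finset.range n, (g j - g (j + 1)) * L (j + 1) := by
    intro L hL
    have h1 : ∑ b : Fin (n + 1), z b * (L (b + 1) - L b) = ∑ b ∈ Finset.range (n + 1), g b * (L (b + 1) - L b) := by
      rw [Finset.sum_range]
      apply Finset.sum_congr rfl
      intro b _
      have : g b = z b := dif_pos b.2
      rw [this]
    rw [h1]
    have : ∀ m, ∑ b ∈ Finset.range (m + 1), g b * (L (b + 1) - L b) =
        g m * L (m + 1) + ∑ j ∈ Finset.range m, (g j - g (j + 1)) * L (j + 1) := by
      intro m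
      induction m with
      | zero => simp [hL]
      | succ m ih =>
        rw [Finset.sum_range_succ, ih, Finset.sum_range_succ]
        ring
    exact this n
  refine ⟨|g n| + ∑ j ∈ Finset.range n, (g j - g (j + 1)), add_nonneg (abs_nonneg _) (Finset.sum_nonneg hg), ?_⟩
  intro L C hC hL h1 h2
  rw [key L hL]
  have h3 : -(|g n| * C) ≤ g n * L (n + 1) := by
    have : |g n * L (n + 1)| ≤ |g n| * C := by
      rw [abs_mul]
      exact mul_le_mul_of_nonneg_left (abs_le.mpr ⟨h1 _ le_rfl, h2⟩) (abs_nonneg _)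
    exact (abs_le.mp this).1
  have h4 : -((∑ j ∈ Finset.range n, (g j - g (j + 1))) * C) ≤ ∑ j ∈ Finset.range n, (g j - g (j + 1)) * L (j + 1) := by
    rw [Finset.sum_mul, ← Finset.sum_neg_distrib]
    apply Finset.sum_le_sum
    intro j hj
    have := mul_le_mul_of_nonneg_left (h1 (j + 1) (by have := Finset.mem_range.mp hj; omega)) (hg j hj)
    linarith
  linarith

end Lower


section Lower2
open scoped ComplexOrder
variable {n : ℕ}

theorem Nm_full (M : Matrix (Fin n) (Fin n) ℂ) : Nm n M = M.det := by
  rw [Nm]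
  exact Matrix.det_submatrix_equiv_self (Equiv.subtypeUnivEquiv (fun x : Fin n => x.2)) M

theorem Nm_zero (M : Matrix (Fin n) (Fin n) ℂ) : Nm 0 M = 1 := by
  rw [Nm]
  have : IsEmpty (Low n 0) := ⟨fun x => absurd x.2 (Nat.not_lt_zero _)⟩
  exact Matrix.det_isEmpty

theorem unit_normSq {k : Matrix (Fin n) (Fin n) ℂ} (hk : kᴴ * k = 1) : Complex.normSq k.det = 1 := by
  have h := congrArg Matrix.det hk
  rw [Matrix.det_mul, Matrix.det_conjTranspose, Matrix.det_one] at h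
  have h2 := congrArg Complex.re h
  simp [Complex.normSq_apply] at h2 ⊢
  linarith

theorem FF_lower {z : Fin n → ℝ} {K : ℝ} 
    (hK : ∀ (L : ℕ → ℝ) (C : ℝ), 0 ≤ C → L 0 = 0 →
      (∀ a ≤ n, -C ≤ L a) → L n ≤ C → -(K * C) ≤ ∑ b : Fin n, z b * (L (b + 1) - L b))
    {B : Matrix (Fin n) (Fin n) ℂ} {π : Fin n → Fin n} (hπ : Function.Injective π) {C : ℝ} (hC : 0 ≤ C)
    (h1 : ∀ a ≤ n, 0 < Complex.normSq (B.submatrix (fun i : Low n a => π i) (Subtype.val : Low n a → Fin n)).det)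
    (h2 : ∀ a ≤ n, -C ≤ Real.log
      (Complex.normSq (B.submatrix (fun i : Low n a => π i) (Subtype.val : Low n a → Fin n)).det))
    (h3 : Real.log (Complex.normSq B.det) ≤ C) (hB : IsUnit B.det) {d : Fin n → ℝ} (hd : ∀ i, 0 < d i) :
    -(K * C) + ∑ b, z b * Real.log (d (π b)) ≤ FF z (Bᴴ * diagonal (fun i => (d i : ℂ)) * B) := by
  set M := Bᴴ * diagonal (fun i => (d i : ℂ)) * B with hM
  let L : ℕ → ℝ := fun a => Real.log (Nm a M).re - ∑ b : Fin n, if (b : ℕ) < a then Real.log (d (π b)) else 0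
  have e : FF z M = ∑ b : Fin n, z b * (L (b + 1) - L b) + ∑ b, z b * Real.log (d (π b)) := by
    rw [FF, ← Finset.sum_add_distrib]
    apply Finset.sum_congr rfl
    intro b _
    have : (∑ i : Fin n, if (i : ℕ) < b + 1 then Real.log (d (π i)) else 0) -
        (∑ i : Fin n, if (i : ℕ) < b then Real.log (d (π i)) else 0) = Real.log (d (π b)) := by
      rw [← Finset.sum_sub_distrib, Finset.sum_eq_single b]
      · simp
      · intro i _ hi
        have hi' : (i : ℕ) ≠ b := fun h => hi (Fin.ext h)
        by_cases h : (i : ℕ) < b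
        · rw [if_pos h, if_pos (by omega), sub_self]
        · rw [if_neg h, if_neg (by omega), sub_self]
      · simp
    simp only [L]
    linear_combination (z b) * this
  have hprod : ∀ a, Real.log (∏ i : Low n a, d (π i)) = ∑ b : Fin n, if (b : ℕ) < a then Real.log (d (π b)) else 0 := by
    intro a
    rw [Real.log_prod (fun i _ => (hd _).ne'), sum_low a (fun b => Real.log (d (π b)))]
  rw [e]
  have := hK L C hC ?_ ?_ ?_
  · linarith
  · simp [L, Nm_zero]
  · intro a ha
    have h4 := Nm_ge a B hd (σ := fun i : Low n a => π i) (fun x y h => Subtype.ext (hπ h))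
    have hpos : 0 < ∏ i : Low n a, d (π i) := Finset.prod_pos (fun i _ => hd _)
    have h5 := Real.log_le_log (mul_pos (h1 a ha) hpos) h4
    rw [Real.log_mul (h1 a ha).ne' hpos.ne', hprod] at h5
    simp only [L]
    linarith [h2 a ha]
  · have hdet : (Nm n M).re = Complex.normSq B.det * ∏ i, d i := by
      rw [Nm_full, hM, Matrix.det_mul, Matrix.det_mul, Matrix.det_conjTranspose, Matrix.det_diagonal]
      rw [← Complex.ofReal_prod]
      generalize ∏ i, d i = y
      simp [Complex.normSq_apply]; ring
    have hBpos : 0 < Complex.normSq B.det := Complex.normSq_pos.mpr hB.ne_zero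
    have hb : Function.Bijective π := Finite.injective_iff_bijective.mp hπ
    simp only [L]
    rw [hdet, Real.log_mul hBpos.ne' (Finset.prod_pos (fun i _ => hd i)).ne', Real.log_prod (fun i _ => (hd _).ne')]
    have : (∑ b : Fin n, if (b : ℕ) < n then Real.log (d (π b)) else 0) = ∑ i, Real.log (d i) := by
      simp only [Fin.is_lt, if_true]
      exact hb.sum_comp (fun i => Real.log (d i))
    rw [this]
    linarith

theorem local_bound {v : Fin 3 → Matrix (Fin n) (Fin n) ℂ} {z : Fin 3 → Fin n → ℝ} (H : PosHyp v z)
    (hv : ∀ A, IsUnit (v A).det) (hz : ∀ A, Antitone (z A)) (hs : ∑ A, ∑ b, z A b = 0)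
    (k0 : Fin n → Fin n → ℂ) (hk0 : (of k0)ᴴ * of k0 = 1) :
    ∃ s ∈ nhds k0, ∃ C : ℝ, ∀ k ∈ s, (of k)ᴴ * of k = 1 → ∀ d : Fin n → ℝ, (∀ i, 0 < d i) → Monotone d →
      C ≤ ∑ A, FF (z A) ((of k * v A)ᴴ * diagonal (fun i => (d i : ℂ)) * (of k * v A)) := by
  have hku : ∀ k : Matrix (Fin n) (Fin n) ℂ, kᴴ * k = 1 → ∀ A, IsUnit (k * v A).det := by
    intro k hk A
    rw [Matrix.det_mul]
    refine IsUnit.mul ?_ (hv A)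
    rw [isUnit_iff_ne_zero]
    intro h0
    have := unit_normSq hk
    simp [h0] at this
  have hb := fun A => bruhat (hku (of k0) hk0 A)
  choose U π hU hU1 hπ h1 h2 using hb
  have hmon : ∀ f : Fin n → ℝ, Monotone f → 0 ≤ ∑ A, ∑ b, z A b * f (π A b) := fun f hf =>
    pos_mono hs (fun j hj1 hj => pos_sum H hk0 hU hU1 h1 h2 hπ hj1 hj) hf
  have hK := fun A => abel_lower (z A) (hz A)
  choose K hK0 hK using hK
  let N : Fin 3 → Fin (n + 1) → (Fin n → Fin n → ℂ) → ℝ := fun A a k =>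
    Complex.normSq ((of k * v A).submatrix (fun i : Low n a => π A i) (Subtype.val : Low n a → Fin n)).det
  have hN : ∀ A a, 0 < N A a k0 := fun A a =>
    Complex.normSq_pos.mpr (minor_ne (hU A) (hπ A) (h1 A) (h2 A) a)
  have hNc : ∀ A a, Continuous (N A a) := by
    intro A a
    refine Complex.continuous_normSq.comp (Continuous.matrix_det ?_)
    apply continuous_matrix
    intro i j
    simp only [Matrix.submatrix_apply, Matrix.mul_apply, Matrix.of_apply]
    fun_prop
  have hev : ∀ᶠ k in nhds k0, ∀ A a, N A a k0 / 2 < N A a k := by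
    rw [Filter.eventually_all]; intro A
    rw [Filter.eventually_all]; intro a
    exact (hNc A a).continuousAt.eventually (lt_mem_nhds (by linarith [hN A a]))
  let C : ℝ := ∑ A, (|Real.log (Complex.normSq (v A).det)| + ∑ a, |Real.log (N A a k0 / 2)|)
  have hC1 : ∀ A a, |Real.log (N A a k0 / 2)| ≤ C := by
    intro A a
    refine le_trans ?_ (Finset.single_le_sum (f := fun A => |Real.log (Complex.normSq (v A).det)| +
      ∑ a, |Real.log (N A a k0 / 2)|) (fun A _ => by positivity) (Finset.mem_univ A))
    refine le_trans (Finset.single_le_sum (f := fun a => |Real.log (N A a k0 / 2)|)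
      (fun a _ => abs_nonneg _) (Finset.mem_univ a)) ?_
    exact le_add_of_nonneg_left (abs_nonneg _)
  have hC2 : ∀ A, |Real.log (Complex.normSq (v A).det)| ≤ C := by
    intro A
    refine le_trans ?_ (Finset.single_le_sum (f := fun A => |Real.log (Complex.normSq (v A).det)| +
      ∑ a, |Real.log (N A a k0 / 2)|) (fun A _ => by positivity) (Finset.mem_univ A))
    exact le_add_of_nonneg_right (Finset.sum_nonneg fun a _ => abs_nonneg _)
  have hC0 : 0 ≤ C := (abs_nonneg _).trans (hC2 0)
  refine ⟨_, hev, -∑ A, K A * C, ?_⟩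
  intro k hk hku' d hd hdm
  have hkN : ∀ A a, N A a k0 / 2 < N A a k := hk
  have hF : ∀ A, -(K A * C) + ∑ b, z A b * Real.log (d (π A b)) ≤
      FF (z A) ((of k * v A)ᴴ * diagonal (fun i => (d i : ℂ)) * (of k * v A)) := by
    intro A
    have hpos : ∀ a, 0 < N A a k := fun a => lt_trans (by linarith [hN A a]) (hkN A a)
    apply FF_lower (hK A) (hπ A) hC0 _ _ _ (hku _ hku' A) hd
    · intro a ha
      exact hpos ⟨a, by omega⟩
    · intro a ha
      have ha' : a < n + 1 := by omega
      have h5 := Real.log_le_log (half_pos (hN A ⟨a, ha'⟩)) (hkN A ⟨a, ha'⟩).le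
      refine le_trans ?_ h5
      exact (neg_le_neg (hC1 A ⟨a, ha'⟩)).trans (neg_abs_le _)
    · rw [Matrix.det_mul, Complex.normSq_mul, unit_normSq hku', one_mul]
      exact (le_abs_self _).trans (hC2 A)
  have h6 := hmon (fun i => Real.log (d i)) (fun i j hij => Real.log_le_log (hd i) (hdm hij))
  have h7 := Finset.sum_le_sum (fun A (_ : A ∈ Finset.univ) => hF A)
  rw [Finset.sum_add_distrib, Finset.sum_neg_distrib] at h7
  linarith

theorem global_bound {v : Fin 3 → Matrix (Fin n) (Fin n) ℂ} {z : Fin 3 → Fin n → ℝ} (H : PosHyp v z)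
    (hv : ∀ A, IsUnit (v A).det) (hz : ∀ A, Antitone (z A)) (hs : ∑ A, ∑ b, z A b = 0) :
    ∃ C : ℝ, ∀ k : Matrix (Fin n) (Fin n) ℂ, kᴴ * k = 1 → ∀ d : Fin n → ℝ, (∀ i, 0 < d i) → Monotone d →
      C ≤ ∑ A, FF (z A) ((k * v A)ᴴ * diagonal (fun i => (d i : ℂ)) * (k * v A)) := by
  have := (isCompact_orth (n := n) (r := n)).induction_on (p := fun s => ∃ C : ℝ, ∀ k ∈ s, (of k)ᴴ * of k = 1 →
    ∀ d : Fin n → ℝ, (∀ i, 0 < d i) → Monotone d →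
      C ≤ ∑ A, FF (z A) ((of k * v A)ᴴ * diagonal (fun i => (d i : ℂ)) * (of k * v A)))
    ⟨0, fun k hk => absurd hk (Set.notMem_empty k)⟩
    (fun s t hst ⟨C, hC⟩ => ⟨C, fun k hk => hC k (hst hk)⟩)
    (fun s t ⟨C, hC⟩ ⟨D, hD⟩ => ⟨min C D, fun k hk h1 d h2 h3 => by
      rcases hk with hk | hk
      · exact (min_le_left _ _).trans (hC k hk h1 d h2 h3)
      · exact (min_le_right _ _).trans (hD k hk h1 d h2 h3)⟩)
    (fun k hk => by
      obtain ⟨s, hs1, hs2⟩ := local_bound H hv hz hs k hk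
      exact ⟨s, mem_nhdsWithin_of_mem_nhds hs1, hs2⟩)
  obtain ⟨C, hC⟩ := this
  exact ⟨C, fun k hk => hC k hk hk⟩

end Lower2


section Mini
open scoped ComplexOrder
variable {n : ℕ}

theorem perm_of_map {f g : Fin n → ℝ} (h : Multiset.map f Finset.univ.val = Multiset.map g Finset.univ.val) :
    ∃ σ : Equiv.Perm (Fin n), f ∘ σ = g := by
  rw [Fin.univ_val_map, Fin.univ_val_map, Multiset.coe_eq_coe] at h
  have h1 := (Equiv.Perm.ofFn_comp_perm (Tuple.sort f) f).trans (h.trans (Equiv.Perm.ofFn_comp_perm (Tuple.sort g) g).symm)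
  have h2 := List.Perm.eq_of_sortedLE (Tuple.monotone_sort f).sortedLE_ofFn (Tuple.monotone_sort g).sortedLE_ofFn h1
  have h3 := List.ofFn_injective h2
  refine ⟨(Tuple.sort g).symm.trans (Tuple.sort f), ?_⟩
  funext i
  have := congrFun h3 ((Tuple.sort g).symm i)
  simpa using this

theorem spec_perm {X : Matrix (Fin n) (Fin n) ℂ} (hX : X.IsHermitian) (σ : Equiv.Perm (Fin n)) :
    ∃ U : Matrix (Fin n) (Fin n) ℂ, Uᴴ * U = 1 ∧ X = U * diagonal (fun i => (hX.eigenvalues (σ i) : ℂ)) * Uᴴ := by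
  set V := (hX.eigenvectorUnitary : Matrix (Fin n) (Fin n) ℂ) with hV
  have hVV : Vᴴ * V = 1 := by
    have : star V * V = 1 := by simp [hV]
    exact this
  have h1 : X = V * diagonal (RCLike.ofReal ∘ hX.eigenvalues) * Vᴴ := by
    conv_lhs => rw [hX.spectral_theorem, Unitary.conjStarAlgAut_apply]
    rfl
  refine ⟨V.submatrix id σ, ?_, ?_⟩
  · rw [Matrix.conjTranspose_submatrix]
    have := congrArg (fun M => M.submatrix σ σ) hVV
    simp only [Matrix.submatrix_one_equiv] at this
    rw [← this]
    exact (Matrix.submatrix_mul_equiv Vᴴ V σ (Equiv.refl _) σ)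
  · have h2 : diagonal (fun i => (hX.eigenvalues (σ i) : ℂ)) = (diagonal (fun i => (hX.eigenvalues i : ℂ))).submatrix σ σ := by
      rw [Matrix.submatrix_diagonal_equiv]; rfl
    rw [h2, Matrix.conjTranspose_submatrix, Matrix.submatrix_mul_equiv, Matrix.submatrix_mul_equiv]
    exact h1

theorem spec_lemma {X : Matrix (Fin n) (Fin n) ℂ} (hX : X.IsHermitian) {α : Fin n → ℝ}
    (h : X.charpoly = ∏ i, (Polynomial.X - Polynomial.C (α i : ℂ))) :
    ∃ U : Matrix (Fin n) (Fin n) ℂ, Uᴴ * U = 1 ∧ X = U * diagonal (fun i => (α i : ℂ)) * Uᴴ := by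
  have h1 := hX.roots_charpoly_eq_eigenvalues
  rw [h, Polynomial.roots_prod _ _ (by simp [Finset.prod_ne_zero_iff, Polynomial.X_sub_C_ne_zero])] at h1
  simp only [Polynomial.roots_X_sub_C, Multiset.bind_singleton] at h1
  have h2 : Multiset.map hX.eigenvalues Finset.univ.val = Multiset.map α Finset.univ.val := by
    have := congrArg (Multiset.map Complex.re) h1
    simp only [Multiset.map_map, Function.comp_def] at this
    simpa using this.symm
  obtain ⟨σ, hσ⟩ := perm_of_map h2
  obtain ⟨U, hU, hU'⟩ := spec_perm hX σ
  refine ⟨U, hU, ?_⟩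
  rw [← hσ]
  exact hU'

theorem charpoly_conj {U : Matrix (Fin n) (Fin n) ℂ} (hU : Uᴴ * U = 1) (α : Fin n → ℝ) :
    (U * diagonal (fun i => (α i : ℂ)) * Uᴴ).charpoly = ∏ i, (Polynomial.X - Polynomial.C (α i : ℂ)) := by
  rw [Matrix.charpoly_mul_comm, ← Matrix.mul_assoc, hU, Matrix.one_mul, Matrix.charpoly_diagonal]

theorem herm_conj {U : Matrix (Fin n) (Fin n) ℂ} (α : Fin n → ℝ) :
    (U * diagonal (fun i => (α i : ℂ)) * Uᴴ).IsHermitian := by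
  apply Matrix.isHermitian_mul_mul_conjTranspose
  rw [Matrix.isHermitian_diagonal_iff]
  intro i
  simp [IsSelfAdjoint]

theorem posdef_diag {h : Matrix (Fin n) (Fin n) ℂ} (hh : h.PosDef) :
    ∃ (k : Matrix (Fin n) (Fin n) ℂ) (d : Fin n → ℝ), kᴴ * k = 1 ∧ (∀ i, 0 < d i) ∧ Monotone d ∧
      h = kᴴ * diagonal (fun i => (d i : ℂ)) * k := by
  obtain ⟨U, hU, hU'⟩ := spec_perm hh.1 (Tuple.sort hh.1.eigenvalues)
  refine ⟨Uᴴ, fun i => hh.1.eigenvalues (Tuple.sort hh.1.eigenvalues i), ?_, fun i => hh.eigenvalues_pos _,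
    Tuple.monotone_sort hh.1.eigenvalues, ?_⟩
  · rw [Matrix.conjTranspose_conjTranspose]; exact mul_eq_one_comm.mp hU
  · rw [Matrix.conjTranspose_conjTranspose]; exact hU'

theorem near_min {v : Fin 3 → Matrix (Fin n) (Fin n) ℂ} {z : Fin 3 → Fin n → ℝ} (H : PosHyp v z)
    (hv : ∀ A, IsUnit (v A).det) (hz : ∀ A, Antitone (z A)) (hs : ∑ A, ∑ b, z A b = 0) {ε : ℝ} (hε : 0 < ε) :
    ∃ q : Fin 3 → Fin n → Fin n → ℂ, (∀ A, (of (q A))ᴴ * of (q A) = 1) ∧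
      ∀ h : Matrix (Fin n) (Fin n) ℂ, h.PosDef → -ε ≤ ∑ A, FF (z A) ((of (q A))ᴴ * h * of (q A)) := by
  obtain ⟨C, hC⟩ := global_bound H hv hz hs
  let Ψ : Matrix (Fin n) (Fin n) ℂ → ℝ := fun h => ∑ A, FF (z A) ((v A)ᴴ * h * v A)
  let S : Set ℝ := Ψ '' {h | h.PosDef}
  have hne : S.Nonempty := ⟨Ψ 1, 1, Matrix.PosDef.one, rfl⟩
  have hbd : BddBelow S := by
    refine ⟨C, ?_⟩
    rintro _ ⟨h, hh, rfl⟩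
    obtain ⟨k, d, hk, hd, hdm, rfl⟩ := posdef_diag hh
    refine (hC k hk d hd hdm).trans_eq ?_
    apply Finset.sum_congr rfl
    intro A _
    congr 1
    simp only [Matrix.conjTranspose_mul, Matrix.mul_assoc]
  obtain ⟨_, ⟨h0, hh0, rfl⟩, hlt⟩ := Real.lt_sInf_add_pos hne hε
  obtain ⟨t, -, ht, ht'⟩ := posdef_chol hh0
  let g := t⁻¹
  have hg : gᴴ * g = h0 := by
    have e1 : gᴴ * tᴴ = 1 := by
      rw [← Matrix.conjTranspose_mul, Matrix.mul_nonsing_inv _ ht, Matrix.conjTranspose_one]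
    calc gᴴ * g = gᴴ * (tᴴ * h0 * t) * g := by rw [ht', Matrix.mul_one]
      _ = (gᴴ * tᴴ) * h0 * (t * g) := by simp only [Matrix.mul_assoc]
      _ = h0 := by rw [e1, Matrix.mul_nonsing_inv _ ht, Matrix.one_mul, Matrix.mul_one]
  have hgu : IsUnit g.det := by
    rw [Matrix.det_nonsing_inv]; simpa using ht
  have hgv : ∀ A, IsUnit (g * v A).det := fun A => by
    rw [Matrix.det_mul]; exact hgu.mul (hv A)
  have hq := fun A => qr_exists (g * v A) (fun x hx => by
    have := congrArg (fun y => (g * v A)⁻¹ *ᵥ y) hx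
    simpa [Matrix.mulVec_mulVec, Matrix.nonsing_inv_mul _ (hgv A)] using this)
  choose T hT1 hT2 hT3 using hq
  have key : ∀ h : Matrix (Fin n) (Fin n) ℂ, h.PosDef → ∀ A,
      FF (z A) ((g * v A * T A)ᴴ * h * (g * v A * T A)) =
        FF (z A) ((v A)ᴴ * (gᴴ * h * g) * v A) + FF (z A) ((T A)ᴴ * T A) := by
    intro h hh A
    rw [← FF_tri (z A) (posDef_conj (posDef_conj hh hgu) (hv A)) (hT1 A) (hT2 A)]
    congr 1
    simp only [Matrix.conjTranspose_mul, Matrix.mul_assoc]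
  refine ⟨fun A => g * v A * T A, hT3, ?_⟩
  intro h hh
  change -ε ≤ ∑ A, FF (z A) ((g * v A * T A)ᴴ * h * (g * v A * T A))
  have h1 : ∀ A, FF (z A) ((T A)ᴴ * T A) = - FF (z A) ((v A)ᴴ * h0 * v A) := by
    intro A
    have := key 1 Matrix.PosDef.one A
    rw [Matrix.mul_one, hT3, FF_one, Matrix.mul_one, hg] at this
    linarith
  have h2 : ∑ A, FF (z A) ((g * v A * T A)ᴴ * h * (g * v A * T A)) = Ψ (gᴴ * h * g) - Ψ h0 := by
    simp only [Ψ]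
    rw [← Finset.sum_sub_distrib]
    apply Finset.sum_congr rfl
    intro A _
    rw [key h hh A, h1]; ring
  have h3 : sInf S ≤ Ψ (gᴴ * h * g) := csInf_le hbd ⟨_, posDef_conj hh hgu, rfl⟩
  rw [h2]
  linarith

theorem Nm_cont (a : ℕ) : Continuous (fun M : Matrix (Fin n) (Fin n) ℂ => (Nm a M).re) := by
  refine Complex.continuous_re.comp (Continuous.matrix_det ?_)
  exact continuous_id.matrix_submatrix _ _

theorem FF_cont (z : Fin n → ℝ) {M : Matrix (Fin n) (Fin n) ℂ} (hM : M.PosDef) :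
    ContinuousAt (FF z) M := by
  unfold FF
  apply tendsto_finsetSum
  intro b _
  apply Filter.Tendsto.const_mul
  apply Filter.Tendsto.sub
  · exact ((Nm_cont _).continuousAt (x := M)).log (Nm_pos _ hM).ne'
  · exact ((Nm_cont _).continuousAt (x := M)).log (Nm_pos _ hM).ne'

theorem th6 {v : Fin 3 → Matrix (Fin n) (Fin n) ℂ} {z : Fin 3 → Fin n → ℝ} (H : PosHyp v z)
    (hv : ∀ A, IsUnit (v A).det) (hz : ∀ A, Antitone (z A)) (hs : ∑ A, ∑ b, z A b = 0) :
    ∃ q : Fin 3 → Matrix (Fin n) (Fin n) ℂ, (∀ A, (q A)ᴴ * q A = 1) ∧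
      ∑ A, q A * diagonal (fun a => (z A a : ℂ)) * (q A)ᴴ = 0 := by
  have h1 := fun t : ℕ => near_min H hv hz hs (ε := 1 / ((t : ℝ) + 1)) (by positivity)
  choose q hq1 hq2 using h1
  have hc : IsCompact (Set.pi Set.univ (fun _ : Fin 3 => {q : Fin n → Fin n → ℂ | (of q)ᴴ * of q = 1})) :=
    isCompact_univ_pi (fun _ => isCompact_orth)
  obtain ⟨q0, hq0, φ, hφ, hlim⟩ := hc.tendsto_subseq (x := q) (fun t A _ => hq1 t A)
  have hq0' : ∀ A, (of (q0 A))ᴴ * of (q0 A) = 1 := fun A => hq0 A (Set.mem_univ _)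
  refine ⟨fun A => of (q0 A), hq0', ?_⟩
  apply kn_crit hq0'
  intro h hh
  have hcont : Filter.Tendsto (fun t => ∑ A, FF (z A) ((of (q (φ t) A))ᴴ * h * of (q (φ t) A))) Filter.atTop
      (nhds (∑ A, FF (z A) ((of (q0 A))ᴴ * h * of (q0 A)))) := by
    apply tendsto_finsetSum
    intro A _
    have hu : IsUnit (of (q0 A)).det := by
      rw [isUnit_iff_ne_zero]
      intro h0
      have := unit_normSq (hq0' A)
      simp [h0] at this
    have c1 := FF_cont (z A) (posDef_conj hh hu)
    have c2 : Continuous (fun p : Fin 3 → Fin n → Fin n → ℂ => ((of (p A))ᴴ * h * of (p A))) := by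
      have c3 : Continuous (fun p : Fin 3 → Fin n → Fin n → ℂ => (of (p A) : Matrix (Fin n) (Fin n) ℂ)) :=
        continuous_apply A
      exact (c3.matrix_conjTranspose.matrix_mul continuous_const).matrix_mul c3
    have c4 : Filter.Tendsto (fun t => (of (q (φ t) A))ᴴ * h * of (q (φ t) A)) Filter.atTop
      (nhds ((of (q0 A))ᴴ * h * of (q0 A))) := (c2.tendsto q0).comp hlim
    exact c1.tendsto.comp c4
  have h0 : Filter.Tendsto (fun t => -(1 / (((φ t : ℕ) : ℝ) + 1))) Filter.atTop (nhds 0) := by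
    have := (tendsto_one_div_add_atTop_nhds_zero_nat (𝕜 := ℝ)).comp hφ.tendsto_atTop
    simpa using this.neg
  exact le_of_tendsto_of_tendsto' h0 hcont (fun t => hq2 (φ t) h hh)

end Mini

section Assembly
variable {n r p : ℕ}

/-- symmetric form of a Horn triple -/
def symT (i j k : Fin r → Fin n) : Fin 3 → Fin r → Fin n :=
  ![fun a => (i a.rev).rev, fun a => (j a.rev).rev, k]

theorem symT_zero (i j k : Fin r → Fin n) (a) : symT i j k 0 a = (i a.rev).rev := rfl
theorem symT_one (i j k : Fin r → Fin n) (a) : symT i j k 1 a = (j a.rev).rev := rfl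
theorem symT_two (i j k : Fin r → Fin n) (a) : symT i j k 2 a = k a := rfl

theorem rev_strict {i : Fin r → Fin n} (hi : StrictMono i) : StrictMono (fun a : Fin r => (i a.rev).rev) := by
  intro a b hab
  exact Fin.rev_lt_rev.mpr (hi (Fin.rev_lt_rev.mpr hab))

theorem symT_strict {i j k : Fin r → Fin n} (hi : StrictMono i) (hj : StrictMono j) (hk : StrictMono k) :
    ∀ A, StrictMono (symT i j k A) := by
  intro A
  fin_cases A
  · exact rev_strict hi
  · exact rev_strict hj
  · exact hk

theorem symT_surj (F : Fin 3 → Fin r → Fin n) :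
    symT (fun a => (F 0 a.rev).rev) (fun a => (F 1 a.rev).rev) (F 2) = F := by
  funext A a
  fin_cases A
  · change (Fin.rev (Fin.rev (F 0 a.rev.rev))) = F 0 a
    simp
  · change (Fin.rev (Fin.rev (F 1 a.rev.rev))) = F 1 a
    simp
  · rfl

theorem sum_rev (f : Fin r → ℤ) : ∑ a : Fin r, f a.rev = ∑ a, f a :=
  Equiv.sum_comp Fin.revPerm f

theorem lam_cast {F : Fin 3 → Fin p → Fin r} (hF : ∀ A, StrictMono (F A)) (A : Fin 3) (a : Fin p) :
    (lam F A a : ℤ) = (F A a : ℕ) - (a : ℕ) := by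
  have := lam_add hF A a
  omega

theorem two_sum (r : ℕ) : 2 * ∑ a : Fin r, ((a : ℕ) : ℤ) = r * (r - 1) := by
  induction r with
  | zero => simp
  | succ r ih =>
    rw [Fin.sum_univ_castSucc]
    simp only [Fin.val_castSucc, Fin.val_last]
    push_cast
    linarith

theorem two_div (r : ℕ) : 2 * ((r * (r + 1) / 2 : ℕ) : ℤ) = r * (r + 1) := by
  have := Nat.div_mul_cancel (Nat.even_mul_succ_self r).two_dvd
  have h2 : ((r * (r + 1) / 2 * 2 : ℕ) : ℤ) = ((r * (r + 1) : ℕ) : ℤ) := by rw [this]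
  push_cast at h2 ⊢
  linarith

theorem rev_cast (x : Fin n) : ((x.rev : ℕ) : ℤ) = n - 1 - (x : ℕ) := by
  rw [Fin.val_rev]
  have := x.2
  omega

theorem edim_iff {i j k : Fin r → Fin n} (hi : StrictMono i) (hj : StrictMono j) (hk : StrictMono k) (hr : r ≤ n) :
    (∑ A, ∑ a, lam (symT i j k) A a = 2 * (r * (n - r))) ↔
      (∑ a, ((i a : ℕ) + 1)) + (∑ a, ((j a : ℕ) + 1)) = (∑ a, ((k a : ℕ) + 1)) + r * (r + 1) / 2 := by
  have h2 := two_sum r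
  have h3 := two_div r
  rw [← Nat.cast_inj (R := ℤ), ← Nat.cast_inj (R := ℤ)]
  push_cast [Nat.cast_sub hr]
  rw [Fin.sum_univ_three]
  simp only [lam_cast (symT_strict hi hj hk), symT_zero, symT_one, symT_two, rev_cast, Finset.sum_sub_distrib,
    Finset.sum_add_distrib]
  rw [sum_rev (fun a => ((i a : ℕ) : ℤ)), sum_rev (fun a => ((j a : ℕ) : ℤ))]
  simp only [Finset.sum_const, Finset.card_univ, Fintype.card_fin, nsmul_eq_mul]
  push_cast at h3
  constructor <;> intro h <;> nlinarith

theorem ineq_iff {i j k : Fin r → Fin n} (hi : StrictMono i) (hj : StrictMono j) (hk : StrictMono k) (hr : r ≤ n)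
    {f g h : Fin p → Fin r} (hf : StrictMono f) (hg : StrictMono g) (hh : StrictMono h)
    (he : (∑ a, ((f a : ℕ) + 1)) + (∑ a, ((g a : ℕ) + 1)) = (∑ a, ((h a : ℕ) + 1)) + p * (p + 1) / 2) :
    (2 * (p * (n - r)) ≤ ∑ A, ∑ c, lam (symT i j k) A (symT f g h A c)) ↔
      (∑ a, ((i (f a) : ℕ) + 1)) + (∑ a, ((j (g a) : ℕ) + 1)) ≤ (∑ a, ((k (h a) : ℕ) + 1)) + p * (p + 1) / 2 := by
  have h3 := two_div p
  rw [← Nat.cast_inj (R := ℤ)] at he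
  rw [← Nat.cast_le (α := ℤ), ← Nat.cast_le (α := ℤ)]
  push_cast [Nat.cast_sub hr] at he ⊢
  rw [Fin.sum_univ_three]
  simp only [lam_cast (symT_strict hi hj hk), symT_zero, symT_one, symT_two, Fin.rev_rev, rev_cast,
    Finset.sum_sub_distrib, Finset.sum_add_distrib] at he ⊢
  rw [sum_rev (fun a => ((i (f a) : ℕ) : ℤ)), sum_rev (fun a => ((j (g a) : ℕ) : ℤ)),
    sum_rev (fun a => ((f a : ℕ) : ℤ)), sum_rev (fun a => ((g a : ℕ) : ℤ))]
  simp only [Finset.sum_const, Finset.card_univ, Fintype.card_fin, nsmul_eq_mul] at he ⊢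
  push_cast at h3
  constructor <;> intro h <;> nlinarith

/-- image finset -/
def im (i : Fin r → Fin n) : Finset (Fin n) := Finset.univ.image i

theorem im_card {i : Fin r → Fin n} (hi : StrictMono i) : (im i).card = r := by
  rw [im, Finset.card_image_of_injective _ hi.injective]; simp

theorem im_sum {β : Type*} [AddCommMonoid β] {i : Fin r → Fin n} (hi : StrictMono i) (f : Fin n → β) :
    ∑ x ∈ im i, f x = ∑ a, f (i a) := by
  rw [im, Finset.sum_image]
  exact fun x _ y _ h => hi.injective h

theorem im_emb {i : Fin r → Fin n} (hi : StrictMono i) (h : (im i).card = r) (a : Fin r) :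
    (im i).orderEmbOfFin h a = i a := by
  have := Finset.orderEmbOfFin_unique h (f := i) (fun x => Finset.mem_image_of_mem _ (Finset.mem_univ x)) hi
  rw [← this]

theorem exists_im {s : Finset (Fin n)} (h : s.card = r) : ∃ i : Fin r → Fin n, StrictMono i ∧ im i = s :=
  ⟨s.orderEmbOfFin h, OrderEmbedding.strictMono _, Finset.image_orderEmbOfFin_univ s h⟩

theorem le_of_strict {i : Fin r → Fin n} (hi : StrictMono i) : r ≤ n := by
  have := Fintype.card_le_of_injective i hi.injective
  simpa using this

theorem horn_iff (r : ℕ) : ∀ (n : ℕ) (i j k : Fin r → Fin n), StrictMono i → StrictMono j → StrictMono k →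
    ((im i, im j, im k) ∈ HornT r n ↔
      (∑ A, ∑ a, lam (symT i j k) A a = 2 * (r * (n - r))) ∧ TransP (symT i j k)) := by
  induction r using Nat.strong_induction_on with
  | _ r ih =>
  intro n i j k hi hj hk
  have hr := le_of_strict hi
  rw [HornT]
  simp only [Set.mem_setOf_eq, HornU, im_card hi, im_card hj, im_card hk, true_and, im_sum hi, im_sum hj, im_sum hk,
    im_emb hi, im_emb hj, im_emb hk, forall_true_left]
  rw [← edim_iff hi hj hk hr]
  apply and_congr_right
  intro he
  rw [sym_iff (symT_strict hi hj hk) he]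
  constructor
  · intro H p hp hpr F hF hFT hFe
    have hf := rev_strict (hF 0)
    have hg := rev_strict (hF 1)
    have hs := symT_surj F
    rw [← hs] at hFT hFe ⊢
    have hmem := (ih p hpr r _ _ _ hf hg (hF 2)).mpr ⟨hFe, hFT⟩
    have h1 := H p hp hpr _ hmem
    rw [ineq_iff hi hj hk hr hf hg (hF 2) ((edim_iff hf hg (hF 2) hpr.le).mp hFe)]
    simpa only [im_sum hf, im_sum hg, im_sum (hF 2)] using h1
  · intro H p hp hpr S hS
    have hS' := hS
    rw [HornT] at hS'
    obtain ⟨⟨c1, c2, c3, -⟩, -⟩ := hS'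
    obtain ⟨S1, S2, S3⟩ := S
    obtain ⟨f, hf, rfl⟩ := exists_im c1
    obtain ⟨g, hg, rfl⟩ := exists_im c2
    obtain ⟨h, hh, rfl⟩ := exists_im c3
    obtain ⟨h1, h2⟩ := (ih p hpr r f g h hf hg hh).mp hS
    have h3 := H p hp hpr _ (symT_strict hf hg hh) h2 h1
    rw [ineq_iff hi hj hk hr hf hg hh ((edim_iff hf hg hh hpr.le).mp h1)] at h3
    simpa only [im_sum hf, im_sum hg, im_sum hh] using h3

/-- symmetric spectra -/
def symZ (α β γ : Fin n → ℝ) : Fin 3 → Fin n → ℝ := ![fun a => - α a.rev, fun a => - β a.rev, γ]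

theorem symZ_anti {α β γ : Fin n → ℝ} (hα : Antitone α) (hβ : Antitone β) (hγ : Antitone γ) :
    ∀ A, Antitone (symZ α β γ A) := by
  intro A
  fin_cases A
  · exact fun a b hab => neg_le_neg (hα (Fin.rev_le_rev.mpr hab))
  · exact fun a b hab => neg_le_neg (hβ (Fin.rev_le_rev.mpr hab))
  · exact hγ

theorem symZ_sum (α β γ : Fin n → ℝ) (i j k : Fin r → Fin n) :
    ∑ A, ∑ c, symZ α β γ A (symT i j k A c) = ∑ c, γ (k c) - ∑ c, α (i c) - ∑ c, β (j c) := by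
  rw [Fin.sum_univ_three]
  have h0 : ∑ c, symZ α β γ 0 (symT i j k 0 c) = - ∑ c, α (i c) := by
    rw [← Finset.sum_neg_distrib, ← Equiv.sum_comp Fin.revPerm]
    apply Finset.sum_congr rfl
    intro c _
    change - α (Fin.rev (Fin.rev (i (Fin.rev (Fin.rev c))))) = _
    simp
  have h1 : ∑ c, symZ α β γ 1 (symT i j k 1 c) = - ∑ c, β (j c) := by
    rw [← Finset.sum_neg_distrib, ← Equiv.sum_comp Fin.revPerm]
    apply Finset.sum_congr rfl
    intro c _
    change - β (Fin.rev (Fin.rev (j (Fin.rev (Fin.rev c))))) = _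
    simp
  have h2 : ∑ c, symZ α β γ 2 (symT i j k 2 c) = ∑ c, γ (k c) := rfl
  rw [h0, h1, h2]; ring

theorem symZ_total (α β γ : Fin n → ℝ) :
    ∑ A, ∑ c, symZ α β γ A c = ∑ c, γ c - ∑ c, α c - ∑ c, β c := by
  have := symZ_sum α β γ (id : Fin n → Fin n) id id
  simp only [id] at this
  rw [← this]
  apply Finset.sum_congr rfl
  intro A _
  apply Finset.sum_congr rfl
  intro c _
  fin_cases A
  · change _ = symZ α β γ 0 (Fin.rev (Fin.rev c)); simp
  · change _ = symZ α β γ 1 (Fin.rev (Fin.rev c)); simp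
  · rfl

theorem conj_rev {U : Matrix (Fin n) (Fin n) ℂ} (α : Fin n → ℝ) :
    U.submatrix id Fin.rev * diagonal (fun a => ((- α a.rev : ℝ) : ℂ)) * (U.submatrix id Fin.rev)ᴴ =
      -(U * diagonal (fun a => (α a : ℂ)) * Uᴴ) := by
  have h2 : diagonal (fun a : Fin n => ((- α a.rev : ℝ) : ℂ)) =
      (-(diagonal (fun a => (α a : ℂ)))).submatrix Fin.revPerm Fin.revPerm := by
    rw [Matrix.diagonal_neg, Matrix.submatrix_diagonal_equiv]
    congr 1
    funext a
    simp
  change U.submatrix id Fin.revPerm * _ * (U.submatrix id Fin.revPerm)ᴴ = _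
  rw [h2, Matrix.conjTranspose_submatrix, Matrix.submatrix_mul_equiv, Matrix.submatrix_mul_equiv]
  simp only [Matrix.submatrix_id_id, Matrix.mul_neg, Matrix.neg_mul]

theorem unit_rev {U : Matrix (Fin n) (Fin n) ℂ} (hU : Uᴴ * U = 1) :
    (U.submatrix id Fin.rev)ᴴ * U.submatrix id Fin.rev = 1 := by
  change (U.submatrix id Fin.revPerm)ᴴ * U.submatrix id Fin.revPerm = 1
  rw [Matrix.conjTranspose_submatrix]
  have := congrArg (fun M => M.submatrix Fin.revPerm Fin.revPerm) hU
  simp only [Matrix.submatrix_one_equiv] at this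
  rw [← this]
  exact (Matrix.submatrix_mul_equiv Uᴴ U Fin.revPerm (Equiv.refl _) Fin.revPerm)

theorem trace_conj {U : Matrix (Fin n) (Fin n) ℂ} (hU : Uᴴ * U = 1) (α : Fin n → ℝ) :
    (U * diagonal (fun a => (α a : ℂ)) * Uᴴ).trace = ((∑ a, α a : ℝ) : ℂ) := by
  rw [Matrix.trace_mul_comm, ← Matrix.mul_assoc, hU, Matrix.one_mul, Matrix.trace_diagonal]
  push_cast; rfl

end Assembly

theorem horn_conjecture {n : ℕ} (hn : 1 ≤ n)
    (α β γ : Fin n → ℝ) (hα : Antitone α) (hβ : Antitone β) (hγ : Antitone γ) :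
    (∃ X Y : Matrix (Fin n) (Fin n) ℂ, X.IsHermitian ∧ Y.IsHermitian ∧
        HasSpectrum X α ∧ HasSpectrum Y β ∧ HasSpectrum (X + Y) γ) ↔
      ((∑ i, γ i) = (∑ i, α i) + (∑ i, β i) ∧
        ∀ r, 1 ≤ r → r < n → ∀ T ∈ HornT r n,
          (∑ k ∈ T.2.2, γ k) ≤ (∑ i ∈ T.1, α i) + (∑ j ∈ T.2.1, β j)) := by
  constructor
  · rintro ⟨X, Y, hX, hY, hXα, hYβ, hXY⟩
    obtain ⟨U, hU, hU'⟩ := spec_lemma hX hXα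
    obtain ⟨V, hV, hV'⟩ := spec_lemma hY hYβ
    obtain ⟨W, hW, hW'⟩ := spec_lemma (hX.add hY) hXY
    refine ⟨?_, ?_⟩
    · have h1 : (X + Y).trace = X.trace + Y.trace := Matrix.trace_add _ _
      conv_lhs at h1 => rw [hW', trace_conj hW]
      conv_rhs at h1 => rw [hU', hV', trace_conj hU, trace_conj hV]
      exact_mod_cast h1
    · intro r hr1 hrn T hT
      have hT' := hT
      rw [HornT] at hT'
      obtain ⟨⟨c1, c2, c3, -⟩, -⟩ := hT'
      obtain ⟨T1, T2, T3⟩ := T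
      obtain ⟨i, hi, rfl⟩ := exists_im c1
      obtain ⟨j, hj, rfl⟩ := exists_im c2
      obtain ⟨k, hk, rfl⟩ := exists_im c3
      obtain ⟨-, hP⟩ := (horn_iff r n i j k hi hj hk).mp hT
      let v : Fin 3 → Matrix (Fin n) (Fin n) ℂ := ![U.submatrix id Fin.rev, V.submatrix id Fin.rev, W]
      have hv : ∀ A, (v A)ᴴ * v A = 1 := by
        intro A
        fin_cases A
        · exact unit_rev hU
        · exact unit_rev hV
        · exact hW
      have h5 := th5 hv (symZ_anti hα hβ hγ) (th4a' hrn.le (symT_strict hi hj hk) hP v) ?_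
      · rw [symZ_sum] at h5
        rw [im_sum hi, im_sum hj, im_sum hk]
        linarith
      · rw [Fin.sum_univ_three]
        change U.submatrix id Fin.rev * diagonal (fun a => ((- α a.rev : ℝ) : ℂ)) * (U.submatrix id Fin.rev)ᴴ +
          V.submatrix id Fin.rev * diagonal (fun a => ((- β a.rev : ℝ) : ℂ)) * (V.submatrix id Fin.rev)ᴴ +
          W * diagonal (fun a => (γ a : ℂ)) * Wᴴ = 0
        rw [conj_rev, conj_rev, ← hU', ← hV', ← hW']
        abel
  · rintro ⟨hsum, H⟩
    obtain ⟨f, ⟨-, v, hfv⟩, hf⟩ := good_flags n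
    obtain ⟨hv, hpos⟩ := hf v hfv
    have hz := symZ_anti hα hβ hγ
    have hPH : PosHyp (toM v) (symZ α β γ) := by
      intro r hr1 hrn I hI m hm hEx
      have hP := hpos r hrn.le I hI m hm hEx
      obtain ⟨F, hF, hFI, hFP, hFe⟩ := th2_pos hI hP
      have h1 : ∑ A, ∑ c, symZ α β γ A (I A c) ≤ ∑ A, ∑ c, symZ α β γ A (F A c) :=
        Finset.sum_le_sum fun A _ => Finset.sum_le_sum fun c _ => hz A (hFI A c)
      refine h1.trans ?_
      have hf := rev_strict (hF 0)
      have hg := rev_strict (hF 1)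
      have hs := symT_surj F
      rw [← hs] at hFP hFe ⊢
      have hmem := (horn_iff r n _ _ _ hf hg (hF 2)).mpr ⟨hFe, hFP⟩
      have h2 := H r hr1 hrn _ hmem
      simp only [im_sum hf, im_sum hg, im_sum (hF 2)] at h2
      rw [symZ_sum]
      linarith
    obtain ⟨q, hq, hq0⟩ := th6 hPH hv hz (by rw [symZ_total]; linarith)
    rw [Fin.sum_univ_three] at hq0
    let U := (q 0).submatrix id Fin.rev
    let V := (q 1).submatrix id Fin.rev
    have e0 : q 0 = U.submatrix id Fin.rev := by ext a b; simp [U]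
    have e1 : q 1 = V.submatrix id Fin.rev := by ext a b; simp [V]
    have hU : Uᴴ * U = 1 := unit_rev (hq 0)
    have hV : Vᴴ * V = 1 := unit_rev (hq 1)
    rw [e0, e1] at hq0
    change U.submatrix id Fin.rev * diagonal (fun a => ((- α a.rev : ℝ) : ℂ)) * (U.submatrix id Fin.rev)ᴴ +
          V.submatrix id Fin.rev * diagonal (fun a => ((- β a.rev : ℝ) : ℂ)) * (V.submatrix id Fin.rev)ᴴ +
          q 2 * diagonal (fun a => (γ a : ℂ)) * (q 2)ᴴ = 0 at hq0
    rw [conj_rev, conj_rev] at hq0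
    refine ⟨_, _, herm_conj (U := U) α, herm_conj (U := V) β, charpoly_conj hU α, charpoly_conj hV β, ?_⟩
    have : U * diagonal (fun i => (α i : ℂ)) * Uᴴ + V * diagonal (fun i => (β i : ℂ)) * Vᴴ =
        q 2 * diagonal (fun a => (γ a : ℂ)) * (q 2)ᴴ := by
      rw [← sub_eq_zero, ← neg_eq_zero, ← hq0]
      abel
    rw [HasSpectrum, this]
    exact charpoly_conj (hq 2) γ
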